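/- arXiv:2605.03449 — 3 statements merged into one kernel-verified Lean document; each statement's English description precedes it below -/
import Mathlib

section
/- Let R be a finite group. There exists a subgroup H of R such that every automorphism α of R with α(H) = H is a power automorphism (i.e., the base size of the action of Aut(R) on the set of all subgroups of R is 1) if and only if R is cyclic. -/
namespace PB

open scoped commutatorElement

def Good {R : Type*} [Group R] (H : Subgroup R) : Prop :=
  ∀ α : MulAut R, Subgroup.map α.toMonoidHom H = H → ∀ x : R, α x ∈ Subgroup.zpowers x

/-- the norm of `R` -/
def nrm (R : Type*) [Group R] : Subgroup R :=
  ⨅ x : R, Subgroup.normalizer (Subgroup.zpowers x : Set R)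

variable {R : Type*} [Group R]

theorem mem_nrm {k : R} : k ∈ nrm R ↔ ∀ x : R, ∀ y, y ∈ Subgroup.zpowers x ↔
    k * y * k⁻¹ ∈ Subgroup.zpowers x := by
  simp only [nrm, Subgroup.mem_iInf]
  rfl

theorem mem_nrm' [Finite R] {k : R} : k ∈ nrm R ↔ ∀ x : R, k * x * k⁻¹ ∈ Subgroup.zpowers x := by
  constructor
  · intro h x
    exact (mem_nrm.1 h x x).1 (Subgroup.mem_zpowers x)
  · intro h
    simp only [nrm, Subgroup.mem_iInf]
    intro x
    rw [Subgroup.mem_normalizer_iff_map_conj_eq]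
    have hle : (Subgroup.zpowers x).map (MulAut.conj k).toMonoidHom ≤ Subgroup.zpowers x := by
      rw [MonoidHom.map_zpowers, Subgroup.zpowers_le]
      exact h x
    refine Subgroup.eq_of_le_of_card_ge hle ?_
    exact (Nat.card_congr (Subgroup.equivMapOfInjective _ _ (MulAut.conj k).injective).toEquiv).le

theorem Good.hom [Finite R] {H : Subgroup R} (hH : Good H) (σ : R →* R)
    (hi : Function.Injective σ) (hs : ∀ h ∈ H, σ h ∈ H) (x : R) : σ x ∈ Subgroup.zpowers x := by
  have hb : Function.Bijective σ := Finite.injective_iff_bijective.1 hi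
  refine hH (MulEquiv.ofBijective σ hb) ?_ x
  have hle : H.map (MulEquiv.ofBijective σ hb).toMonoidHom ≤ H := by
    rintro _ ⟨h, hh, rfl⟩
    exact hs h hh
  refine Subgroup.eq_of_le_of_card_ge hle ?_
  exact (Nat.card_congr (Subgroup.equivMapOfInjective _ _
    (MulEquiv.ofBijective σ hb).injective).toEquiv).le

theorem Good.norm_mem [Finite R] {H : Subgroup R} (hH : Good H) {k : R}
    (hk : ∀ h ∈ H, k * h * k⁻¹ ∈ H) : k ∈ nrm R :=
  mem_nrm'.2 fun x => hH.hom (MulAut.conj k).toMonoidHom (MulAut.conj k).injective hk x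

theorem Good.le_nrm [Finite R] {H : Subgroup R} (hH : Good H) : H ≤ nrm R := fun k hk =>
  hH.norm_mem fun h hh => H.mul_mem (H.mul_mem hk hh) (H.inv_mem hk)

theorem Good.cent_mem [Finite R] {H : Subgroup R} (hH : Good H) {k : R}
    (hk : ∀ h ∈ H, Commute k h) : k ∈ nrm R :=
  hH.norm_mem fun h hh => by rw [(hk h hh).eq]; simpa using hh

theorem comm_zp {a x : R} (h : a ∈ Subgroup.zpowers x) : Commute a x := by
  obtain ⟨n, rfl⟩ := h
  exact (Commute.refl x).zpow_left n

theorem nrm_comm_mem {k : R} (hk : k ∈ nrm R) (x : R) : ⁅x, k⁆ ∈ Subgroup.zpowers x := by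
  rw [commutatorElement_def, mul_assoc, mul_assoc]
  refine mul_mem (Subgroup.mem_zpowers x) ?_
  rw [← mul_assoc]
  exact (mem_nrm.1 hk x _).1 (inv_mem (Subgroup.mem_zpowers x))

theorem nrm_comm_left {k : R} (hk : k ∈ nrm R) (x : R) : Commute ⁅x, k⁆ x :=
  comm_zp (nrm_comm_mem hk x)

theorem nrm_comm_right {k : R} (hk : k ∈ nrm R) (x : R) : Commute ⁅x, k⁆ k := by
  have h1 : ⁅x * k, k⁆ = ⁅x, k⁆ := by simp only [commutatorElement_def]; group
  have h2 := nrm_comm_left hk (x * k)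
  rw [h1] at h2
  have h3 := (nrm_comm_left hk x).inv_right.mul_right h2
  simpa using h3

instance nrm_normal : (nrm R).Normal := by
  constructor
  intro n hn g
  rw [mem_nrm] at hn ⊢
  have key : ∀ a x y : R, y ∈ Subgroup.zpowers x ↔ a * y * a⁻¹ ∈ Subgroup.zpowers (a * x * a⁻¹) := by
    intro a x y
    simp only [Subgroup.mem_zpowers_iff, conj_zpow]
    constructor
    · rintro ⟨k, rfl⟩; exact ⟨k, rfl⟩
    · rintro ⟨k, hk⟩; exact ⟨k, by simpa using hk⟩
  intro x y
  rw [key g⁻¹ x y, hn, key g⁻¹ x (g * n * g⁻¹ * y * (g * n * g⁻¹)⁻¹)]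
  have : n * (g⁻¹ * y * g⁻¹⁻¹) * n⁻¹ = g⁻¹ * (g * n * g⁻¹ * y * (g * n * g⁻¹)⁻¹) * g⁻¹⁻¹ := by group
  rw [this]

theorem nrm_nrm {k l : R} (hk : k ∈ nrm R) (hl : l ∈ nrm R) (x : R) : Commute ⁅k, l⁆ x := by
  have h1 := (mem_nrm.1 hk x x).1 (Subgroup.mem_zpowers x)
  have h2 := (mem_nrm.1 hl x x).1 (Subgroup.mem_zpowers x)
  obtain ⟨a, ha⟩ := h1
  obtain ⟨b, hb⟩ := h2
  simp only at ha hb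
  have h3 : k * (l * x * l⁻¹) * k⁻¹ = l * (k * x * k⁻¹) * l⁻¹ := by
    rw [← ha, ← hb, ← conj_zpow, ← conj_zpow, ← ha, ← hb, ← zpow_mul, ← zpow_mul, mul_comm]
  have h4 : k * l * x = l * k * x * (l * k)⁻¹ * (k * l) := by
    have : k * l * x = k * (l * x * l⁻¹) * k⁻¹ * (k * l) := by group
    rw [this, h3]; group
  have h5 : k * l * (l * k)⁻¹ * ((l * k) * x * (l * k)⁻¹) =
     ((l * k) * x * (l * k)⁻¹) * (k * l * (l * k)⁻¹) := by
    calc _ = (k * l * x) * (l * k)⁻¹ := by group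
      _ = _ := by rw [h4]; group
  -- ⁅k,l⁆ commutes with conj x; apply to the conjugate
  exact show Commute _ _ from by
    have e : k * l * (l * k)⁻¹ = ⁅k, l⁆ := by rw [commutatorElement_def]; group
    rw [e] at h5
    have h6 : ((l * k) * x * (l * k)⁻¹) ∈ Subgroup.zpowers x := by
      have : (l * k) * x * (l * k)⁻¹ = l * (k * x * k⁻¹) * l⁻¹ := by group
      rw [this]
      exact (mem_nrm.1 hl x _).1 ((mem_nrm.1 hk x x).1 (Subgroup.mem_zpowers x))
    -- x is a conjugate inverse power
    have h7 : x ∈ Subgroup.zpowers ((l * k) * x * (l * k)⁻¹) := by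
      have hm : (l * k) ∈ nrm R := mul_mem hl hk
      have h8 := (mem_nrm.1 hm ((l * k) * x * (l * k)⁻¹) x).2 (Subgroup.mem_zpowers _)
      exact h8
    obtain ⟨n, hn⟩ := h7
    simp only at hn
    rw [← hn]
    exact Commute.zpow_right h5 n

/-! class two calculus -/

theorem cl_swap {x k : R} : x * k = ⁅x, k⁆ * (k * x) := by
  rw [commutatorElement_def]; group

theorem cl_pow_left {x k : R} (hx : Commute ⁅x, k⁆ x) (n : ℕ) : ⁅x ^ n, k⁆ = ⁅x, k⁆ ^ n := by
  induction n with
  | zero => simp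
  | succ n ih =>
    have : ⁅x ^ (n + 1), k⁆ = x * ⁅x ^ n, k⁆ * x⁻¹ * ⁅x, k⁆ := by
      simp only [commutatorElement_def, pow_succ']; group
    rw [this, ih, ← (hx.pow_left n).eq, mul_inv_cancel_right, pow_succ]

theorem cl_pow_right {x k : R} (hk : Commute ⁅x, k⁆ k) (n : ℕ) : ⁅x, k ^ n⁆ = ⁅x, k⁆ ^ n := by
  induction n with
  | zero => simp
  | succ n ih =>
    have : ⁅x, k ^ (n + 1)⁆ = ⁅x, k⁆ * (k * ⁅x, k ^ n⁆ * k⁻¹) := by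
      simp only [commutatorElement_def, pow_succ']; group
    rw [this, ih, ← (hk.pow_left n).eq, mul_inv_cancel_right, pow_succ']

theorem cl_mul_pow {x k : R} (hx : Commute ⁅x, k⁆ x) (hk : Commute ⁅x, k⁆ k) (n : ℕ) :
    (x * k) ^ n * ⁅x, k⁆ ^ (n.choose 2) = x ^ n * k ^ n := by
  induction n with
  | zero => simp
  | succ n ih =>
    have h1 : x ^ n * k = ⁅x, k⁆ ^ n * (k * x ^ n) := by
      rw [← cl_pow_left hx]; exact cl_swap
    have hc : Commute ⁅x, k⁆ (x * k) := hx.mul_right hk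
    have e2 : (n+1).choose 2 = n + n.choose 2 := by
      rw [Nat.choose_succ_succ' n 1]; simp
    have e3 : x ^ (n+1) * k ^ (n+1) = x * (x ^ n * k) * k ^ n := by
      rw [pow_succ', pow_succ']; group
    rw [e3, h1, e2, pow_succ' (x * k) n, pow_add, mul_assoc (x * k), ← mul_assoc ((x*k)^n),
      ← ((hc.pow_right n).pow_left n).eq, mul_assoc (⁅x, k⁆ ^ n), ih,
      ← mul_assoc (x * k), ← (hc.pow_left n).eq, ← mul_assoc x (⁅x,k⁆ ^ n), ← (hx.pow_left n).eq]
    group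

theorem comm_one_iff {x k : R} : ⁅x, k⁆ = 1 ↔ Commute x k := commutatorElement_eq_one_iff_commute

/-- coprime elements, one in the norm, commute -/
theorem nrm_coprime {k g : R} (hk : k ∈ nrm R) (h : (orderOf k).Coprime (orderOf g)) :
    Commute g k := by
  rw [← comm_one_iff]
  have h1 : ⁅g, k⁆ ^ orderOf k = 1 := by
    rw [← cl_pow_right (nrm_comm_right hk g), pow_orderOf_eq_one]; simp
  have h2 : ⁅g, k⁆ ^ orderOf g = 1 := by
    rw [← cl_pow_left (nrm_comm_left hk g), pow_orderOf_eq_one]; simp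
  have := Nat.dvd_gcd (orderOf_dvd_of_pow_eq_one h1) (orderOf_dvd_of_pow_eq_one h2)
  rw [h] at this
  exact orderOf_eq_one_iff.1 (Nat.dvd_one.1 this)

theorem top_of_pp {G : Type*} [Group G] [Finite G] (L : Subgroup G)
    (h : ∀ p : ℕ, p.Prime → ∀ P : Sylow p G, (P : Subgroup G) ≤ L) : L = ⊤ := by
  rw [← Subgroup.index_eq_one]
  by_contra hne
  obtain ⟨p, hp, hd⟩ := Nat.exists_prime_and_dvd hne
  have := Fact.mk hp
  let P : Sylow p G := default
  exact P.not_dvd_index (hd.trans (Subgroup.index_dvd_of_le (h p hp P)))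

theorem pp_order {G : Type*} [Group G] {p : ℕ} [Fact p.Prime] (P : Sylow p G) {x : G} (hx : x ∈ P) :
    ∃ n, orderOf x = p ^ n := by
  obtain ⟨n, hn⟩ := IsPGroup.iff_orderOf.1 P.2 ⟨x, hx⟩
  exact ⟨n, by rw [← hn]; exact (Subgroup.orderOf_mk x hx).symm⟩

theorem Good.cent_nrm [Finite R] {H : Subgroup R} (hH : Good H) {c : R}
    (hc : ∀ k ∈ nrm R, Commute c k) : c ∈ nrm R :=
  hH.cent_mem fun h hh => hc h (hH.le_nrm hh)

theorem coprime_aux {g x : R} (hc : ⁅g, x⁆ ∈ nrm R) : ⁅g, x⁆ ^ (orderOf x * orderOf x) = 1 := by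
  set c := ⁅g, x⁆ with hcd
  have e : g * x * g⁻¹ = c * x := by rw [hcd, commutatorElement_def]; group
  have h0 : (c * x) ^ orderOf x = 1 := by rw [← e, conj_pow, pow_orderOf_eq_one]; simp
  have hd1 := nrm_comm_left hc x
  have hd2 := nrm_comm_right hc x
  have f1 : Commute ⁅c, x⁆ c := by
    rw [← commutatorElement_inv]; exact hd2.inv_left
  have f2 : Commute ⁅c, x⁆ x := by
    rw [← commutatorElement_inv]; exact hd1.inv_left
  have h1 := cl_mul_pow f1 f2 (orderOf x)
  rw [h0, one_mul, pow_orderOf_eq_one, mul_one] at h1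
  have h2 : ⁅c, x⁆ ^ orderOf x = 1 := by
    rw [← cl_pow_right f2, pow_orderOf_eq_one]; simp
  rw [pow_mul, ← h1, ← pow_mul, mul_comm, pow_mul, h2, one_pow]

theorem Good.coprime_comm [Finite R] {H : Subgroup R} (hH : Good H) {g x : R}
    (hgx : (orderOf g).Coprime (orderOf x)) : Commute g x := by
  have key : ∀ (g x k : R), k ∈ nrm R → (orderOf k).Coprime (orderOf g) → Commute ⁅g, x⁆ k := by
    intro g x k hk hco
    have h1 : Commute g k := nrm_coprime hk hco
    have h2 : Commute g (x⁻¹ * k * x) := by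
      apply nrm_coprime
      · simpa using (nrm_normal (R := R)).conj_mem k hk x⁻¹
      · have : orderOf (x⁻¹ * k * x) = orderOf k := by
          have := (MulAut.conj x⁻¹).orderOf_eq k
          simpa using this
        rw [this]; exact hco
    have h3 : Commute (x * g⁻¹ * x⁻¹) k := by
      have h4 : g⁻¹ * (x⁻¹ * k * x) = (x⁻¹ * k * x) * g⁻¹ := h2.inv_left.eq
      show x * g⁻¹ * x⁻¹ * k = k * (x * g⁻¹ * x⁻¹)
      calc _ = x * (g⁻¹ * (x⁻¹ * k * x)) * x⁻¹ := by group
        _ = _ := by rw [h4]; group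
    have : ⁅g, x⁆ = g * (x * g⁻¹ * x⁻¹) := by rw [commutatorElement_def]; group
    rw [this]
    exact h1.mul_left h3
  have hcent : ∀ k ∈ nrm R, Commute ⁅g, x⁆ k := by
    have ht : (Subgroup.centralizer {⁅g, x⁆}).subgroupOf (nrm R) = ⊤ := by
      apply top_of_pp
      intro r hr P k hkP
      have := Fact.mk hr
      obtain ⟨n, hn⟩ := pp_order P hkP
      rw [Subgroup.mem_subgroupOf, Subgroup.mem_centralizer_singleton_iff]
      have hn' : orderOf (k : R) = r ^ n := by rw [← hn]; exact Subgroup.orderOf_coe k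
      by_cases hrg : r ∣ orderOf g
      · have : ¬ r ∣ orderOf x := fun h => by
          have := Nat.dvd_gcd hrg h
          rw [hgx] at this
          exact hr.one_lt.ne' (Nat.dvd_one.1 this)
        have h1 := key x g k k.2 (by
          rw [hn']; exact Nat.Coprime.pow_left _ ((Nat.Prime.coprime_iff_not_dvd hr).2 this))
        rw [← commutatorElement_inv] at h1
        exact (Commute.inv_left_iff.1 h1).eq.symm
      · exact (key g x k k.2 (by
          rw [hn']; exact Nat.Coprime.pow_left _ ((Nat.Prime.coprime_iff_not_dvd hr).2 hrg))).eq.symm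
    intro k hk
    have : (⟨k, hk⟩ : nrm R) ∈ (Subgroup.centralizer {⁅g, x⁆}).subgroupOf (nrm R) := by
      rw [ht]; trivial
    rw [Subgroup.mem_subgroupOf, Subgroup.mem_centralizer_singleton_iff] at this
    exact this.symm
  have hc := hH.cent_nrm hcent
  have h1 := coprime_aux hc
  have h2 : ⁅g, x⁆ ^ (orderOf g * orderOf g) = 1 := by
    have := coprime_aux (g := x) (x := g) (by rw [← commutatorElement_inv]; exact inv_mem hc)
    rw [← commutatorElement_inv, inv_pow, inv_eq_one] at this
    exact this
  rw [← comm_one_iff, ← orderOf_eq_one_iff, ← Nat.dvd_one]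
  have hco : (orderOf g * orderOf g).Coprime (orderOf x * orderOf x) :=
    (hgx.mul_left hgx).mul_right (hgx.mul_left hgx)
  rw [← hco]
  exact Nat.dvd_gcd (orderOf_dvd_of_pow_eq_one h2) (orderOf_dvd_of_pow_eq_one h1)

end PB

namespace PB
open scoped commutatorElement
variable {R : Type*} [Group R]

theorem Good.inv [Finite R] {H : Subgroup R} (hH : Good H) {t : R}
    (ht : t ∈ H ∨ ∀ h ∈ H, Commute h t)
    (hinv : ∀ x : R, x * t = t * x ∨ x * t = t⁻¹ * x) (x : R) : Commute x t := by
  classical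
  by_contra hx
  have hinv2 : ∀ x : R, ¬ Commute x t → x * t = t⁻¹ * x := fun x h => (hinv x).resolve_left h
  have hinv3 : ∀ x : R, ¬ Commute x t → t * x * t = x := fun x h => by
    rw [mul_assoc, hinv2 x h]; simp
  have hmm : ∀ x y : R, ¬ Commute x t → ¬ Commute y t → Commute (x * y) t := by
    intro x y h1 h2
    have h3 : x * t⁻¹ = t * x := by
      rw [mul_inv_eq_iff_eq_mul, hinv3 x h1]
    show x * y * t = t * (x * y)
    rw [mul_assoc, hinv2 y h2, ← mul_assoc, h3, mul_assoc]
  have hml : ∀ x y : R, Commute x t → (Commute (x * y) t ↔ Commute y t) := by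
    intro x y h1
    refine ⟨fun h => ?_, fun h => h1.mul_left h⟩
    have := h1.inv_left.mul_left h
    simpa using this
  have hmr : ∀ x y : R, Commute y t → (Commute (x * y) t ↔ Commute x t) := by
    intro x y h1
    refine ⟨fun h => ?_, fun h => h.mul_left h1⟩
    have := h.mul_left h1.inv_left
    simpa using this
  let σ : R →* R :=
    { toFun := fun x => if Commute x t then x else x * t
      map_one' := by simp
      map_mul' := by
        intro x y
        by_cases h1 : Commute x t
        · by_cases h2 : Commute y t
          · simp only [hml x y h1, h1, h2, if_true]
          · simp only [hml x y h1, h1, h2, if_true, if_false, mul_assoc]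
        · by_cases h2 : Commute y t
          · simp only [hmr x y h2, h1, h2, if_true, if_false]
            rw [mul_assoc, h2.eq, mul_assoc]
          · simp only [hmm x y h1 h2, h1, h2, if_true, if_false]
            rw [mul_assoc, ← mul_assoc t, hinv3 y h2] }
  have hσ : ∀ x, σ x = if Commute x t then x else x * t := fun x => rfl
  have hi : Function.Injective σ := by
    rw [injective_iff_map_eq_one]
    intro y hy
    rw [hσ] at hy
    split_ifs at hy with h
    · exact hy
    · exact absurd (by rw [eq_inv_of_mul_eq_one_left hy]; exact (Commute.refl t).inv_left) h
  have := hH.hom σ hi (by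
    intro h hh
    rw [hσ]
    split_ifs with hc
    · exact hh
    · rcases ht with ht | ht
      · exact mul_mem hh ht
      · exact absurd (ht h hh) hc) x
  rw [hσ, if_neg hx] at this
  have h2 := comm_zp this
  have h3 := (Commute.refl x).inv_left.mul_left h2
  exact hx (by simpa using h3.symm)

theorem Good.odd [Finite R] {H : Subgroup R} (hH : Good H) {p : ℕ} (hp : p.Prime) (hp2 : p ≠ 2)
    {y z : R} (hy : y ^ p = 1) (hz : orderOf z = p) (hzc : ∀ x, Commute z x)
    (hyH : ∀ h ∈ H, Commute h y) (hyz : ∀ x : R, ⁅x, y⁆ ∈ Subgroup.zpowers z) (x : R) :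
    Commute x y := by
  by_contra hx
  choose n hn using hyz
  simp only at hn
  have hzp : z ^ p = 1 := by rw [← hz]; exact pow_orderOf_eq_one z
  obtain ⟨m, hm⟩ := hp.odd_of_ne_two hp2
  set s : R := z ^ (m + 1) with hs
  have hss : s * s = z := by
    rw [hs, ← pow_add, show m + 1 + (m + 1) = p + 1 by omega, pow_succ, hzp, one_mul]
  have hsc : ∀ x, Commute s x := fun x => (hzc x).pow_left _
  have hsp : s ^ p = 1 := by rw [hs, ← pow_mul, mul_comm, pow_mul, hzp, one_pow]
  let F : ℤ → R := fun i => y ^ i * s ^ (i * i)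
  have hF : ∀ i j : ℤ, z ^ i = z ^ j → F i = F j := by
    intro i j h
    rw [zpow_eq_zpow_iff_modEq, hz] at h
    have ey : y ^ i = y ^ j := by
      rw [zpow_eq_zpow_iff_modEq]
      exact h.of_dvd (by exact_mod_cast orderOf_dvd_of_pow_eq_one hy)
    have es : s ^ (i * i) = s ^ (j * j) := by
      rw [zpow_eq_zpow_iff_modEq]
      exact (h.mul h).of_dvd (by exact_mod_cast orderOf_dvd_of_pow_eq_one hsp)
    show y ^ i * s ^ (i * i) = y ^ j * s ^ (j * j)
    rw [ey, es]
  have hxy : ∀ x, x * y = z ^ n x * (y * x) := fun x => by rw [hn]; exact cl_swap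
  have hn_mul : ∀ a b, z ^ n (a * b) = z ^ (n a + n b) := by
    intro a b
    have h1 : z ^ n (a * b) * (y * (a * b)) = z ^ (n a + n b) * (y * (a * b)) := by
      rw [← hxy, mul_assoc, hxy b, ← mul_assoc, ← ((hzc a).zpow_left (n b)).eq, mul_assoc,
        ← mul_assoc a, hxy a, add_comm, zpow_add]
      group
    exact mul_right_cancel h1
  have hn_one : z ^ n 1 = z ^ (0:ℤ) := by rw [hn]; simp
  -- conj: y^i * b = z^{-(i n b)} b y^i
  have hconj : ∀ (b : R) (i : ℤ), y ^ i * b = z ^ (-(n b * i)) * (b * y ^ i) := by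
    intro b i
    have h1 : b * y * b⁻¹ = z ^ n b * y := by rw [hxy]; group
    have h2 : b * y ^ i * b⁻¹ = z ^ (n b * i) * y ^ i := by
      rw [← conj_zpow, h1, ((hzc y).zpow_left _).mul_zpow, ← zpow_mul]
    rw [mul_inv_eq_iff_eq_mul] at h2
    rw [h2, zpow_neg]; group
  have hn' : ∀ i j : ℤ, True := fun _ _ => trivial
  let σ : R →* R :=
    { toFun := fun x => x * F (-(n x))
      map_one' := by
        rw [hF (-(n 1)) 0 (by rw [zpow_neg, hn_one]; simp)]; simp [F]
      map_mul' := by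
        intro a b
        rw [hF (-(n (a * b))) (-(n a) + -(n b))
          (by rw [zpow_neg, hn_mul, ← zpow_neg, neg_add])]
        show a * b * (y ^ (-(n a) + -(n b)) * s ^ ((-(n a) + -(n b)) * (-(n a) + -(n b)))) =
          a * (y ^ (-(n a)) * s ^ (-(n a) * -(n a))) * (b * (y ^ (-(n b)) * s ^ (-(n b) * -(n b))))
        have e1 : a * (y ^ (-(n a)) * s ^ (-(n a) * -(n a))) * (b * (y ^ (-(n b)) * s ^ (-(n b) * -(n b))))
           = a * ((y ^ (-(n a)) * b) * y ^ (-(n b))) * (s ^ (-(n a) * -(n a)) * s ^ (-(n b) * -(n b))) := by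
          have := ((hsc (b * y ^ (-(n b)))).zpow_left (-(n a) * -(n a))).eq
          calc _ = a * y ^ (-(n a)) * (s ^ (-(n a) * -(n a)) * (b * y ^ (-(n b)))) * s ^ (-(n b) * -(n b)) := by
                simp only [mul_assoc]
            _ = _ := by rw [this]; simp only [mul_assoc]
        rw [e1, hconj b (-n a), zpow_add y]
        have e2 : a * (z ^ (-(n b * -n a)) * (b * y ^ (-n a)) * y ^ (-n b)) =
            a * (b * y ^ (-n a) * y ^ (-n b)) * z ^ (-(n b * -n a)) := by
          rw [mul_assoc (z ^ _), ((hzc _).zpow_left _).eq, mul_assoc a]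
        have e3 : s ^ ((-(n a) + -(n b)) * (-(n a) + -(n b))) =
            z ^ (-(n b * -n a)) * (s ^ (-(n a) * -(n a)) * s ^ (-(n b) * -(n b))) := by
          rw [← hss, (Commute.refl s).mul_zpow, ← zpow_add, ← zpow_add, ← zpow_add]
          congr 1
          ring
        rw [e2, e3]
        simp only [mul_assoc] }
  have hσ : ∀ x, σ x = x * F (-(n x)) := fun x => rfl
  have hσc : ∀ x, Commute x y → σ x = x := by
    intro x hx
    rw [hσ, hF (-(n x)) 0 (by rw [zpow_neg, hn, comm_one_iff.2 hx]; simp)]; simp [F]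
  have hFy : ∀ i, Commute (F i) y := fun i =>
    ((Commute.refl y).zpow_left i).mul_left ((hsc y).zpow_left _)
  have hi : Function.Injective σ := by
    rw [injective_iff_map_eq_one]
    intro w hw
    have h1 : Commute w y := by
      rw [hσ] at hw
      rw [eq_inv_of_mul_eq_one_left hw]
      exact (hFy _).inv_left
    rw [← hσc w h1]; exact hw
  have h1 := hH.hom σ hi (fun h hh => by rw [hσc h (hyH h hh)]; exact hh) x
  have h2 := comm_zp h1
  rw [hσ] at h2
  have h3 : Commute (F (-(n x))) x := by
    have h3 := (Commute.refl x).inv_left.mul_left h2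
    simpa using h3
  have h4 : Commute (y ^ (-(n x))) x := by
    have h4 := h3.mul_left ((hsc x).zpow_left (-(n x) * -(n x))).inv_left
    simpa [F] using h4
  -- y is a power of y^(-n)
  have hnp : ¬ (p : ℤ) ∣ n x := by
    rintro ⟨i, hi⟩
    apply hx
    rw [← comm_one_iff, ← hn, hi, zpow_mul, zpow_natCast, hzp, one_zpow]
  have hco : IsCoprime (p : ℤ) (n x) := (Nat.prime_iff_prime_int.1 hp).coprime_iff_not_dvd.2 hnp
  obtain ⟨u, v, huv⟩ := hco
  have h5 : y = (y ^ (-(n x))) ^ (-v) := by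
    rw [← zpow_mul, show -(n x) * -v = 1 - p * u by linarith, zpow_sub, zpow_one, zpow_mul,
      zpow_natCast, hy]; simp
  exact hx (by rw [h5]; exact (h4.zpow_left _).symm)

end PB

namespace PB
open scoped commutatorElement
variable {R : Type*} [Group R]

theorem zp_of_zp {p : ℕ} (hp : p.Prime) {x e f : R} (he : e ∈ Subgroup.zpowers x)
    (hf : f ∈ Subgroup.zpowers x) (hep : e ^ p = 1) (hfp : f ^ p = 1) (hf1 : f ≠ 1) :
    e ∈ Subgroup.zpowers f := by
  obtain ⟨i, rfl⟩ := he
  obtain ⟨j, rfl⟩ := hf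
  simp only at *
  rw [← zpow_natCast, ← zpow_mul, ← orderOf_dvd_iff_zpow_eq_one] at hep hfp
  rw [ne_eq, ← orderOf_dvd_iff_zpow_eq_one] at hf1
  have hpN : (p : ℤ) ∣ orderOf x := by
    by_contra h
    have hc : IsCoprime (p : ℤ) (orderOf x) := (Nat.prime_iff_prime_int.1 hp).coprime_iff_not_dvd.2 h
    exact hf1 (hc.symm.dvd_of_dvd_mul_right hfp)
  obtain ⟨M, hM⟩ := hpN
  have hp0 : (p : ℤ) ≠ 0 := by exact_mod_cast hp.ne_zero
  rw [hM, mul_comm (p : ℤ) M] at hep hfp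
  obtain ⟨i', rfl⟩ := Int.dvd_of_mul_dvd_mul_right hp0 hep
  obtain ⟨j', rfl⟩ := Int.dvd_of_mul_dvd_mul_right hp0 hfp
  have hj : ¬ (p : ℤ) ∣ j' := fun h => hf1 (by rw [hM, mul_comm]; exact mul_dvd_mul_left M h)
  have hc : IsCoprime (p : ℤ) j' := (Nat.prime_iff_prime_int.1 hp).coprime_iff_not_dvd.2 hj
  obtain ⟨u, v, huv⟩ := hc
  refine ⟨v * i', ?_⟩
  simp only
  rw [← zpow_mul, zpow_eq_zpow_iff_modEq, hM, Int.modEq_iff_dvd]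
  refine ⟨u * i', ?_⟩
  linear_combination (-M * i') * huv

/-- Lemma C -/
theorem zp_of_comm [Finite R] {p : ℕ} (hp : p.Prime)
    (hU : ∀ y z : R, y ^ p = 1 → z ^ p = 1 → z ≠ 1 → y ∈ Subgroup.zpowers z) {b : R} (hb : b ≠ 1)
    (m : ℕ) : ∀ a : R, Commute a b → a ^ p ^ m = 1 → p ^ m ∣ orderOf b → a ∈ Subgroup.zpowers b := by
  induction m with
  | zero => intro a _ h _; rw [pow_zero, pow_one] at h; rw [h]; exact one_mem _
  | succ m ih =>
    intro a hab ha hd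
    obtain ⟨j, hj⟩ := ih (a ^ p) (hab.pow_left p) (by rw [← pow_mul, ← pow_succ']; exact ha)
      ((pow_dvd_pow p (Nat.le_succ m)).trans hd)
    simp only at hj
    have hpj : (p : ℤ) ∣ j := by
      have h1 : b ^ (j * (p ^ m : ℕ)) = 1 := by
        rw [zpow_mul, hj, zpow_natCast, ← pow_mul, ← pow_succ']; exact ha
      rw [← orderOf_dvd_iff_zpow_eq_one] at h1
      have h2 : ((p ^ (m + 1) : ℕ) : ℤ) ∣ j * (p ^ m : ℕ) := (Int.natCast_dvd_natCast.2 hd).trans h1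
      rw [pow_succ', Nat.cast_mul] at h2
      exact Int.dvd_of_mul_dvd_mul_right (by exact_mod_cast (pow_pos hp.pos m).ne') h2
    obtain ⟨i, rfl⟩ := hpj
    have h3 : (a * b ^ (-i)) ^ p = 1 := by
      rw [(hab.zpow_right (-i)).mul_pow, ← hj, ← zpow_natCast (b ^ (-i)), ← zpow_mul, ← zpow_add]
      rw [show (p : ℤ) * i + -i * p = 0 by ring, zpow_zero]
    have hpb : p ∣ orderOf b := (dvd_pow_self p (Nat.succ_ne_zero m)).trans hd
    obtain ⟨M, hM⟩ := hpb
    have h4 : b ^ M ∈ Subgroup.zpowers b := ⟨M, by simp⟩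
    have h5 := hU _ (b ^ M) h3 (by rw [← pow_mul, mul_comm, ← hM, pow_orderOf_eq_one]) (by
      intro h
      have := orderOf_dvd_of_pow_eq_one h
      rw [hM] at this
      have hM0 : M ≠ 0 := fun h => by
        rw [h, mul_zero] at hM
        exact (orderOf_pos b).ne' hM
      have := Nat.le_of_dvd (Nat.pos_of_ne_zero hM0) this
      have := hp.two_le
      nlinarith [Nat.pos_of_ne_zero hM0])
    have h6 : a * b ^ (-i) ∈ Subgroup.zpowers b := (Subgroup.zpowers_le.2 h4) h5
    have h7 := mul_mem h6 (⟨i, rfl⟩ : b ^ i ∈ Subgroup.zpowers b)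
    simpa using h7

/-- commutative case -/
theorem cyc_of_comm [Finite R] {p : ℕ} (hp : p.Prime) (hR : IsPGroup p R)
    (hU : ∀ y z : R, y ^ p = 1 → z ^ p = 1 → z ≠ 1 → y ∈ Subgroup.zpowers z)
    (hcomm : ∀ a b : R, Commute a b) : IsCyclic R := by
  have := Fact.mk hp
  letI : CommGroup R := { (inferInstance : Group R) with mul_comm := fun a b => (hcomm a b).eq }
  obtain ⟨g, hg⟩ := Monoid.exists_orderOf_eq_exponent (G := R) Monoid.ExponentExists.of_finite
  obtain ⟨n, hn⟩ := (IsPGroup.iff_orderOf.1 hR) g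
  refine ⟨g, fun a => ?_⟩
  by_cases h1 : g = 1
  · rw [h1, orderOf_one] at hg
    have := Monoid.pow_exponent_eq_one a
    rw [← hg, pow_one] at this
    exact ⟨0, (zpow_zero g).trans this.symm⟩
  · refine zp_of_comm hp hU h1 n a (hcomm a g) ?_ hn.symm.dvd
    rw [← hn, hg]; exact Monoid.pow_exponent_eq_one a

theorem zp_or [Finite R] {p : ℕ} (hp : p.Prime) (hR : IsPGroup p R)
    (hU : ∀ y z : R, y ^ p = 1 → z ^ p = 1 → z ≠ 1 → y ∈ Subgroup.zpowers z)
    {a b : R} (hab : Commute a b) : a ∈ Subgroup.zpowers b ∨ b ∈ Subgroup.zpowers a := by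
  have := Fact.mk hp
  obtain ⟨n, hn⟩ := (IsPGroup.iff_orderOf.1 hR) a
  obtain ⟨m, hm⟩ := (IsPGroup.iff_orderOf.1 hR) b
  by_cases ha : a = 1
  · left; rw [ha]; exact one_mem _
  by_cases hb : b = 1
  · right; rw [hb]; exact one_mem _
  rcases le_total n m with h | h
  · left
    exact zp_of_comm hp hU hb n a hab (by rw [← hn, pow_orderOf_eq_one]) (hm ▸ pow_dvd_pow p h)
  · right
    exact zp_of_comm hp hU ha m b hab.symm (by rw [← hm, pow_orderOf_eq_one]) (hn ▸ pow_dvd_pow p h)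

theorem Good.bot_of_top (h : Good (⊤ : Subgroup R)) : Good (⊥ : Subgroup R) := fun α _ x =>
  h α (by rw [← MonoidHom.range_eq_map, MonoidHom.range_eq_top]; exact α.surjective) x

theorem uniq_aux [Finite R] {p : ℕ} (hp : p.Prime) (hR : IsPGroup p R) {H : Subgroup R}
    (hH : Good H) (hnc : ¬ IsCyclic R) (hHt : H ≠ ⊤) : ∀ y z : R, (∀ x, Commute y x) →
    (∀ x, Commute z x) → y ^ p = 1 → z ^ p = 1 → z ≠ 1 → y ∈ Subgroup.zpowers z := by
  have := Fact.mk hp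
  obtain ⟨M, hM, hHM⟩ := (eq_top_or_exists_le_coatom H).resolve_left hHt
  have hnil : Group.IsNilpotent R := hR.isNilpotent
  have hMn : M.Normal := (Group.isNilpotent_of_finite_tfae.out 0 2 rfl rfl).1 hnil M hM
  have hnt : Nontrivial (R ⧸ M) := QuotientGroup.nontrivial_iff.2 hM.1
  have hQ : IsPGroup p (R ⧸ M) := hR.to_quotient M
  have hcard : Nat.card (R ⧸ M) = p := by
    have hd : p ∣ Nat.card (R ⧸ M) := by
      rcases hQ.card_eq_or_dvd with h | h
      · exact absurd h Finite.one_lt_card.ne'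
      · exact h
    obtain ⟨q, hq⟩ := exists_prime_orderOf_dvd_card' p hd
    have hlt : M < (Subgroup.zpowers q).comap (QuotientGroup.mk' M) := by
      refine lt_of_le_of_ne ?_ ?_
      · intro m hm
        rw [Subgroup.mem_comap]
        have : (QuotientGroup.mk' M) m = 1 := (QuotientGroup.eq_one_iff m).2 hm
        rw [this]; exact one_mem _
      · intro h
        obtain ⟨g, rfl⟩ := QuotientGroup.mk'_surjective M q
        have hg : g ∈ M := by rw [h]; exact Subgroup.mem_zpowers _
        have : (QuotientGroup.mk' M) g = 1 := (QuotientGroup.eq_one_iff g).2 hg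
        rw [this, orderOf_one] at hq
        exact hp.one_lt.ne hq
    have ht := hM.2 _ hlt
    have hz : Subgroup.zpowers q = ⊤ := by
      rw [eq_top_iff]
      intro r _
      obtain ⟨g, rfl⟩ := QuotientGroup.mk'_surjective M r
      have : g ∈ (Subgroup.zpowers q).comap (QuotientGroup.mk' M) := by rw [ht]; trivial
      exact this
    rw [← hq, ← Nat.card_zpowers, hz, Subgroup.card_top]
  have cen : ∀ w : R, (∀ x, Commute w x) → w ^ p = 1 → w ≠ 1 → w ∈ M → ∀ x, x ∉ M →
      w ∈ Subgroup.zpowers x := by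
    intro w hwc hwp hw1 hwM x hx
    have how : orderOf w = p := orderOf_eq_prime hwp hw1
    let e : (R ⧸ M) ≃* Subgroup.zpowers w :=
      mulEquivOfPrimeCardEq (p := p) hcard (by rw [Nat.card_zpowers, how])
    let f : R →* R := (Subgroup.zpowers w).subtype.comp (e.toMonoidHom.comp (QuotientGroup.mk' M))
    have hf1 : ∀ m, f m = 1 ↔ m ∈ M := by
      intro m
      have : f m = ((e (m : R ⧸ M) : Subgroup.zpowers w) : R) := rfl
      rw [this, OneMemClass.coe_eq_one, EmbeddingLike.map_eq_one_iff, QuotientGroup.eq_one_iff]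
    have hfw : ∀ m, f m ∈ Subgroup.zpowers w := fun m => (e (m : R ⧸ M)).2
    have hfc : ∀ m y, Commute (f m) y := by
      intro m y
      obtain ⟨i, hi⟩ := hfw m
      rw [← hi]
      exact (hwc y).zpow_left i
    let σ : R →* R :=
      { toFun := fun x => x * f x
        map_one' := by simp
        map_mul' := by
          intro a b
          rw [map_mul, mul_assoc, mul_assoc, ← mul_assoc (f a), (hfc a b).eq, mul_assoc] }
    have hi : Function.Injective σ := by
      rw [injective_iff_map_eq_one]
      intro y hy
      have hy' : y * f y = 1 := hy
      have h1 : y ∈ M := by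
        rw [eq_inv_of_mul_eq_one_left hy']
        exact inv_mem ((Subgroup.zpowers_le.2 hwM) (hfw y))
      rw [(hf1 y).2 h1, mul_one] at hy'
      exact hy'
    have h1 := hH.hom σ hi (fun h hh => by
      show h * f h ∈ H
      rw [(hf1 h).2 (hHM hh), mul_one]; exact hh) x
    have h2 : x * f x ∈ Subgroup.zpowers x := h1
    have h3 : f x ∈ Subgroup.zpowers x := by
      have := mul_mem (inv_mem (Subgroup.mem_zpowers x)) h2
      simpa using this
    have h4 : w ∈ Subgroup.zpowers (f x) := by
      refine zp_of_zp hp (Subgroup.mem_zpowers w) (hfw x) hwp ?_ (fun h => hx ((hf1 x).1 h))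
      obtain ⟨i, hi⟩ := hfw x
      simp only at hi
      rw [← hi, ← zpow_natCast, ← zpow_mul, mul_comm, zpow_mul, zpow_natCast, hwp, one_zpow]
    exact (Subgroup.zpowers_le.2 h3) h4
  -- a central element of order p in M
  have hMbot : M ≠ ⊥ := by
    intro h
    apply hnc
    refine isCyclic_of_prime_card (p := p) ?_
    rw [← hcard, h]
    exact (Nat.card_congr (QuotientGroup.quotientBot (G := R)).toEquiv).symm
  obtain ⟨w, hwc, hwp, hw1, hwM⟩ : ∃ w : R, (∀ x, Commute w x) ∧ w ^ p = 1 ∧ w ≠ 1 ∧ w ∈ M := by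
    have hd : p ∣ Nat.card M := by
      rcases (hR.to_subgroup M).card_eq_or_dvd with h | h
      · exact absurd (Subgroup.card_eq_one.1 h) hMbot
      · exact h
    let act : MulAction (ConjAct R) M := inferInstance
    obtain ⟨b, hb, hb1⟩ := IsPGroup.exists_fixed_point_of_prime_dvd_card_of_fixed_point
      (p := p) (G := ConjAct R) (hR.of_equiv ConjAct.toConjAct) M hd (a := 1) (by
        intro g; simp)
    have hbc : ∀ x : R, Commute (b : R) x := by
      intro x
      have h1 := hb (ConjAct.toConjAct x)
      have h2 := congrArg (Subtype.val) h1
      rw [ConjAct.Subgroup.val_conj_smul, ConjAct.toConjAct_smul, mul_inv_eq_iff_eq_mul] at h2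
      exact h2.symm
    obtain ⟨n, hn⟩ := (IsPGroup.iff_orderOf.1 hR) (b : R)
    have hn0 : n ≠ 0 := by
      rintro rfl
      rw [pow_zero, orderOf_eq_one_iff] at hn
      exact hb1 (Subtype.ext hn.symm)
    obtain ⟨k, rfl⟩ := Nat.exists_eq_succ_of_ne_zero hn0
    refine ⟨(b : R) ^ p ^ k, fun x => (hbc x).pow_left _, ?_, ?_, pow_mem b.2 _⟩
    · rw [← pow_mul, ← pow_succ, ← hn, pow_orderOf_eq_one]
    · intro h
      have := orderOf_dvd_of_pow_eq_one h
      rw [hn] at this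
      have := (Nat.pow_dvd_pow_iff_le_right hp.one_lt).1 this
      omega
  have hall : ∀ z : R, (∀ x, Commute z x) → z ^ p = 1 → z ≠ 1 → z ∈ M := by
    intro z hzc hzp hz1
    by_contra hz
    have h1 := cen w hwc hwp hw1 hwM z hz
    have h2 := zp_of_zp hp (Subgroup.mem_zpowers z) h1 hzp hwp hw1
    exact hz ((Subgroup.zpowers_le.2 hwM) h2)
  obtain ⟨x, hx⟩ : ∃ x, x ∉ M := by
    by_contra h
    push Not at h
    exact hM.1 (eq_top_iff.2 fun x _ => h x)
  intro y z hyc hzc hyp hzp hz1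
  by_cases hy1 : y = 1
  · rw [hy1]; exact one_mem _
  exact zp_of_zp hp (cen y hyc hyp hy1 (hall y hyc hyp hy1) x hx)
    (cen z hzc hzp hz1 (hall z hzc hzp hz1) x hx) hyp hzp hz1

theorem uniq [Finite R] {p : ℕ} (hp : p.Prime) (hR : IsPGroup p R) {H : Subgroup R}
    (hH : Good H) (hnc : ¬ IsCyclic R) : ∀ y z : R, (∀ x, Commute y x) →
    (∀ x, Commute z x) → y ^ p = 1 → z ^ p = 1 → z ≠ 1 → y ∈ Subgroup.zpowers z := by
  by_cases h : H = ⊤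
  · subst h
    refine uniq_aux hp hR hH.bot_of_top hnc ?_
    intro hbt
    apply hnc
    have : Subsingleton R := by
      rw [← Subgroup.subsingleton_iff]
      exact subsingleton_of_bot_eq_top hbt
    infer_instance
  · exact uniq_aux hp hR hH hnc h

end PB

namespace PB
open scoped commutatorElement
variable {R : Type*} [Group R]

theorem ring_aux {E : Type*} [Ring E] {X G : E} (hX : X * X = 0) (hG : G * G = 0)
    (hT : (X + G + X * G) * (X + G + X * G) = 0) : X * G = - (G * X) := by
  have h0 : ∀ a, X * (X * a) = 0 := fun a => by rw [← mul_assoc, hX, zero_mul]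
  have h1 : ∀ a, G * (G * a) = 0 := fun a => by rw [← mul_assoc, hG, zero_mul]
  have hT1 : X * G + G * X + G * X * G + X * G * X + X * G * X * G = 0 := by
    rw [← hT]; simp only [mul_add, add_mul, mul_assoc, hX, hG, h0, h1, mul_zero, zero_mul, add_zero, zero_add]
    abel
  have h2 : X * G * X + X * G * X * G = 0 := by
    have := congrArg (fun a => X * a) hT1
    simpa only [mul_add, add_mul, mul_assoc, hX, hG, h0, h1, mul_zero, zero_mul, add_zero, zero_add] using this
  have h3 : X * G * X * G = 0 := by
    have := congrArg (fun a => a * G) h2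
    simpa only [mul_add, add_mul, mul_assoc, hX, hG, h0, h1, mul_zero, zero_mul, add_zero, zero_add] using this
  have h4 : X * G * X = 0 := by rw [h3, add_zero] at h2; exact h2
  rw [h4, zero_mul, add_zero, add_zero] at hT1
  have h5 : G * X * G = 0 := by
    have := congrArg (fun a => a * G) hT1
    simpa only [mul_add, add_mul, mul_assoc, hX, hG, h0, h1, mul_zero, zero_mul, add_zero, zero_add] using this
  rw [h5, add_zero] at hT1
  exact eq_neg_of_add_eq_zero_left hT1

theorem comm_anti_aux (A : Subgroup R) [A.Normal] (hAc : ∀ a ∈ A, ∀ b ∈ A, a * b = b * a)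
    (hA : A ≤ nrm R) {a : R} (ha : a ∈ A) (x g : R) :
    ⁅x, ⁅g, a⁆⁆ = ⁅g, ⁅x, a⁆⁆⁻¹ := by
  letI : CommGroup A := { (inferInstance : Group A) with
    mul_comm := fun a b => Subtype.ext (hAc a a.2 b b.2) }
  let Φ : R → AddMonoid.End (Additive A) := fun x =>
    (MulAut.conjNormal x : MulAut A).toMonoidHom.toAdditive
  have hΦ : ∀ x (a : A), ((Additive.toMul (Φ x (Additive.ofMul a)) : A) : R) = x * a * x⁻¹ :=
    fun x a => rfl
  let D : R → AddMonoid.End (Additive A) := fun x => Φ x - 1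
  have hD : ∀ x (a : A), ((Additive.toMul (D x (Additive.ofMul a)) : A) : R) = ⁅x, (a : R)⁆ := by
    intro x a
    have : D x (Additive.ofMul a) = Φ x (Additive.ofMul a) - Additive.ofMul a := rfl
    rw [this, sub_eq_add_neg]
    rfl
  have hDD : ∀ x y (a : A), ((Additive.toMul ((D x * D y) (Additive.ofMul a)) : A) : R)
      = ⁅x, ⁅y, (a : R)⁆⁆ := by
    intro x y a
    have := hD x (Additive.toMul (D y (Additive.ofMul a)))
    rw [hD y a] at this
    exact this
  have hsq : ∀ x, D x * D x = 0 := by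
    intro x
    ext a
    show ((Additive.toMul ((D x * D x) (Additive.ofMul (Additive.toMul a))) : A) : R) = 1
    rw [hDD, comm_one_iff]
    exact (nrm_comm_left (hA (Additive.toMul a).2) x).symm
  have hmul : ∀ x y, Φ (x * y) = Φ x * Φ y := by
    intro x y
    ext a
    show x * y * (Additive.toMul a : A) * (x * y)⁻¹ = x * (y * (Additive.toMul a : A) * y⁻¹) * x⁻¹
    group
  have h1 : D (x * g) = D x + D g + D x * D g := by
    simp only [D, hmul, sub_mul, mul_sub, one_mul, mul_one]; abel
  have h2 := ring_aux (hsq x) (hsq g) (by rw [← h1]; exact hsq _)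
  have h3 := congrArg (fun e : AddMonoid.End (Additive A) =>
    ((Additive.toMul (e (Additive.ofMul (⟨a, ha⟩ : A))) : A) : R)) h2
  simp only [hDD] at h3
  rw [h3]
  show ((Additive.toMul ((D g * D x) (Additive.ofMul (⟨a, ha⟩ : A))) : A) : R)⁻¹ = _
  rw [hDD]

/-- centralizer of norm -/
def cA (R : Type*) [Group R] : Subgroup R := Subgroup.centralizer (nrm R : Set R)

theorem mem_cA {a : R} : a ∈ cA R ↔ ∀ k ∈ nrm R, Commute a k := by
  rw [cA, Subgroup.mem_centralizer_iff]
  exact ⟨fun h k hk => (h k hk).symm, fun h k hk => (h k hk).symm⟩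

instance cA_normal : (cA R).Normal := by
  unfold cA; infer_instance

theorem cA_comm {a : R} (ha : a ∈ cA R) (x : R) : ⁅x, a⁆ ∈ cA R := by
  rw [commutatorElement_def]
  exact mul_mem (cA_normal.conj_mem a ha x) (inv_mem ha)

theorem Good.cA_le [Finite R] {H : Subgroup R} (hH : Good H) : cA R ≤ nrm R := fun a ha =>
  hH.cent_nrm (mem_cA.1 ha)

theorem Good.anti [Finite R] {H : Subgroup R} (hH : Good H) {a : R} (ha : a ∈ cA R) (x g : R) :
    ⁅x, ⁅g, a⁆⁆ = ⁅g, ⁅x, a⁆⁆⁻¹ :=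
  comm_anti_aux (cA R) (fun a ha b hb => (mem_cA.1 ha b (hH.cA_le hb)).eq) hH.cA_le ha x g

/-- Lemma D -/
theorem Good.lemD [Finite R] {H : Subgroup R} (hH : Good H) {p : ℕ} (hp : p.Prime) {a : R}
    (ha : a ∈ cA R) (hap : ∀ x : R, ⁅x, a⁆ ^ p = 1) (x g : R) : Commute ⁅x, a⁆ g := by
  have he := nrm_comm_mem (hH.cA_le ha) x
  have hea := cA_comm ha x
  have hfg := nrm_comm_mem (hH.cA_le hea) g
  by_contra hne
  have hf1 : ⁅g, ⁅x, a⁆⁆ ≠ 1 := fun h => hne (comm_one_iff.1 h).symm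
  have hfx : ⁅g, ⁅x, a⁆⁆ ∈ Subgroup.zpowers x := by
    rw [hH.anti ha]
    exact inv_mem (nrm_comm_mem (hH.cA_le (cA_comm ha g)) x)
  have hfp : ⁅g, ⁅x, a⁆⁆ ^ p = 1 := by
    rw [← cl_pow_right (nrm_comm_right (hH.cA_le hea) g), hap, commutatorElement_one_right]
  have := zp_of_zp hp he hfx (hap x) hfp hf1
  exact hne (comm_zp ((Subgroup.zpowers_le.2 hfg) this))

theorem Good.pA [Finite R] {H : Subgroup R} (hH : Good H) {p : ℕ} (hp : p.Prime) {y : R}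
    (hy : y ^ p = 1) : y ∈ cA R := by
  rw [mem_cA]
  intro k hk
  by_contra hne
  have hc1 : ⁅y, k⁆ ≠ 1 := fun h => hne (comm_one_iff.1 h)
  have hcp : ⁅y, k⁆ ^ p = 1 := by
    rw [← cl_pow_left (nrm_comm_left hk y), hy, commutatorElement_one_left]
  obtain ⟨i, hi⟩ := zp_of_zp hp (Subgroup.mem_zpowers y) (nrm_comm_mem hk y) hy hcp hc1
  apply hne
  simp only at hi
  rw [← hi]
  exact (nrm_comm_right hk y).zpow_left i

theorem Good.p_comm [Finite R] {H : Subgroup R} (hH : Good H) {p : ℕ} (hp : p.Prime) {y : R}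
    (hy : y ^ p = 1) (x : R) : ⁅x, y⁆ ^ p = 1 ∧ ∀ g, Commute ⁅x, y⁆ g := by
  have h1 : ∀ x, ⁅x, y⁆ ^ p = 1 := fun x => by
    rw [← cl_pow_right (nrm_comm_right (hH.cA_le (hH.pA hp hy)) x), hy, commutatorElement_one_right]
  exact ⟨h1 x, hH.lemD hp (hH.pA hp hy) h1 x⟩

end PB

namespace PB
open scoped commutatorElement
variable {R : Type*} [Group R]

theorem order_red [Finite R] {p : ℕ} (hp : p.Prime) (hR : IsPGroup p R) {c : R} (hc : c ≠ 1) :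
    ∃ m : ℕ, c ^ p ^ m ≠ 1 ∧ (c ^ p ^ m) ^ p = 1 := by
  have := Fact.mk hp
  obtain ⟨n, hn⟩ := (IsPGroup.iff_orderOf.1 hR) c
  have hn0 : n ≠ 0 := by
    rintro rfl
    rw [pow_zero, orderOf_eq_one_iff] at hn
    exact hc hn
  obtain ⟨k, rfl⟩ := Nat.exists_eq_succ_of_ne_zero hn0
  refine ⟨k, ?_, ?_⟩
  · intro h
    have := orderOf_dvd_of_pow_eq_one h
    rw [hn] at this
    have := (Nat.pow_dvd_pow_iff_le_right hp.one_lt).1 this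
    omega
  · rw [← pow_mul, ← pow_succ, ← hn, pow_orderOf_eq_one]

theorem core [Finite R] {p : ℕ} (hpc : ∀ y : R, y ^ p = 1 → ∀ x, Commute y x)
    (hs : ∀ c : R, (∀ x, Commute c x) → c ^ p = 1 → ∃ s : R, (∀ x, Commute s x) ∧
      s ^ p = c ^ (p.choose 2)) {x t : R} (hc : ∀ g, Commute ⁅x, t⁆ g) (hcp : ⁅x, t⁆ ^ p = 1)
    (hxt : x ^ p ∈ Subgroup.zpowers (t ^ p)) : Commute x t := by
  have h1 : (x ^ p)⁻¹ ∈ Submonoid.powers (t ^ p) := mem_powers_iff_mem_zpowers.2 (inv_mem hxt)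
  obtain ⟨n, hn⟩ := h1
  simp only at hn
  have hd : ⁅x, t ^ n⁆ = ⁅x, t⁆ ^ n := cl_pow_right (hc t) n
  have hdc : ∀ g, Commute ⁅x, t ^ n⁆ g := fun g => by rw [hd]; exact (hc g).pow_left n
  have hdp : ⁅x, t ^ n⁆ ^ p = 1 := by rw [hd, ← pow_mul, mul_comm, pow_mul, hcp, one_pow]
  have h2 := cl_mul_pow (hdc x) (hdc (t ^ n)) p
  obtain ⟨s, hsc, hsp⟩ := hs _ hdc hdp
  rw [← hsp, ← pow_mul, mul_comm n p, pow_mul, hn, mul_inv_cancel,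
    ← (hsc (x * t ^ n)).symm.mul_pow] at h2
  have h3 := hpc _ h2 t
  have h4 := (h3.mul_left (hsc t).inv_left)
  rw [mul_inv_cancel_right] at h4
  have h5 := h4.mul_left ((Commute.refl t).pow_left n).inv_left
  rwa [mul_inv_cancel_right] at h5

theorem exists_two [Finite R] {p : ℕ} (hp : p.Prime) (hR : IsPGroup p R)
    (hnc : ¬ ∀ a b : R, Commute a b) : ∃ t x : R, ¬ Commute x t ∧ ∀ y g : R, Commute ⁅y, t⁆ g := by
  have := Fact.mk hp
  have hnt : Nontrivial (R ⧸ Subgroup.center R) := by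
    rw [QuotientGroup.nontrivial_iff]
    intro h
    apply hnc
    intro a b
    have : b ∈ Subgroup.center R := by rw [h]; trivial
    exact Subgroup.mem_center_iff.1 this a
  have hQ : IsPGroup p (R ⧸ Subgroup.center R) := hR.to_quotient _
  have hcn := hQ.center_nontrivial
  obtain ⟨⟨q, hq⟩, hq1⟩ := exists_ne (1 : Subgroup.center (R ⧸ Subgroup.center R))
  obtain ⟨t, rfl⟩ := QuotientGroup.mk'_surjective (Subgroup.center R) q
  have ht : t ∉ Subgroup.center R := fun h => hq1 (Subtype.ext ((QuotientGroup.eq_one_iff t).2 h))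
  rw [Subgroup.mem_center_iff] at ht
  push Not at ht
  obtain ⟨x, hx⟩ := ht
  refine ⟨t, x, hx, fun y g => ?_⟩
  have h1 : ⁅y, t⁆ ∈ Subgroup.center R := by
    rw [← QuotientGroup.eq_one_iff]
    have := Subgroup.mem_center_iff.1 hq (QuotientGroup.mk' (Subgroup.center R) y)
    have h2 : ⁅(QuotientGroup.mk' (Subgroup.center R) y), QuotientGroup.mk' (Subgroup.center R) t⁆ = 1 :=
      comm_one_iff.2 this
    rw [← map_commutatorElement] at h2
    exact h2
  exact (Subgroup.mem_center_iff.1 h1 g).symm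

theorem commB [Finite R] {p : ℕ} (hp : p.Prime) (hR : IsPGroup p R)
    (hpc : ∀ y : R, y ^ p = 1 → ∀ x, Commute y x)
    (hU : ∀ y z : R, y ^ p = 1 → z ^ p = 1 → z ≠ 1 → y ∈ Subgroup.zpowers z)
    (hs : ∀ c : R, (∀ x, Commute c x) → c ^ p = 1 → ∃ s : R, (∀ x, Commute s x) ∧
      s ^ p = c ^ (p.choose 2)) : ∀ a b : R, Commute a b := by
  by_contra hnc
  obtain ⟨t, x, hxt, hc⟩ := exists_two hp hR hnc
  have h1 : ⁅x, t⁆ ≠ 1 := fun h => hxt (comm_one_iff.1 h)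
  obtain ⟨m, hm1, hm2⟩ := order_red hp hR h1
  rw [← cl_pow_right (hc x t)] at hm1 hm2
  have hc' : ∀ g, Commute ⁅x, t ^ p ^ m⁆ g := fun g => by
    rw [cl_pow_right (hc x t)]; exact (hc x g).pow_left _
  have hxp : Commute (x ^ p) ((t ^ p ^ m) ^ p) := by
    refine Commute.pow_right ?_ p
    rw [← comm_one_iff, cl_pow_left (hc' x), hm2]
  apply hm1
  rw [comm_one_iff]
  rcases zp_or hp hR hU hxp with h | h
  · exact core hpc hs hc' hm2 h
  · refine (core hpc hs (x := t ^ p ^ m) (t := x) ?_ ?_ h).symm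
    · intro g; rw [← commutatorElement_inv]; exact (hc' g).inv_left
    · rw [← commutatorElement_inv, inv_pow, hm2, inv_one]

theorem exists_z [Finite R] {p : ℕ} (hp : p.Prime) (hR : IsPGroup p R) (hnc : ¬ IsCyclic R) :
    ∃ z : R, orderOf z = p ∧ ∀ x, Commute z x := by
  have := Fact.mk hp
  have hnt : Nontrivial R := by
    by_contra h
    rw [not_nontrivial_iff_subsingleton] at h
    exact hnc inferInstance
  have hcn := hR.center_nontrivial
  obtain ⟨⟨q, hq⟩, hq1⟩ := exists_ne (1 : Subgroup.center R)
  have hq1' : q ≠ 1 := fun h => hq1 (Subtype.ext h)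
  obtain ⟨m, h1, h2⟩ := order_red hp hR hq1'
  exact ⟨q ^ p ^ m, orderOf_eq_prime h2 h1, fun x =>
    Commute.pow_left (Subgroup.mem_center_iff.1 hq x).symm _⟩

theorem fin_aux [Finite R] {p : ℕ} (hp : p.Prime) (hR : IsPGroup p R) {H : Subgroup R}
    (hH : Good H) (hnc : ¬ IsCyclic R) (hpc : ∀ y : R, y ^ p = 1 → ∀ x, Commute y x) :
    ∀ y z : R, y ^ p = 1 → z ^ p = 1 → z ≠ 1 → y ∈ Subgroup.zpowers z :=
  fun y z hy hz hz1 => uniq hp hR hH hnc y z (hpc y hy) (hpc z hz) hy hz hz1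

theorem odd_case [Finite R] {p : ℕ} (hp : p.Prime) (hp2 : p ≠ 2) (hR : IsPGroup p R)
    {H : Subgroup R} (hH : Good H) : IsCyclic R := by
  by_contra hnc
  obtain ⟨z, hz, hzc⟩ := exists_z hp hR hnc
  have hzp : z ^ p = 1 := by rw [← hz, pow_orderOf_eq_one]
  have hz1 : z ≠ 1 := fun h => by rw [h, orderOf_one] at hz; exact hp.one_lt.ne hz
  have hpc : ∀ y : R, y ^ p = 1 → ∀ x, Commute y x := by
    intro y hy x
    refine (hH.odd hp hp2 hy hz hzc ?_ ?_ x).symm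
    · intro h hh
      exact (mem_cA.1 (hH.pA hp hy) h (hH.le_nrm hh)).symm
    · intro x
      obtain ⟨h1, h2⟩ := hH.p_comm hp hy x
      exact uniq hp hR hH hnc _ z h2 hzc h1 hzp hz1
  have hU := fin_aux hp hR hH hnc hpc
  refine hnc (cyc_of_comm hp hR hU (commB hp hR hpc hU ?_))
  intro c _ hcp
  refine ⟨1, fun x => Commute.one_left x, ?_⟩
  obtain ⟨k, hk⟩ := hp.dvd_choose_self (k := 2) (by norm_num) (lt_of_le_of_ne hp.two_le (Ne.symm hp2))
  rw [hk, pow_mul, hcp, one_pow, one_pow]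

theorem zp2 {z y : R} (hz : z ^ 2 = 1) (hy : y ∈ Subgroup.zpowers z) : y = 1 ∨ y = z := by
  obtain ⟨i, rfl⟩ := hy
  simp only
  have h2 : z ^ (2 : ℤ) = 1 := by exact_mod_cast hz
  rcases Int.even_or_odd' i with ⟨k, rfl | rfl⟩
  · left; rw [zpow_mul, h2, one_zpow]
  · right; rw [zpow_add, zpow_mul, h2, one_zpow, one_mul, zpow_one]

theorem two_case_s [Finite R] (hR : IsPGroup 2 R) {H : Subgroup R} (hH : Good H)
    (hnc : ¬ IsCyclic R) {z s : R} (hz : orderOf z = 2) (hzc : ∀ x, Commute z x)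
    (hsc : ∀ x, Commute s x) (hs : s ^ 2 = z) : False := by
  have hp := Nat.prime_two
  have hzp : z ^ 2 = 1 := by rw [← hz, pow_orderOf_eq_one]
  have hz1 : z ≠ 1 := fun h => by rw [h, orderOf_one] at hz; exact hp.one_lt.ne hz
  have hpc : ∀ y : R, y ^ 2 = 1 → ∀ x, Commute y x := by
    intro y hy x
    have hyi : y⁻¹ = y := inv_eq_of_mul_eq_one_left (by rw [← pow_two, hy])
    have hzi : z⁻¹ = z := inv_eq_of_mul_eq_one_left (by rw [← pow_two, hzp])
    have hsi : s⁻¹ = s * z := by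
      rw [inv_eq_iff_mul_eq_one, ← mul_assoc, ← pow_two, hs, ← pow_two, hzp]
    have h := hH.inv (t := y * s) (Or.inr ?_) ?_ x
    · have h2 := h.mul_right (hsc x).symm.inv_right
      rw [mul_inv_cancel_right] at h2
      exact h2.symm
    · intro h hh
      exact (mem_cA.1 (hH.pA hp hy) h (hH.le_nrm hh)).symm.mul_right (hsc h).symm
    · intro x
      obtain ⟨h1, h2⟩ := hH.p_comm hp hy x
      have e : x * (y * s) = ⁅x, y⁆ * (y * s * x) := by
        rw [mul_assoc y s x, (hsc x).eq, commutatorElement_def]; group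
      rcases zp2 hzp (uniq hp hR hH hnc _ z h2 hzc h1 hzp hz1) with h | h
      · left; rw [e, h, one_mul]
      · right
        rw [e, h, mul_inv_rev, hyi, hsi, (hsc z).eq, ← mul_assoc, mul_assoc z s y, (hsc y).eq]
  have hU := fin_aux hp hR hH hnc hpc
  refine hnc (cyc_of_comm hp hR hU (commB hp hR hpc hU ?_))
  intro c hc hcp
  rcases zp2 hzp (hU c z hcp hzp hz1) with h | h
  · exact ⟨1, fun x => Commute.one_left x, by rw [h]; simp⟩
  · exact ⟨s, hsc, by rw [h, hs]; simp⟩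

end PB

namespace PB
open scoped commutatorElement
variable {R : Type*} [Group R]

theorem invp {z t : R} (hzc : ∀ x, Commute z x) (hzp : z ^ 2 = 1) (ht : t ^ 2 = z)
    (hx : ∀ x : R, ⁅x, t⁆ = 1 ∨ ⁅x, t⁆ = z) (x : R) : x * t = t * x ∨ x * t = t⁻¹ * x := by
  have hi : t⁻¹ = z * t := by
    rw [inv_eq_iff_mul_eq_one, ← mul_assoc, ← (hzc t).eq, mul_assoc, ← pow_two, ht, ← pow_two, hzp]
  rcases hx x with h | h
  · left; exact comm_one_iff.1 h
  · right; rw [cl_swap, h, hi, mul_assoc]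

theorem dvd_aux {d j : ℕ} (hd : d ∣ 8) (h : d ∣ j * j) : d ∣ 2 * j := by
  have hd8 : d ≤ 8 := Nat.le_of_dvd (by norm_num) hd
  have hj : j % 8 < 8 := Nat.mod_lt _ (by norm_num)
  have hjj : j = 8 * (j / 8) + j % 8 := (Nat.div_add_mod j 8).symm
  have h1 : d ∣ (j % 8) * (j % 8) := by
    have : j * j = 8 * (8 * (j/8) * (j/8) + 2 * (j/8) * (j % 8)) + (j % 8) * (j % 8) := by
      conv_lhs => rw [hjj]
      ring
    rw [this] at h
    exact (Nat.dvd_add_right (hd.mul_right _)).1 h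
  have h2 : d ∣ 2 * (j % 8) := by
    generalize j % 8 = i at *
    interval_cases d <;> interval_cases i <;> revert hd h1 <;> decide
  have : 2 * j = 8 * (2 * (j / 8)) + 2 * (j % 8) := by omega
  rw [this]
  exact Dvd.dvd.add (hd.mul_right _) h2

theorem two_case_n [Finite R] (hR : IsPGroup 2 R) {H : Subgroup R} (hH : Good H)
    (hnc : ¬ IsCyclic R) {z : R} (hz : orderOf z = 2) (hzc : ∀ x, Commute z x)
    (hns : ∀ s : R, (∀ x, Commute s x) → s ^ 2 ≠ z) : False := by
  have hp := Nat.prime_two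
  have hzp : z ^ 2 = 1 := by rw [← hz, pow_orderOf_eq_one]
  have hz1 : z ≠ 1 := fun h => by rw [h, orderOf_one] at hz; exact hp.one_lt.ne hz
  have hZ : ∀ c : R, (∀ x, Commute c x) → c = 1 ∨ c = z := by
    intro c hc
    by_cases hc1 : c = 1
    · exact Or.inl hc1
    obtain ⟨m, h1, h2⟩ := order_red hp hR hc1
    have h3 := (zp2 hzp (uniq hp hR hH hnc _ z (fun x => (hc x).pow_left (2 ^ m)) hzc h2 hzp hz1)).resolve_left h1
    cases m with
    | zero => right; simpa using h3
    | succ k =>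
      rw [pow_succ, pow_mul] at h3
      exact absurd h3 (hns _ (fun x => (hc x).pow_left _))
  have hZ2 : ∀ c : R, (∀ x, Commute c x) → c ^ 2 = 1 := by
    intro c hc
    rcases hZ c hc with h | h
    · rw [h, one_pow]
    · rw [h, hzp]
  have h_i : ∀ t ∈ cA R, (∀ x g : R, Commute ⁅x, t⁆ g) → t ^ 2 = 1 := by
    intro t ht hc
    have h1 : ∀ x, Commute (t ^ 2) x := by
      intro x
      symm
      rw [← comm_one_iff, cl_pow_right (hc x t)]
      exact hZ2 _ (hc x)
    refine (hZ _ h1).resolve_right fun h2 => ?_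
    refine hns t (fun x => (hH.inv (Or.inr fun h hh => (mem_cA.1 ht h (hH.le_nrm hh)).symm) ?_ x).symm) h2
    exact invp hzc hzp h2 fun x => hZ _ (hc x)
  have h_4 : ∀ b ∈ cA R, b ^ 4 = 1 → b ^ 2 = 1 := by
    intro b hb hb4
    by_cases hx : ∀ x : R, ⁅x, b⁆ ^ 2 = 1
    · exact h_i b hb (hH.lemD hp hb hx)
    push Not at hx
    obtain ⟨x, hx⟩ := hx
    exfalso
    apply hx
    have hc := cA_comm hb x
    refine h_i _ hc (hH.lemD hp hc ?_)
    intro g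
    rw [← cl_pow_right (nrm_comm_right (hH.cA_le hc) g), comm_one_iff,
      ← cl_pow_right (nrm_comm_right (hH.cA_le hb) x)]
    exact ((hH.p_comm hp (y := b ^ 2) (by rw [← pow_mul]; exact hb4) x).2 g).symm
  have h_ii : ∀ a ∈ cA R, a ^ 2 = 1 := by
    intro a ha
    by_contra hne
    obtain ⟨m, h1, h2⟩ := order_red hp hR hne
    apply h1
    rw [← pow_mul, mul_comm, pow_mul]
    apply h_4 _ (pow_mem ha _)
    rw [← h2]
    simp only [← pow_mul]
    congr 1
    ring
  have h_8 : ∀ v : R, v ^ 8 = 1 → v ^ 4 = 1 := by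
    intro v hv
    have : v ^ 2 ∈ cA R := by
      rw [mem_cA]
      intro k hk
      rw [← comm_one_iff, cl_pow_left (nrm_comm_left hk v)]
      obtain ⟨j, hj⟩ := mem_powers_iff_mem_zpowers.2 (nrm_comm_mem hk v)
      simp only at hj
      have h1 : ⁅v ^ j, k⁆ = 1 := by
        rw [hj, comm_one_iff]; exact nrm_comm_right hk v
      rw [cl_pow_left (nrm_comm_left hk v), ← hj, ← pow_mul] at h1
      rw [← hj, ← pow_mul, mul_comm]
      rw [← orderOf_dvd_iff_pow_eq_one] at h1 hv ⊢
      exact dvd_aux hv h1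
    have := h_ii _ this
    rwa [← pow_mul] at this
  have h_iii : ∀ x : R, x ^ 4 = 1 := by
    intro x
    by_contra hne
    obtain ⟨m, h1, h2⟩ := order_red hp hR hne
    apply h1
    rw [← pow_mul, mul_comm, pow_mul]
    apply h_8
    rw [← h2]
    simp only [← pow_mul]
    congr 1
    ring
  have h_iv : ∀ y : R, y ^ 2 = 1 → ∀ x, Commute y x := by
    intro y hy g
    by_contra hne
    have hya := hH.pA hp hy
    have hyn := hH.cA_le hya
    have hc : ⁅g, y⁆ = z := (hZ _ (hH.p_comm hp hy g).2).resolve_left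
      fun h => hne (comm_one_iff.1 h).symm
    have hzg : z ∈ Subgroup.zpowers g := hc ▸ nrm_comm_mem hyn g
    have hg2 : g ^ 2 = z := by
      by_cases h1 : g ^ 2 = 1
      · rcases zp2 h1 hzg with h | h
        · exact absurd h hz1
        · rw [← h] at hne; exact absurd (hzc y).symm hne
      · have h4 : (g ^ 2) ^ 2 = 1 := by rw [← pow_mul]; exact h_iii g
        have := zp_of_zp hp hzg (pow_mem (Subgroup.mem_zpowers g) 2) hzp h4 h1
        rcases zp2 h4 this with h | h
        · exact absurd h hz1
        · exact h.symm
    have h2 := cl_mul_pow (nrm_comm_left hyn g) (nrm_comm_right hyn g) 2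
    rw [hy, mul_one, hg2, hc, Nat.choose_self, pow_one] at h2
    have h3 : (g * y) ^ 2 = 1 := mul_eq_right.1 h2
    have h4 := mem_cA.1 (hH.pA hp h3) y hyn
    have h5 := h4.mul_left (Commute.refl y).inv_left
    rw [mul_inv_cancel_right] at h5
    exact hne h5.symm
  have hsq : ∀ x g : R, Commute (x ^ 2) g := fun x => h_iv _ (by rw [← pow_mul]; exact h_iii x)
  have hcc : ∀ x t g : R, Commute ⁅x, t⁆ g := by
    intro x t g
    have : ⁅x, t⁆ = (x * t) ^ 2 * ((x ^ 2)⁻¹ * (t ^ 2)⁻¹) := by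
      have e : (x ^ 2)⁻¹ * (t ^ 2)⁻¹ = t⁻¹ * (x ^ 2)⁻¹ * t⁻¹ := by
        rw [← ((hsq x t).inv_inv).eq, pow_two t, mul_inv_rev, mul_assoc]
      rw [e, commutatorElement_def, pow_two, pow_two]; group
    rw [this]
    exact (hsq _ g).mul_left ((hsq _ g).inv_left.mul_left (hsq _ g).inv_left)
  have hinv : ∀ t x : R, x * t = t * x ∨ x * t = t⁻¹ * x := by
    intro t
    rcases hZ _ (hsq t) with h | h
    · exact fun x => Or.inl (h_iv t h x).symm
    · exact invp hzc hzp h fun x => hZ _ (hcc x t)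
  have hHc : ∀ h ∈ H, ∀ x, Commute x h := fun h hh x => hH.inv (Or.inl hh) (hinv h) x
  have hall : ∀ a b : R, Commute a b := fun a b =>
    hH.inv (Or.inr fun h hh => (hHc h hh b).symm) (hinv b) a
  exact hnc (cyc_of_comm hp hR (fin_aux hp hR hH hnc h_iv) hall)

theorem pcase [Finite R] {p : ℕ} (hp : p.Prime) (hR : IsPGroup p R)
    {H : Subgroup R} (hH : Good H) : IsCyclic R := by
  by_cases hp2 : p = 2
  · subst hp2
    by_contra hnc
    obtain ⟨z, hz, hzc⟩ := exists_z hp hR hnc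
    by_cases hs : ∃ s : R, (∀ x, Commute s x) ∧ s ^ 2 = z
    · obtain ⟨s, h1, h2⟩ := hs
      exact two_case_s hR hH hnc hz hzc h1 h2
    · push Not at hs
      exact two_case_n hR hH hnc hz hzc hs
  · exact odd_case hp hp2 hR hH

end PB

namespace PB
open scoped commutatorElement
variable {R : Type*} [Group R]

theorem Good.equiv {S : Type*} [Group S] [Finite S] [Finite R] {H : Subgroup R} (hH : Good H)
    (e : R ≃* S) : Good (H.map e.toMonoidHom) := by
  intro α hα x
  have h1 := hH.hom ((e.symm.toMonoidHom.comp α.toMonoidHom).comp e.toMonoidHom)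
    (e.symm.injective.comp (α.injective.comp e.injective)) (by
      intro h hh
      have : α (e h) ∈ H.map e.toMonoidHom := by
        rw [← hα]
        exact Subgroup.mem_map_of_mem α.toMonoidHom (Subgroup.mem_map_of_mem e.toMonoidHom hh)
      obtain ⟨k, hk, hk2⟩ := this
      have hk3 : e k = α (e h) := hk2
      show e.symm (α (e h)) ∈ H
      rw [← hk3, e.symm_apply_apply]
      exact hk) (e.symm x)
  obtain ⟨n, hn⟩ := h1
  refine ⟨n, ?_⟩
  have hn' : (e.symm x) ^ n = e.symm (α (e (e.symm x))) := hn
  rw [e.apply_symm_apply, ← map_zpow] at hn'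
  exact e.symm.injective hn'

theorem prod_good {P Q : Type*} [Group P] [Group Q] [Finite P] [Finite Q]
    (hco : (Nat.card P).Coprime (Nat.card Q)) {H : Subgroup (P × Q)} (hH : Good H) :
    Good (H.comap (MonoidHom.inl P Q)) := by
  intro α hα x
  have key : ∀ a ∈ H, ((a.1, 1) : P × Q) ∈ H := by
    rintro ⟨a, b⟩ hab
    obtain ⟨n, hn1, hn2⟩ := Nat.chineseRemainder hco 1 0
    have h1 : a ^ n = a := by
      have : a ^ n = a ^ 1 := pow_eq_pow_iff_modEq.2 (hn1.of_dvd (orderOf_dvd_natCard a))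
      rwa [pow_one] at this
    have h2 : b ^ n = 1 := by
      have : b ^ n = b ^ 0 := pow_eq_pow_iff_modEq.2 (hn2.of_dvd (orderOf_dvd_natCard b))
      rwa [pow_zero] at this
    have := pow_mem hab n
    rwa [Prod.pow_mk, h1, h2] at this
  have h1 := hH.hom (MonoidHom.prodMap α.toMonoidHom (MonoidHom.id Q))
    (by
      rintro ⟨a, b⟩ ⟨c, d⟩ h
      have h1 : (α a, b) = (α c, d) := h
      rw [Prod.mk.injEq] at h1
      exact Prod.ext (α.injective h1.1) h1.2) (by
      rintro ⟨a, b⟩ hab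
      show (α a, b) ∈ H
      have h1 := key _ hab
      simp only at h1
      have h2 : ((1, b) : P × Q) ∈ H := by
        have := mul_mem (inv_mem h1) hab
        simpa using this
      have h3 : α a ∈ H.comap (MonoidHom.inl P Q) := by
        rw [← hα]
        exact Subgroup.mem_map_of_mem α.toMonoidHom h1
      have h4 : ((α a, 1) : P × Q) ∈ H := h3
      have := mul_mem h4 h2
      simpa using this) (x, 1)
  obtain ⟨n, hn⟩ := h1
  exact ⟨n, congrArg Prod.fst hn⟩

theorem Good.cop_pg [Finite R] {H : Subgroup R} (hH : Good H) {p q : ℕ} (hp : p.Prime)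
    (hq : q.Prime) (hpq : p ≠ q) (P : Sylow p R) (Q : Sylow q R) {x y : R} (hx : x ∈ P)
    (hy : y ∈ Q) : Commute x y := by
  have := Fact.mk hp
  have := Fact.mk hq
  obtain ⟨n, hn⟩ := pp_order P hx
  obtain ⟨m, hm⟩ := pp_order Q hy
  apply hH.coprime_comm
  rw [hn, hm]
  exact Nat.Coprime.pow _ _ ((Nat.coprime_primes hp hq).2 hpq)

theorem Good.sylow_normal [Finite R] {H : Subgroup R} (hH : Good H) {p : ℕ} (hp : p.Prime)
    (P : Sylow p R) : (P : Subgroup R).Normal := by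
  have := Fact.mk hp
  rw [← Subgroup.normalizer_eq_top_iff, ← Subgroup.index_eq_one]
  by_contra hne
  obtain ⟨q, hq, hd⟩ := Nat.exists_prime_and_dvd hne
  have := Fact.mk hq
  by_cases hpq : p = q
  · subst hpq
    exact P.not_dvd_index (hd.trans (Subgroup.index_dvd_of_le Subgroup.le_normalizer))
  · let Q : Sylow q R := default
    refine Q.not_dvd_index (hd.trans (Subgroup.index_dvd_of_le ?_))
    refine le_trans ?_ (Subgroup.centralizer_le_normalizer _)
    intro y hy
    rw [Subgroup.mem_centralizer_iff]
    intro x hx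
    exact (hH.cop_pg hp hq hpq P Q hx hy).eq

theorem Good.sylow_cyclic [Finite R] {H : Subgroup R} (hH : Good H) {p : ℕ} (hp : p.Prime)
    (P : Sylow p R) : IsCyclic P := by
  have := Fact.mk hp
  have hn := hH.sylow_normal hp P
  obtain ⟨Q, hQ⟩ := Subgroup.exists_right_complement'_of_coprime (N := (P : Subgroup R)) P.card_coprime_index
  have hcard : Nat.card Q = (P : Subgroup R).index := hQ.symm.index_eq_card.symm
  have hco : (Nat.card P).Coprime (Nat.card Q) := by rw [hcard]; exact P.card_coprime_index
  have hcomm : ∀ (a : P) (b : Q), Commute ((P : Subgroup R).subtype a) (Q.subtype b) := by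
    intro a b
    apply hH.coprime_comm
    refine Nat.Coprime.of_dvd ?_ ?_ hco
    · exact (Subgroup.orderOf_coe a).symm ▸ orderOf_dvd_natCard a
    · exact (Subgroup.orderOf_coe b).symm ▸ orderOf_dvd_natCard b
  let e : (P × Q) ≃* R := MulEquiv.ofBijective
    (MonoidHom.noncommCoprod (P : Subgroup R).subtype Q.subtype hcomm) hQ
  exact pcase hp P.2 (prod_good hco (hH.equiv e.symm))

theorem Good.cyclic [Finite R] {H : Subgroup R} (hH : Good H) : IsCyclic R := by
  have hnil : Group.IsNilpotent R := by
    refine (Group.isNilpotent_of_finite_tfae.out 0 3 rfl rfl).2 ?_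
    intro p hp P
    exact hH.sylow_normal hp.out P
  have hZ : IsZGroup R := ⟨fun p hp P => hH.sylow_cyclic hp P⟩
  infer_instance

end PB

/-- The base size of the action of `Aut(R)` on the set of subgroups of a finite
group `R` is `1` (i.e. some subgroup `H` has setwise stabilizer consisting only of
power automorphisms) if and only if `R` is cyclic. -/
theorem stmt0 (R : Type*) [Group R] [Finite R] :
    (∃ H : Subgroup R, ∀ α : MulAut R, Subgroup.map α.toMonoidHom H = H →
      ∀ x : R, α x ∈ Subgroup.zpowers x) ↔ IsCyclic R := by
  constructor
  · rintro ⟨H, hH⟩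
    exact PB.Good.cyclic (H := H) hH
  · intro hc
    refine ⟨⊤, fun α _ x => ?_⟩
    obtain ⟨m, hm⟩ := MonoidHom.map_cyclic α.toMonoidHom
    exact ⟨m, (hm x).symm⟩
end

section
/- Let R be a finite group, and consider the natural action of Aut(R) on the set of subgroups of R (an automorphism α sends a subgroup H to its image α(H)). There exists a subgroup H of R whose stabilizer in Aut(R) under this action equals the kernel of the action (that is, the induced permutation group has a regular orbit) if and only if R is cyclic. -/
set_option linter.all false
namespace RegOrb

section basic
variable {p : ℕ} {P : Type*} [Group P]

lemma ord_pow [Fact p.Prime] (hp : IsPGroup p P) (x : P) : ∃ a : ℕ, orderOf x = p ^ a :=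
  IsPGroup.iff_orderOf.mp hp x

lemma zpow_cancel [Fact p.Prime] (hp : IsPGroup p P) {x : P} {m w : ℤ} (hw : ¬ (p : ℤ) ∣ w)
    (h : x ^ (m * w) = 1) : x ^ m = 1 := by
  obtain ⟨a, ha⟩ := ord_pow hp x
  rw [← orderOf_dvd_iff_zpow_eq_one] at h ⊢
  rw [ha] at h ⊢
  have hc : IsCoprime ((p ^ a : ℕ) : ℤ) w := by
    push_cast
    apply IsCoprime.pow_left
    exact (Prime.coprime_iff_not_dvd (Nat.prime_iff_prime_int.mp Fact.out)).mpr hw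
  exact hc.dvd_of_dvd_mul_right h

lemma exists_inv [Fact p.Prime] (hp : IsPGroup p P) (x : P) {w : ℤ} (hw : ¬ (p : ℤ) ∣ w) :
    ∃ s : ℤ, x ^ (w * s) = x := by
  obtain ⟨a, ha⟩ := ord_pow hp x
  have hc : IsCoprime ((p ^ a : ℕ) : ℤ) w := by
    push_cast
    apply IsCoprime.pow_left
    exact (Prime.coprime_iff_not_dvd (Nat.prime_iff_prime_int.mp Fact.out)).mpr hw
  obtain ⟨u, v, huv⟩ := hc
  refine ⟨v, ?_⟩
  have : x ^ ((p ^ a : ℕ) : ℤ) = 1 := by rw [zpow_natCast, ← ha, pow_orderOf_eq_one]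
  have h2 : w * v = 1 - ((p ^ a : ℕ) : ℤ) * u := by linarith
  rw [h2, zpow_sub, zpow_mul, this]; simp

lemma conj_zpow' (k x : P) (n : ℤ) : k⁻¹ * x ^ n * k = (k⁻¹ * x * k) ^ n := by
  have := (conj_zpow (a := k⁻¹) (b := x) (i := n)).symm
  simpa using this

lemma conj_iter {k x : P} {r : ℤ} (h : k⁻¹ * x * k = x ^ r) (n : ℕ) :
    (k ^ n)⁻¹ * x * k ^ n = x ^ (r ^ n) := by
  induction n with
  | zero => simp
  | succ n ih =>
    have : (k ^ (n+1))⁻¹ * x * k ^ (n+1) = k⁻¹ * ((k ^ n)⁻¹ * x * k ^ n) * k := by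
      rw [pow_succ]; group
    rw [this, ih, conj_zpow', h, ← zpow_mul, pow_succ, mul_comm]

lemma r_mod [Fact p.Prime] (hp : IsPGroup p P) {k x : P} {r : ℤ} (hx : x ≠ 1)
    (h : k⁻¹ * x * k = x ^ r) : (p : ℤ) ∣ r - 1 := by
  obtain ⟨a, ha⟩ := isPGroup_iff_pow_pow_eq_one.mp hp k
  have h1 := conj_iter h (p ^ a)
  rw [ha] at h1
  have h2 : x ^ (r ^ (p ^ a) - 1) = 1 := by
    rw [zpow_sub, ← h1]; simp
  have h3 : (p : ℤ) ∣ r ^ (p ^ a) - 1 :=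
    dvd_trans (Int.natCast_dvd_natCast.mpr (hp.dvd_orderOf hx)) (orderOf_dvd_iff_zpow_eq_one.mpr h2)
  rw [← ZMod.intCast_zmod_eq_zero_iff_dvd] at h3 ⊢
  push_cast at h3 ⊢
  rwa [ZMod.pow_card_pow] at h3

lemma mem_c [Fact p.Prime] (hp : IsPGroup p P) {c x y : P} (hc1 : c ≠ 1) (hcp : c ^ p = 1)
    (hc : c ∈ Subgroup.zpowers y) (hx : x ∈ Subgroup.zpowers y) (hxp : x ^ p = 1) :
    x ∈ Subgroup.zpowers c := by
  obtain ⟨j, rfl⟩ := hc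
  obtain ⟨i, rfl⟩ := hx
  obtain ⟨a, ha⟩ := ord_pow hp y
  simp only at *
  have hpp : (p : ℤ) ≠ 0 := by exact_mod_cast (Fact.out : p.Prime).ne_zero
  rw [← zpow_natCast, ← zpow_mul, ← orderOf_dvd_iff_zpow_eq_one, ha] at hcp hxp
  cases a with
  | zero => 
    exfalso; apply hc1
    rw [← orderOf_dvd_iff_zpow_eq_one, ha]; simp
  | succ b =>
    push_cast at hcp hxp
    rw [pow_succ] at hcp hxp
    obtain ⟨j', rfl⟩ := (mul_dvd_mul_iff_right hpp).mp hcp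
    obtain ⟨i', rfl⟩ := (mul_dvd_mul_iff_right hpp).mp hxp
    have hj : ¬ (p : ℤ) ∣ j' := by
      rintro ⟨t, rfl⟩
      apply hc1
      rw [← orderOf_dvd_iff_zpow_eq_one, ha]
      exact ⟨t, by push_cast; ring⟩
    obtain ⟨s, hs⟩ := exists_inv hp y hj
    refine ⟨s * i', ?_⟩
    change (y ^ _) ^ _ = _
    rw [← zpow_mul, show (p:ℤ) ^ b * j' * (s * i') = (j' * s) * (p ^ b * i') by ring, zpow_mul, hs]

lemma mem_c_pow {c x : P} (hcp : c ^ p = 1) (hx : x ∈ Subgroup.zpowers c) : x ^ p = 1 := by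
  obtain ⟨j, rfl⟩ := hx
  change (c ^ j) ^ p = 1
  rw [← zpow_natCast, ← zpow_mul, mul_comm, zpow_mul, zpow_natCast, hcp, one_zpow]

lemma mem_c_symm [Fact p.Prime] (hp : IsPGroup p P) {c x : P} (hcp : c ^ p = 1)
    (hx : x ∈ Subgroup.zpowers c) (hx1 : x ≠ 1) : c ∈ Subgroup.zpowers x :=
  mem_c hp hx1 (mem_c_pow hcp hx) hx (Subgroup.mem_zpowers c) hcp

lemma zp_two {c x : P} (hc : c ^ 2 = 1) (hx : x ∈ Subgroup.zpowers c) : x = 1 ∨ x = c := by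
  obtain ⟨j, rfl⟩ := hx
  rcases Int.even_or_odd' j with ⟨m, rfl | rfl⟩
  · left; change c ^ _ = _; rw [zpow_mul]; norm_cast; rw [hc]; simp
  · right; change c ^ _ = _; rw [zpow_add, zpow_mul]; norm_cast; rw [hc]; simp

lemma comm_of_mem {x y : P} (h : x ∈ Subgroup.zpowers y) : x * y = y * x := by
  obtain ⟨j, rfl⟩ := h
  exact ((Commute.refl y).zpow_left j)

lemma comm_of_mem2 {x z y : P} (h : x ∈ Subgroup.zpowers y) (hz : z ∈ Subgroup.zpowers y) :
    x * z = z * x := by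
  obtain ⟨j, rfl⟩ := h
  obtain ⟨i, rfl⟩ := hz
  exact (((Commute.refl y).zpow_left j).zpow_right i)

/-- minimal power -/
lemma min_pow [Fact p.Prime] (hp : IsPGroup p P) (S : Subgroup P) {k : P} (hk : k ∉ S) :
    ∃ n : ℕ, k ^ n ∉ S ∧ (k ^ n) ^ p ∈ S := by
  classical
  have hex : ∃ a : ℕ, k ^ (p ^ a) ∈ S := by
    obtain ⟨a, ha⟩ := isPGroup_iff_pow_pow_eq_one.mp hp k
    exact ⟨a, by rw [ha]; exact S.one_mem⟩
  have h0 : Nat.find hex ≠ 0 := by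
    intro h; have := Nat.find_spec hex; rw [h] at this; simp at this; exact hk this
  obtain ⟨b, hb⟩ := Nat.exists_eq_succ_of_ne_zero h0
  refine ⟨p ^ b, Nat.find_min hex (by omega), ?_⟩
  have := Nat.find_spec hex
  rw [hb] at this
  rwa [← pow_mul, ← pow_succ]

end basic

structure Ctx (p : ℕ) {P : Type*} [Group P] (H K : Subgroup P) : Prop where
  hp : IsPGroup p P
  conj : ∀ k ∈ K, ∀ x : P, ∃ n : ℤ, k⁻¹ * x * k = x ^ n
  norm : ∀ g : P, (∀ h ∈ H, g⁻¹ * h * g ∈ H) → g ∈ K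
  HK : H ≤ K
  Kn : ∀ k ∈ K, ∀ g : P, g⁻¹ * k * g ∈ K
  aut : ∀ M : Subgroup P, M.Normal → M.index = p → H ≤ M → ∀ y, y ∉ M → ∀ z ∈ M,
    (∀ m ∈ M, m * z = z * m) → (y * z) ^ p = y ^ p → z ∈ Subgroup.zpowers y

section ctx
variable {p : ℕ} [Fact p.Prime] {P : Type*} [Group P] [Finite P] {H K : Subgroup P}

/-- commuting with H implies in K -/
lemma Ctx.cent (C : Ctx p H K) {g : P} (h : ∀ h ∈ H, h * g = g * h) : g ∈ K := by
  apply C.norm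
  intro x hx
  rw [mul_assoc, h x hx]; simpa using hx

/-- `P` is generated by the complement of `M` -/
lemma out_gen {M : Subgroup P} {y : P} (hy : y ∉ M) (S : Subgroup P) (h : ∀ y, y ∉ M → y ∈ S) (x : P) :
    x ∈ S := by
  by_cases hx : x ∈ M
  · have h1 : y⁻¹ * x ∉ M := fun h' => hy (by
      have := M.mul_mem hx (M.inv_mem h'); simpa using this)
    have := S.mul_mem (h y hy) (h _ h1)
    simpa using this
  · exact h x hx

lemma exists_M (hp : IsPGroup p P) (hH : H ≠ ⊤) :
    ∃ M : Subgroup P, M.Normal ∧ M.index = p ∧ H ≤ M := by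
  obtain ⟨n, hn⟩ := IsPGroup.iff_card.mp hp
  obtain ⟨m, hm⟩ := IsPGroup.iff_card.mp (hp.to_subgroup H)
  have hlt : Nat.card H < Nat.card P := by
    refine lt_of_le_of_ne (Subgroup.card_le_card_group H) fun h => hH ?_
    exact Subgroup.card_eq_iff_eq_top H |>.mp h
  have h1 := (Fact.out : p.Prime).one_lt
  have hmn : m < n := by
    rw [hn, hm] at hlt; exact (Nat.pow_lt_pow_iff_right h1).mp hlt
  obtain ⟨M, hM, hHM⟩ := Sylow.exists_subgroup_card_pow_prime_le (n := m) (m := n - 1) p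
    (by rw [hn]; exact pow_dvd_pow _ (by omega)) H hm (by omega)
  have hi : M.index = p := by
    have := M.card_mul_index
    rw [hM, hn] at this
    have h2 : p ^ n = p ^ (n-1) * p := by rw [← pow_succ]; congr 1; omega
    rw [h2] at this
    exact Nat.eq_of_mul_eq_mul_left (by positivity) this
  refine ⟨M, ?_, hi, hHM⟩
  apply Subgroup.normal_of_index_eq_minFac_card
  rw [hi, hn, Nat.Prime.pow_minFac Fact.out (by omega)]

lemma index_out {M : Subgroup P} (hM : M.index = p) : ∃ y, y ∉ M := by
  by_contra! h
  have : M = ⊤ := by ext; simp [h]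
  rw [this] at hM; simp at hM
  exact (Fact.out : p.Prime).one_lt.ne hM

lemma pow_mem_M {M : Subgroup P} (hMn : M.Normal) (hM : M.index = p) (x : P) : x ^ p ∈ M := by
  rw [← hM]; exact Subgroup.pow_index_mem M x

/-- Lemma G -/
lemma cent_index (hp : IsPGroup p P) {c v : P} (hcc : ∀ x, x * c = c * x) (hcp : c ^ p = 1)
    (hv : ∀ x : P, ∃ w ∈ Subgroup.zpowers c, x⁻¹ * v * x = v * w) (hnc : ∃ x, x * v ≠ v * x) :
    (Subgroup.centralizer {v}).Normal ∧ (Subgroup.centralizer {v}).index = p := by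
  have hcz : ∀ w ∈ Subgroup.zpowers c, ∀ x, x * w = w * x := by
    rintro w ⟨j, rfl⟩ x
    exact (show Commute x c from hcc x).zpow_right j
  choose w hw hwx using hv
  let f : P →* Subgroup.zpowers c := MonoidHom.mk' (fun x => ⟨w x, hw x⟩) (by
    intro a b
    apply Subtype.ext
    change w (a * b) = w a * w b
    have h1 := hwx (a * b)
    have h2 : (a * b)⁻¹ * v * (a * b) = b⁻¹ * (a⁻¹ * v * a) * b := by group
    have h3 : b⁻¹ * (v * w a) * b = (b⁻¹ * v * b) * w a := by
      rw [mul_assoc, mul_assoc, mul_assoc, mul_assoc, ← hcz _ (hw a)]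
    rw [h2, hwx a, h3, hwx b, mul_assoc] at h1
    rw [hcz _ (hw b)]
    exact (mul_left_cancel h1).symm)
  have hk : f.ker = Subgroup.centralizer {v} := by
    ext x
    rw [MonoidHom.mem_ker, Subgroup.mem_centralizer_singleton_iff]
    have : f x = 1 ↔ w x = 1 := by
      rw [← Subtype.coe_inj]; rfl
    rw [this]
    have h1 := hwx x
    constructor
    · intro h; rw [h, mul_one] at h1
      have := congrArg (x * ·) h1
      simp only [← mul_assoc, mul_inv_cancel, one_mul] at this; first | exact this | exact this.symm
    · intro h
      rw [mul_assoc, show v * x = x * v by first | exact h | exact h.symm] at h1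
      simpa using h1
  refine ⟨hk ▸ inferInstance, ?_⟩
  have h1 : (Subgroup.centralizer {v}).index ∣ p := by
    rw [← hk, Subgroup.index_ker]
    refine dvd_trans (Subgroup.card_subgroup_dvd_card _) ?_
    rw [Nat.card_zpowers]
    exact orderOf_dvd_of_pow_eq_one hcp
  rcases (Nat.dvd_prime Fact.out).mp h1 with h | h
  · exfalso
    rw [Subgroup.index_eq_one] at h
    obtain ⟨x, hx⟩ := hnc
    have : x ∈ Subgroup.centralizer {v} := h ▸ Subgroup.mem_top x
    rw [Subgroup.mem_centralizer_singleton_iff] at this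
    first | exact hx this | exact hx this.symm
  · exact h

end ctx

end RegOrb
namespace RegOrb

structure Ctx2 (p : ℕ) {P : Type*} [Group P] (H K : Subgroup P) (c : P) : Prop extends Ctx p H K where
  c1 : c ≠ 1
  cp : c ^ p = 1
  cc : ∀ x, x * c = c * x
  cM : ∀ M : Subgroup P, M.Normal → M.index = p → H ≤ M → ∀ y, y ∉ M → c ∈ Subgroup.zpowers y
  oM : ∀ M : Subgroup P, M.Normal → M.index = p → H ≤ M → ∀ x, x ^ p = 1 → x ∈ M

section ctx
variable {p : ℕ} [Fact p.Prime] {P : Type*} [Group P] [Finite P] {H K : Subgroup P}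

lemma inf_center (hp : IsPGroup p P) (M : Subgroup P) [M.Normal] (hM : M ≠ ⊥) :
    ∃ c ∈ M, c ≠ 1 ∧ ∀ x, x * c = c * x := by
  have hd : p ∣ Nat.card M := by
    rcases (hp.to_subgroup M).card_eq_or_dvd with h | h
    · exact absurd (Subgroup.card_eq_one.mp h) hM
    · exact h
  obtain ⟨b, hb, hb1⟩ :=
    (hp.of_equiv ConjAct.toConjAct).exists_fixed_point_of_prime_dvd_card_of_fixed_point M hd
      (a := (1 : M)) (fun g => smul_one g)
  refine ⟨b, b.2, fun h => hb1 (Subtype.ext h.symm), fun x => ?_⟩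
  have h := congrArg Subtype.val (hb (ConjAct.toConjAct x))
  have h2 : x * (b : P) * x⁻¹ = b := h
  simpa [mul_assoc] using congrArg (· * x) h2

lemma zpowers_out {M : Subgroup P} {c x : P} (hc : c ^ p = 1) (hp : IsPGroup p P) (hc1 : c ≠ 1)
    (hcx : c ∈ Subgroup.zpowers x) (hx : x ^ p = 1) (hcM : c ∈ M) : x ∈ M := by
  have : x ∈ Subgroup.zpowers c := mem_c_symm hp hx hcx hc1
  exact (Subgroup.zpowers_le.mpr hcM) this

lemma Ctx.toCtx2 (C : Ctx p H K) (hH : H ≠ ⊤) (hnc : ¬ IsCyclic P) : ∃ c, Ctx2 p H K c := by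
  have key : ∀ M : Subgroup P, M.Normal → M.index = p → H ≤ M →
      ∃ c ∈ M, c ≠ 1 ∧ c ^ p = 1 ∧ (∀ x, x * c = c * x) := by
    intro M hn hi hHM
    have hb : M ≠ ⊥ := by
      rintro rfl
      rw [Subgroup.index_bot] at hi
      exact hnc (isCyclic_of_prime_card hi)
    obtain ⟨d, hd, hd1, hdc⟩ := inf_center C.hp M hb
    obtain ⟨n, hn1, hn2⟩ := min_pow C.hp ⊥ (k := d) (by simpa using hd1)
    refine ⟨d ^ n, M.pow_mem hd n, by simpa using hn1, by simpa using hn2, fun x => ?_⟩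
    exact (show Commute x d from hdc x).pow_right n
  have aut : ∀ M : Subgroup P, M.Normal → M.index = p → H ≤ M → ∀ c ∈ M, c ^ p = 1 →
      (∀ x, x * c = c * x) → ∀ y, y ∉ M → c ∈ Subgroup.zpowers y := by
    intro M hn hi hHM c hcM hcp hcc y hy
    apply C.aut M hn hi hHM y hy c hcM (fun m _ => hcc m)
    rw [(show Commute y c from hcc y).mul_pow, hcp, mul_one]
  have oM : ∀ M : Subgroup P, M.Normal → M.index = p → H ≤ M → ∀ x, x ^ p = 1 → x ∈ M := by
    intro M hn hi hHM x hx
    by_contra hxM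
    obtain ⟨c, hcM, hc1, hcp, hcc⟩ := key M hn hi hHM
    exact hxM (zpowers_out hcp C.hp hc1 (aut M hn hi hHM c hcM hcp hcc x hxM) hx hcM)
  obtain ⟨M, hn, hi, hHM⟩ := exists_M C.hp hH
  obtain ⟨c, hcM, hc1, hcp, hcc⟩ := key M hn hi hHM
  exact ⟨c, C, hc1, hcp, hcc, fun M hn hi hHM y hy => aut M hn hi hHM c (oM M hn hi hHM c hcp)
    hcp hcc y hy, oM⟩

lemma mulpow_zpow {k y : P} {r s : ℤ} (h : k⁻¹ * y * k = y ^ r) (n : ℕ) :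
    (k * y ^ s) ^ n = k ^ n * y ^ (s * ∑ i ∈ Finset.range n, r ^ i) := by
  induction n with
  | zero => simp
  | succ n ih =>
    have h1 : ∀ t : ℤ, y ^ t * k = k * y ^ (r * t) := by
      intro t
      have := conj_zpow' k y t
      rw [h, ← zpow_mul] at this
      rw [← this]; group
    rw [pow_succ, ih, geom_sum_succ, mul_assoc, ← mul_assoc (y ^ _) k, h1, mul_assoc, ← zpow_add,
      ← mul_assoc, ← pow_succ]
    congr 2; ring

/-- F6 -/
lemma Ctx2.F6 {c : P} (C : Ctx2 p H K c) (huniq : ∀ x : P, x ^ p = 1 → x ∈ Subgroup.zpowers c)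
    {M : Subgroup P} (hn : M.Normal) (hi : M.index = p) (hHM : H ≤ M) {y k : P} (hy : y ∉ M)
    (hk : k ∉ Subgroup.zpowers y) (hkp : k ^ p ∈ Subgroup.zpowers y) {r : ℤ}
    (hr : k⁻¹ * y * k = y ^ r) (hrr : p = 2 → (4 : ℤ) ∣ r - 1) : False := by
  have hy1 : y ≠ 1 := fun h => hy (h ▸ M.one_mem)
  obtain ⟨i, hii⟩ := hkp
  change y ^ i = k ^ p at hii
  have hpi : (p : ℤ) ∣ i := by
    by_contra hpi
    obtain ⟨s, hs⟩ := exists_inv C.hp y hpi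
    apply hy
    rw [← hs, zpow_mul, hii]
    exact M.zpow_mem (pow_mem_M hn hi k) s
  obtain ⟨j, rfl⟩ := hpi
  obtain ⟨t, ht⟩ := r_mod C.hp hy1 hr
  obtain ⟨w, hw, hS⟩ : ∃ w : ℤ, ¬ (p : ℤ) ∣ w ∧ ∑ i ∈ Finset.range p, r ^ i = p * w := by
    have hpp : Nat.Prime p := Fact.out
    rcases hpp.eq_two_or_odd' with h2 | hodd
    · subst h2
      obtain ⟨q, hq⟩ := hrr rfl
      refine ⟨1 + 2 * q, by push_cast; omega, ?_⟩
      simp [Finset.sum_range_succ]; linarith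
    · have h := odd_sq_dvd_geom_sum₂_sub (R := ℤ) 1 t hodd
      obtain ⟨q, hq⟩ := h
      refine ⟨1 + p * q, ?_, ?_⟩
      · intro hd
        have : (p : ℤ) ∣ 1 := by
          have := dvd_sub hd (dvd_mul_right (p:ℤ) q); simpa using this
        have := Int.natCast_dvd_natCast (m := p) (n := 1) |>.mp (by simpa using this)
        exact hpp.one_lt.ne' (Nat.dvd_one.mp this)
      · have hr' : r = 1 + p * t := by linarith
        rw [hr']
        simp only [one_pow, mul_one] at hq
        linarith
  obtain ⟨s, hs⟩ := exists_inv C.hp y hw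
  have h1 : (k * y ^ (-(s * j))) ^ p = 1 := by
    rw [mulpow_zpow hr, hS, ← hii, ← zpow_add]
    have h2 : (p : ℤ) * j + -(s * j) * (p * w) = p * j - (w * s) * (p * j) := by ring
    rw [h2, zpow_sub, zpow_mul _ (w * s), hs]; simp
  have h2 := huniq _ h1
  have h3 := (Subgroup.zpowers_le.mpr (C.cM M hn hi hHM y hy)) h2
  apply hk
  have := (Subgroup.zpowers y).mul_mem h3 (Subgroup.zpow_mem _ (Subgroup.mem_zpowers y) (s * j))
  simpa using this

end ctx

section two
variable {P : Type*} [Group P] [Finite P] {H K : Subgroup P}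

lemma Ctx2.FIN {c : P} (C : Ctx2 2 H K c) {v : P} (hv : v ^ 2 = c)
    (hconj : ∀ x : P, ∃ w ∈ Subgroup.zpowers c, x⁻¹ * v * x = v * w) (hnc : ∃ x, x * v ≠ v * x)
    (hvH : ∀ h ∈ H, h * v = v * h) : False := by
  obtain ⟨hn, hi⟩ := cent_index C.hp C.cc C.cp hconj hnc
  obtain ⟨x, hx⟩ := hnc
  have hcen : ∀ g, g ∈ Subgroup.centralizer {v} ↔ g * v = v * g := fun g => by
    rw [Subgroup.mem_centralizer_singleton_iff]
  obtain ⟨w, hw, hxw⟩ := hconj x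
  have hvx : v * x = x * (v * w) := by rw [← hxw]; group
  have hwc : w = c := by
    rcases zp_two C.cp hw with h | h
    · rw [h, mul_one] at hvx; exact absurd hvx.symm hx
    · exact h
  subst hwc
  have h1 : v ∈ Subgroup.zpowers x := by
    refine C.aut _ hn hi (fun h hh => (hcen h).mpr (hvH h hh)) x (fun h => hx ((hcen x).mp h)) v
      ((hcen v).mpr rfl) (fun m hm => (hcen m).mp hm) ?_
    have : (x * v) ^ 2 = x * (v * x) * v := by rw [pow_two]; group
    rw [this, hvx]
    have h3 := C.cp
    calc x * (x * (v * w)) * v = x * x * (v * (w * v)) := by group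
      _ = x * x * (v * (v * w)) := by rw [C.cc v]
      _ = x * x * (v ^ 2 * w) := by simp only [pow_two, mul_assoc]
      _ = x ^ 2 := by rw [hv, ← pow_two w, h3, ← pow_two, mul_one]
  exact hx (comm_of_mem h1).symm

lemma four_pow {c y : P} (hp : IsPGroup 2 P) (hc : c ∈ Subgroup.zpowers y) (hc2 : c ^ 2 = 1)
    (hy : y ^ 4 ≠ 1) : ∃ s : ℤ, (y ^ (2 * s)) ^ 2 = c := by
  obtain ⟨n, rfl⟩ := hc
  change (y ^ n) ^ 2 = 1 at hc2
  have : Fact (Nat.Prime 2) := ⟨Nat.prime_two⟩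
  obtain ⟨a, ha⟩ := ord_pow hp y
  have h3 : 3 ≤ a := by
    by_contra h
    apply hy
    rw [← orderOf_dvd_iff_pow_eq_one, ha]
    exact pow_dvd_pow 2 (show a ≤ 2 by omega)
  have h8 : (8 : ℤ) ∣ n * 2 := by
    rw [← zpow_natCast, ← zpow_mul, ← orderOf_dvd_iff_zpow_eq_one, ha] at hc2
    refine dvd_trans ?_ hc2
    exact_mod_cast pow_dvd_pow 2 h3
  obtain ⟨s, hs⟩ : (4 : ℤ) ∣ n := by omega
  refine ⟨s, ?_⟩
  change _ = y ^ n
  rw [← zpow_natCast, ← zpow_mul, hs]; congr 1; push_cast; ring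

end two
end RegOrb
namespace RegOrb
section ctx
variable {p : ℕ} [Fact p.Prime] {P : Type*} [Group P] [Finite P] {H K : Subgroup P}

lemma conj_all {M : Subgroup P} {y : P} (hy : y ∉ M) {c v : P} (hcc : ∀ x, x * c = c * x)
    (h : ∀ y, y ∉ M → ∃ w ∈ Subgroup.zpowers c, y⁻¹ * v * y = v * w) (x : P) :
    ∃ w ∈ Subgroup.zpowers c, x⁻¹ * v * x = v * w := by
  have hcz : ∀ w ∈ Subgroup.zpowers c, ∀ x, x * w = w * x := by
    rintro w ⟨j, rfl⟩ x
    exact (show Commute x c from hcc x).zpow_right j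
  let S : Subgroup P :=
    { carrier := {x | ∃ w ∈ Subgroup.zpowers c, x⁻¹ * v * x = v * w}
      one_mem' := ⟨1, Subgroup.one_mem _, by simp⟩
      mul_mem' := by
        rintro a b ⟨w, hw, h1⟩ ⟨w', hw', h2⟩
        refine ⟨w' * w, Subgroup.mul_mem _ hw' hw, ?_⟩
        calc (a * b)⁻¹ * v * (a * b) = b⁻¹ * (a⁻¹ * v * a) * b := by group
          _ = b⁻¹ * v * (w * b) := by rw [h1]; group
          _ = (b⁻¹ * v * b) * w := by rw [← hcz w hw b]; group
          _ = v * (w' * w) := by rw [h2]; group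
      inv_mem' := by
        rintro a ⟨w, hw, h1⟩
        refine ⟨w⁻¹, Subgroup.inv_mem _ hw, ?_⟩
        have h2 : v = a * v * a⁻¹ * w := by
          calc v = a * (a⁻¹ * v * a) * a⁻¹ := by group
            _ = a * v * (w * a⁻¹) := by rw [h1]; group
            _ = a * v * a⁻¹ * w := by rw [← hcz w hw]; group
        rw [inv_inv]
        nth_rewrite 2 [h2]
        group }
  exact out_gen hy S h x

lemma Ctx2.F4pre {c : P} (C : Ctx2 p H K c) (hH : H ≠ ⊤) {u : P} (hu : u ^ p = 1)
    (huc : u ∉ Subgroup.zpowers c) :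
    (∀ k ∈ K, k * u = u * k) ∧ (∀ x : P, ∃ w ∈ Subgroup.zpowers c, x⁻¹ * u * x = u * w) ∧
    (∃ x, x * u ≠ u * x) := by
  have hu1 : u ≠ 1 := fun h => huc (h ▸ Subgroup.one_mem _)
  have hK : ∀ k ∈ K, k * u = u * k := by
    intro k hk
    obtain ⟨n, hn⟩ := C.conj k hk u
    obtain ⟨t, ht⟩ := r_mod C.hp hu1 hn
    have h1 : n = 1 + p * t := by linarith
    rw [h1, zpow_add, zpow_mul, zpow_natCast, hu, one_zpow, zpow_one, mul_one] at hn
    have h2 := congrArg (k * ·) hn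
    simp only [← mul_assoc, mul_inv_cancel, one_mul] at h2
    exact h2.symm
  have huK : u ∈ K := C.cent (fun h hh => hK h (C.HK hh))
  obtain ⟨M, hn, hi, hHM⟩ := exists_M C.hp hH
  obtain ⟨y, hy⟩ := index_out hi
  refine ⟨hK, ?_, ?_⟩
  · apply conj_all hy C.cc
    intro y hy
    refine ⟨u⁻¹ * (y⁻¹ * u * y), ?_, by group⟩
    apply mem_c C.hp C.c1 C.cp (C.cM M hn hi hHM y hy)
    · obtain ⟨n, hn⟩ := C.conj u huK y
      have : u⁻¹ * (y⁻¹ * u * y) = (u⁻¹ * y * u)⁻¹ * y := by group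
      rw [this, hn]
      exact Subgroup.mul_mem _ (Subgroup.inv_mem _ (Subgroup.zpow_mem _ (Subgroup.mem_zpowers y) n))
        (Subgroup.mem_zpowers y)
    · have hcm : Commute (y⁻¹ * u * y) u := hK _ (C.Kn u huK y)
      have h3 : (y⁻¹ * u * y) ^ p = 1 := by
        have := conj_zpow' y u p
        rw [zpow_natCast, zpow_natCast, hu] at this
        rw [← this]; group
      rw [(hcm.symm.inv_left).mul_pow, h3, inv_pow, hu]; simp
  · by_contra! hc
    apply huc
    have h1 : u ∈ Subgroup.zpowers y := by
      apply C.aut M hn hi hHM y hy u (C.oM M hn hi hHM u hu) (fun m _ => hc m)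
      rw [(show Commute y u from hc y).mul_pow, hu, mul_one]
    exact mem_c C.hp C.c1 C.cp (C.cM M hn hi hHM y hy) h1 hu

lemma mulpow_choose {y u w : P} (hwc : ∀ x, x * w = w * x) (h : y⁻¹ * u * y = u * w) (n : ℕ) :
    (y * u) ^ n = y ^ n * u ^ n * w ^ (n.choose 2) := by
  have hw : ∀ (m : ℕ) (x : P), x * w ^ m = w ^ m * x := fun m x =>
    (show Commute x w from hwc x).pow_right m
  have h1 : ∀ n : ℕ, u ^ n * y = y * u ^ n * w ^ n := by
    intro n
    have h2 := conj_zpow' y u n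
    rw [h, zpow_natCast, zpow_natCast, (show Commute u w from hwc u).mul_pow] at h2
    rw [mul_assoc, ← h2]; group
  induction n with
  | zero => simp
  | succ n ih =>
    rw [pow_succ, ih, Nat.choose_succ_succ, Nat.choose_one_right]
    calc y ^ n * u ^ n * w ^ n.choose 2 * (y * u)
        = y ^ n * u ^ n * (w ^ n.choose 2 * (y * u)) := by group
      _ = y ^ n * (u ^ n * y) * u * w ^ n.choose 2 := by rw [← hw]; group
      _ = y ^ n * (y * u ^ n) * (w ^ n * u) * w ^ n.choose 2 := by rw [h1]; group
      _ = y ^ n * (y * u ^ n) * (u * w ^ n) * w ^ n.choose 2 := by rw [hw n u]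
      _ = _ := by rw [pow_succ, pow_succ, pow_add]; simp only [mul_assoc]

lemma Ctx2.F4odd {c : P} (C : Ctx2 p H K c) (hH : H ≠ ⊤) (hodd : p ≠ 2) (u : P) (hu : u ^ p = 1) :
    u ∈ Subgroup.zpowers c := by
  by_contra huc
  obtain ⟨hK, hconj, hnc⟩ := C.F4pre hH hu huc
  obtain ⟨hn, hi⟩ := cent_index C.hp C.cc C.cp hconj hnc
  obtain ⟨x, hx⟩ := hnc
  have hcen : ∀ g, g ∈ Subgroup.centralizer {u} ↔ g * u = u * g := fun g => by
    rw [Subgroup.mem_centralizer_singleton_iff]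
  obtain ⟨w, hw, hxw⟩ := hconj x
  have hwc : ∀ x, x * w = w * x := by
    obtain ⟨j, rfl⟩ := hw
    exact fun x => (show Commute x c from C.cc x).zpow_right j
  have hpp : p.Prime := Fact.out
  have h1 : u ∈ Subgroup.zpowers x := by
    refine C.aut _ hn hi (fun h hh => (hcen h).mpr (hK h (C.HK hh))) x
      (fun h => hx ((hcen x).mp h)) u ((hcen u).mpr rfl) (fun m hm => (hcen m).mp hm) ?_
    rw [mulpow_choose hwc hxw, hu, mul_one]
    obtain ⟨t, ht⟩ : p ∣ p.choose 2 := hpp.dvd_choose_self (by norm_num)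
      (lt_of_le_of_ne hpp.two_le (Ne.symm hodd))
    rw [ht, pow_mul, mem_c_pow C.cp hw, one_pow, mul_one]
  exact hx (comm_of_mem h1).symm

end ctx
end RegOrb
namespace RegOrb
section two
variable {P : Type*} [Group P] [Finite P] {H K : Subgroup P}

lemma comm_of_conj {k q : P} (h : k⁻¹ * q * k = q) : k * q = q * k := by
  nth_rewrite 1 [← h]; group

lemma conj_of_comm {k q : P} (h : k * q = q * k) : k⁻¹ * q * k = q := by
  rw [mul_assoc, ← h]; group

lemma Ctx.D1 (C : Ctx 2 H K) {k y : P} (hk : k ∈ K) {r : ℤ} (hr : k⁻¹ * y * k = y ^ r)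
    (h2 : (2 : ℤ) ∣ r - 1) (h4 : ¬ (4 : ℤ) ∣ r - 1) :
    y ^ 2 ∈ K ∧ y ^ 8 = 1 ∧ y ^ 4 ∈ Subgroup.zpowers k := by
  have : Fact (Nat.Prime 2) := ⟨Nat.prime_two⟩
  obtain ⟨t, ht⟩ := h2
  have hr' : r = 1 + 2 * t := by linarith
  have hto : ¬ ((2 : ℕ) : ℤ) ∣ t := by push_cast; omega
  have hto2 : ¬ ((2 : ℕ) : ℤ) ∣ t * t := by
    intro h
    rcases (Nat.prime_iff_prime_int.mp Nat.prime_two).dvd_or_dvd h with h | h <;> exact hto h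
  have hy2 : y ^ 2 ∈ K := by
    obtain ⟨s, hs⟩ := exists_inv C.hp (y ^ 2) hto
    have h1 : (y ^ 2) ^ t = (y⁻¹ * k * y)⁻¹ * k := by
      have : (y⁻¹ * k * y)⁻¹ * k = y⁻¹ * (k⁻¹ * y * k) := by group
      rw [this, hr, hr', zpow_add, zpow_mul]; simp
    rw [← hs, zpow_mul, h1]
    exact K.zpow_mem (K.mul_mem (K.inv_mem (C.Kn k hk y)) hk) s
  have hyr : k⁻¹ * y ^ 2 * k = (y ^ 2) ^ r := by
    have := conj_zpow' k y 2
    rw [hr] at this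
    norm_cast at this
    rw [this, ← zpow_natCast, ← zpow_natCast, ← zpow_mul, ← zpow_mul, mul_comm]
  have hmem : (y ^ 2) ^ (2 * t) ∈ Subgroup.zpowers k := by
    obtain ⟨n, hn⟩ := C.conj _ hy2 k
    have h1 : (y ^ 2) ^ (2 * t) = ((y ^ 2)⁻¹ * k * (y ^ 2))⁻¹ * k := by
      have : ((y ^ 2)⁻¹ * k * (y ^ 2))⁻¹ * k = (y ^ 2)⁻¹ * (k⁻¹ * y ^ 2 * k) := by group
      rw [this, hyr, hr', zpow_add, zpow_one]; simp
    rw [h1, hn]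
    exact Subgroup.mul_mem _ (Subgroup.inv_mem _ (Subgroup.zpow_mem _ (Subgroup.mem_zpowers k) n))
        (Subgroup.mem_zpowers k)
  have e4 : (y ^ 2) ^ (2 * t) = (y ^ 4) ^ t := by
    rw [zpow_mul]; norm_cast; rw [← pow_mul]
  refine ⟨hy2, ?_, ?_⟩
  · have h1 := conj_of_comm (comm_of_mem hmem).symm
    rw [conj_zpow', hyr, ← zpow_mul, hr', show (1 + 2 * t) * (2 * t) = 2 * t + 4 * (t * t) by ring,
      zpow_add, mul_eq_left] at h1
    have h3 := zpow_cancel C.hp hto2 h1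
    norm_cast at h3
    rwa [← pow_mul] at h3
  · obtain ⟨s, hs⟩ := exists_inv C.hp (y ^ 4) hto
    rw [← hs, zpow_mul, ← e4]
    exact Subgroup.zpow_mem _ hmem s

lemma zpow_eq_of_dvd {x : P} {n : ℕ} (hx : x ^ n = 1) {i j : ℤ} (h : (n : ℤ) ∣ i - j) :
    x ^ i = x ^ j := by
  obtain ⟨t, ht⟩ := h
  have : i = j + n * t := by linarith
  rw [this, zpow_add, zpow_mul, zpow_natCast, hx]; simp

lemma Ctx2.F4two {c : P} (C : Ctx2 2 H K c) (hH : H ≠ ⊤) (u : P) (hu : u ^ 2 = 1) :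
    u ∈ Subgroup.zpowers c := by
  have : Fact (Nat.Prime 2) := ⟨Nat.prime_two⟩
  by_contra huc
  obtain ⟨hK, hconj, hnc⟩ := C.F4pre hH hu huc
  obtain ⟨hn, hi⟩ := cent_index C.hp C.cc C.cp hconj hnc
  obtain ⟨y0, hy0⟩ := hnc
  have hcen : ∀ g, g ∈ Subgroup.centralizer {u} ↔ g * u = u * g := fun g => by
    rw [Subgroup.mem_centralizer_singleton_iff]
  have hHM : H ≤ Subgroup.centralizer {u} := fun h hh => (hcen h).mpr (hK h (C.HK hh))
  have hcp := C.cp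
  have hout : ∀ y, y * u ≠ u * y → u * y = y * (u * c) := by
    intro y hy
    obtain ⟨w, hw, hyw⟩ := hconj y
    have h1 : u * y = y * (u * w) := by rw [← hyw]; group
    rcases zp_two C.cp hw with h | h
    · rw [h, mul_one] at h1; exact absurd h1.symm hy
    · rw [← h]; exact h1
  -- a
  have ha : ∀ z, (∀ x, x * z = z * x) → z ^ 2 ≠ c := by
    intro z hz hzc
    have h1 : z * u ∈ Subgroup.zpowers y0 := by
      refine C.aut _ hn hi hHM y0 (fun h => hy0 ((hcen y0).mp h)) (z * u)
        ((hcen _).mpr (by rw [mul_assoc, ← mul_assoc u z, hz u, mul_assoc])) (fun m hm => ?_) ?_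
      · rw [← mul_assoc, hz, mul_assoc, (hcen m).mp hm, mul_assoc]
      · calc (y0 * (z * u)) ^ 2 = y0 * z * (u * y0) * (z * u) := by simp only [pow_two, mul_assoc]
          _ = y0 * z * (y0 * (u * c)) * (z * u) := by rw [hout y0 hy0]
          _ = y0 * (z * y0) * (u * (c * z) * u) := by simp only [mul_assoc]
          _ = y0 * (y0 * z) * (u * (z * c) * u) := by rw [hz y0, C.cc z]
          _ = y0 * y0 * (z * (u * z) * (c * u)) := by simp only [mul_assoc]
          _ = y0 * y0 * (z * (z * u) * (u * c)) := by rw [hz u, C.cc u]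
          _ = y0 ^ 2 * (z ^ 2 * u ^ 2 * c) := by simp only [pow_two, mul_assoc]
          _ = y0 ^ 2 := by rw [hzc, hu, mul_one, ← pow_two, hcp, mul_one]
    apply hy0
    have h2 := comm_of_mem h1
    rw [mul_assoc, ← mul_assoc y0, hz y0, mul_assoc] at h2
    exact (mul_left_cancel h2).symm
  -- b
  have hb : ∀ y, y * u ≠ u * y → y ^ 4 ≠ 1 := by
    intro y hy h4
    have hyM : y ∉ Subgroup.centralizer {u} := fun h => hy ((hcen y).mp h)
    have h1 : y ^ 2 ∈ Subgroup.zpowers c := by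
      apply mem_c C.hp C.c1 C.cp (C.cM _ hn hi hHM y hyM)
        (Subgroup.pow_mem _ (Subgroup.mem_zpowers y) 2)
      rw [← pow_mul]; exact h4
    rcases zp_two C.cp h1 with h | h
    · exact hyM (C.oM _ hn hi hHM y h)
    · have h2 : (y * u) ^ 2 = 1 := by
        calc (y * u) ^ 2 = y * (u * y) * u := by simp only [pow_two, mul_assoc]
          _ = y * y * (u * (c * u)) := by rw [hout y hy]; simp only [mul_assoc]
          _ = y ^ 2 * (u ^ 2 * c) := by rw [← C.cc u]; simp only [pow_two, mul_assoc]
          _ = 1 := by rw [h, hu, one_mul, ← pow_two, hcp]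
      have h3 := (hcen _).mp (C.oM _ hn hi hHM _ h2)
      apply hy
      rw [← mul_assoc] at h3
      exact mul_right_cancel h3
  -- c
  have hc4 : ∀ y, y * u ≠ u * y → ∀ k ∈ K, ∀ r : ℤ, k⁻¹ * y * k = y ^ r → (4 : ℤ) ∣ r - 1 := by
    intro y hy k hk r hr
    by_contra h4
    have hy1 : y ≠ 1 := by rintro rfl; simp at hy
    have hyM : y ∉ Subgroup.centralizer {u} := fun h => hy ((hcen y).mp h)
    have h2 : (2 : ℤ) ∣ r - 1 := by exact_mod_cast r_mod C.hp hy1 hr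
    obtain ⟨hy2, hy8, hy4⟩ := C.toCtx.D1 hk hr h2 h4
    have hyc : y ^ 4 = c := by
      have h1 : y ^ 4 ∈ Subgroup.zpowers c := by
        apply mem_c C.hp C.c1 C.cp (C.cM _ hn hi hHM y hyM)
          (Subgroup.pow_mem _ (Subgroup.mem_zpowers y) 4)
        rw [← pow_mul]; exact hy8
      rcases zp_two C.cp h1 with h | h
      · exact absurd h (hb y hy)
      · exact h
    rw [hyc] at hy4
    have hk4 : k ^ 4 = 1 := by
      by_contra hk4
      obtain ⟨s, hs⟩ := four_pow C.hp hy4 C.cp hk4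
      have hq4 : (y ^ 2) ^ 4 = 1 := by rw [← pow_mul]; exact hy8
      have hq : k⁻¹ * y ^ 2 * k = (y ^ 2) ^ (-1 : ℤ) := by
        have := conj_zpow' k y 2
        rw [hr] at this
        norm_cast at this
        rw [this, ← zpow_natCast, ← zpow_natCast, ← zpow_mul, ← zpow_mul]
        apply zpow_eq_of_dvd hy8
        push_cast; omega
      have hk2 : k ^ 2 * y ^ 2 = y ^ 2 * k ^ 2 := by
        apply comm_of_conj
        rw [conj_iter hq 2]; simp
      have htq : k ^ (2 * s) * y ^ 2 = y ^ 2 * k ^ (2 * s) := by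
        rw [zpow_mul]; norm_cast
        exact (show Commute (k ^ 2) (y ^ 2) from hk2).zpow_left s
      have hx2 : (k ^ (2 * s) * y ^ 2) ^ 2 = 1 := by
        rw [(show Commute _ _ from htq).mul_pow, hs, ← pow_mul, hyc, ← pow_two, hcp]
      have hx1 : k ^ (2 * s) * y ^ 2 ≠ 1 := by
        intro h
        have h1 : y ^ 2 = k ^ (-(2 * s)) := by rw [zpow_neg]; exact (inv_eq_of_mul_eq_one_right h).symm
        have h3 : k * y ^ 2 = y ^ 2 * k := by
          rw [h1]; exact (Commute.refl k).zpow_right _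
        rw [conj_of_comm h3, zpow_neg, zpow_one, eq_inv_iff_mul_eq_one, ← pow_two, ← pow_mul] at hq
        exact hb y hy hq
      obtain ⟨n, hn'⟩ := C.conj k hk (k ^ (2 * s) * y ^ 2)
      have hno := r_mod C.hp hx1 hn'
      rw [zpow_eq_of_dvd hx2 hno, zpow_one] at hn'
      have h5 : k⁻¹ * (k ^ (2 * s) * y ^ 2) * k = k ^ (2 * s) * (k⁻¹ * y ^ 2 * k) := by group
      rw [h5, hq] at hn'
      have h6 := mul_left_cancel hn'
      rw [zpow_neg, zpow_one, inv_eq_iff_mul_eq_one, ← pow_two, ← pow_mul] at h6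
      exact hb y hy h6
    have hky : (k * y) * u ≠ u * (k * y) := by
      intro h
      rw [← mul_assoc, ← hK k hk, mul_assoc, mul_assoc] at h
      exact hy (mul_left_cancel h)
    apply hb _ hky
    have h1 := mulpow_zpow (s := 1) hr 2
    simp only [zpow_one, one_mul, Finset.sum_range_succ, Finset.sum_range_zero, pow_zero, pow_one,
      zero_add] at h1
    obtain ⟨e, he⟩ : (4 : ℤ) ∣ 1 + r := by omega
    have h2 : (k * y) ^ 2 = k ^ 2 * c ^ e := by
      rw [h1, he, zpow_mul, ← hyc]; norm_cast
    rw [show 4 = 2 * 2 by rfl, pow_mul, h2,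
      (show Commute (k ^ 2) (c ^ e) from (show Commute (k^2) c from C.cc _).zpow_right e).mul_pow,
      ← pow_mul, hk4, one_mul]
    exact mem_c_pow C.cp (Subgroup.zpow_mem _ (Subgroup.mem_zpowers c) e)
  -- d
  obtain ⟨s, hs⟩ := four_pow C.hp (C.cM _ hn hi hHM y0 (fun h => hy0 ((hcen y0).mp h))) C.cp (hb y0 hy0)
  set z := y0 ^ (2 * s) with hz
  have hz4 : z ^ 4 = 1 := by rw [show 4 = 2 * 2 by rfl, pow_mul, hs, hcp]
  have hzK' : ∀ k ∈ K, k * z = z * k := by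
    intro k hk
    obtain ⟨r, hr⟩ := C.conj k hk y0
    have h4 := hc4 y0 hy0 k hk r hr
    apply comm_of_conj
    rw [hz, conj_zpow', hr, ← zpow_mul, mul_comm, zpow_mul, ← hz]
    nth_rewrite 2 [← zpow_one z]
    exact zpow_eq_of_dvd hz4 h4
  have hzH : ∀ h ∈ H, h * z = z * h := fun h hh => hzK' h (C.HK hh)
  have hzK : z ∈ K := C.cent hzH
  refine C.FIN hs ?_ ?_ hzH
  · apply conj_all (M := Subgroup.centralizer {u}) (fun h => hy0 ((hcen y0).mp h)) C.cc
    intro y hy'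
    have hy : y * u ≠ u * y := fun h => hy' ((hcen y).mpr h)
    obtain ⟨r, hr⟩ := C.conj z hzK y
    obtain ⟨q, hq⟩ := hc4 y hy z hzK r hr
    have h1 := conj_iter hr 2
    rw [hs, mul_assoc, C.cc y] at h1
    have h2 : y ^ (((r - 1) * 2) * (1 + 2 * q)) = 1 := by
      have e : ((r - 1) * 2) * (1 + 2 * q) = r ^ 2 - 1 := by
        have : r = 1 + 4 * q := by linarith
        rw [this]; ring
      rw [e, zpow_sub, ← h1]; simp
    have h3 := zpow_cancel C.hp (by push_cast; omega) h2
    refine ⟨y ^ (1 - r), ?_, ?_⟩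
    · apply mem_c C.hp C.c1 C.cp (C.cM _ hn hi hHM y hy')
        (Subgroup.zpow_mem _ (Subgroup.mem_zpowers y) _)
      rw [← zpow_natCast, ← zpow_mul, ← neg_sub, neg_mul, zpow_neg]
      push_cast; rw [h3]; simp
    · have h5 : y⁻¹ * z * y = z * ((z⁻¹ * y * z)⁻¹ * y) := by group
      rw [h5, hr, ← zpow_neg, sub_eq_neg_add, zpow_add, zpow_one]
  · by_contra! h
    exact ha z h hs

end two
end RegOrb
namespace RegOrb
section two
variable {P : Type*} [Group P] [Finite P] {H K : Subgroup P}

lemma mem_four {a c x : P} (ha : a ^ 2 = c) (hc : c ^ 2 = 1) (hx : x ∈ Subgroup.zpowers a) :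
    x ∈ Subgroup.zpowers c ∨ ∃ w ∈ Subgroup.zpowers c, x = a * w := by
  obtain ⟨j, rfl⟩ := hx
  change a ^ j ∈ _ ∨ ∃ w ∈ _, a ^ j = _
  rcases Int.even_or_odd' j with ⟨m, rfl | rfl⟩
  · left; rw [zpow_mul]; norm_cast; rw [ha]; exact Subgroup.zpow_mem _ (Subgroup.mem_zpowers c) m
  · right
    refine ⟨c ^ m, Subgroup.zpow_mem _ (Subgroup.mem_zpowers c) m, ?_⟩
    rw [add_comm, zpow_add, zpow_mul]; norm_cast; rw [ha]; simp

lemma Ctx2.Q8K {c : P} (C : Ctx2 2 H K c) (huniq : ∀ x : P, x ^ 2 = 1 → x ∈ Subgroup.zpowers c)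
    {M : Subgroup P} (hn : M.Normal) (hi : M.index = 2) (hHM : H ≤ M) {a b : P} (haM : a ∉ M)
    (hbK : b ∈ K) (ha : a ^ 2 = c) (hb : b ^ 2 = c) (hab : b⁻¹ * a * b = a⁻¹)
    (haK : a ∈ K) (hbM : b ∈ M)
    (hcent : ∀ k ∈ K, k * a = a * k → k ∈ Subgroup.zpowers a)
    (hcov : ∀ k ∈ K, k ∈ Subgroup.zpowers a ∨ k * b ∈ Subgroup.zpowers a) : False := by
  have : Fact (Nat.Prime 2) := ⟨Nat.prime_two⟩
  have hcp := C.cp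
  have hcz : ∀ w ∈ Subgroup.zpowers c, ∀ x, x * w = w * x := by
    rintro w ⟨j, rfl⟩ x
    exact (show Commute x c from C.cc x).zpow_right j
  have ha4 : a ^ 4 = 1 := by rw [show 4 = 2 * 2 by rfl, pow_mul, ha, hcp]
  have hb4 : b ^ 4 = 1 := by rw [show 4 = 2 * 2 by rfl, pow_mul, hb, hcp]
  have ha1 : a ≠ 1 := fun h => haM (h ▸ M.one_mem)
  have hb1 : b ≠ 1 := by rintro rfl; simp at hb; exact C.c1 hb.symm
  have hcM : Subgroup.zpowers c ≤ M := by
    rw [Subgroup.zpowers_le, ← ha]; exact pow_mem_M hn hi a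
  have hcb : Subgroup.zpowers c ≤ Subgroup.zpowers b := by
    rw [Subgroup.zpowers_le, ← hb]; exact Subgroup.pow_mem _ (Subgroup.mem_zpowers b) 2
  have hba : a * b ≠ b * a := by
    intro h
    rw [mul_assoc, h] at hab
    simp at hab
    rw [eq_inv_iff_mul_eq_one, ← pow_two, ha] at hab
    exact C.c1 hab
  have hMa : ∀ x ∈ M, x ∈ Subgroup.zpowers a → x ∈ Subgroup.zpowers c := by
    intro x hxM hx
    rcases mem_four ha hcp hx with h | ⟨w, hw, rfl⟩
    · exact h
    · exact absurd ((M.mul_mem_cancel_right (hcM hw)).mp hxM) haM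
  have hHc : ∀ h ∈ H, h ∈ Subgroup.zpowers c ∨ h * b ∈ Subgroup.zpowers c := by
    intro h hh
    rcases hcov h (C.HK hh) with h1 | h1
    · exact Or.inl (hMa _ (hHM hh) h1)
    · exact Or.inr (hMa _ (M.mul_mem (hHM hh) hbM) h1)
  have hHb : H ≤ Subgroup.zpowers b := by
    intro h hh
    rcases hHc h hh with h1 | h1
    · exact hcb h1
    · exact (Subgroup.mul_mem_cancel_right _ (Subgroup.mem_zpowers b)).mp (hcb h1)
  have hoddK : ∀ k ∈ K, ∃ w ∈ Subgroup.zpowers c, k⁻¹ * b * k = b * w := by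
    intro k hk
    obtain ⟨n, hn⟩ := C.conj k hk b
    obtain ⟨t, ht⟩ := r_mod C.hp hb1 hn
    refine ⟨c ^ t, Subgroup.zpow_mem _ (Subgroup.mem_zpowers c) t, ?_⟩
    rw [hn, show n = 1 + (2 : ℕ) * t by linarith, zpow_add, zpow_mul, zpow_natCast, hb, zpow_one]
  have hall : ∀ x, ∃ w ∈ Subgroup.zpowers c, x⁻¹ * b * x = b * w := by
    by_contra! hx0
    obtain ⟨x0, hx0⟩ := hx0
    have hx0K : x0 ∉ K := by
      intro h
      obtain ⟨w, hw, h2⟩ := hoddK x0 h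
      exact hx0 w hw h2
    have hbH : b ∈ H := by
      by_contra hbH
      apply hx0K
      apply C.cent
      intro h hh
      rcases hHc h hh with h1 | h1
      · exact (hcz _ h1 _).symm
      · exfalso
        apply hbH
        rcases zp_two hcp h1 with h2 | h2
        · have : b = h⁻¹ := (inv_eq_of_mul_eq_one_right h2).symm
          rw [this]; exact H.inv_mem hh
        · have h3 : h = b := by
            rw [← hb, pow_two] at h2; exact mul_right_cancel h2
          rw [← h3]; exact hh
    have hNK : ∀ g, (∃ w ∈ Subgroup.zpowers c, g⁻¹ * b * g = b * w) → g ∈ K := by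
      rintro g ⟨w, hw, hg⟩
      apply C.norm
      intro h hh
      obtain ⟨j, rfl⟩ := hHb hh
      change g⁻¹ * b ^ j * g ∈ H
      rw [conj_zpow', hg]
      refine H.zpow_mem (H.mul_mem hbH ?_) j
      exact Subgroup.zpowers_le.mpr hbH (hcb hw)
    obtain ⟨m, hw1, hw2⟩ := min_pow C.hp K hx0K
    set w := x0 ^ m
    have hsq : ∀ k ∈ K, k ^ 2 ∈ Subgroup.zpowers c := by
      intro k hk
      have hz : ∀ x ∈ Subgroup.zpowers a, x ^ 2 ∈ Subgroup.zpowers c := by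
        rintro x ⟨j, rfl⟩
        change (a ^ j) ^ 2 ∈ _
        rw [← zpow_natCast, ← zpow_mul, mul_comm, zpow_mul, zpow_natCast, ha]
        exact Subgroup.zpow_mem _ (Subgroup.mem_zpowers c) j
      have h1 : k ^ 2 ∈ Subgroup.zpowers a := by
        apply hcent _ (K.pow_mem hk 2)
        apply comm_of_conj
        obtain ⟨n, hn⟩ := C.conj k hk a
        obtain ⟨t, ht⟩ := r_mod C.hp ha1 hn
        rw [conj_iter hn 2]
        nth_rewrite 2 [← zpow_one a]
        apply zpow_eq_of_dvd ha4
        push_cast at ht ⊢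
        rw [show n = 1 + 2 * t by linarith]
        exact ⟨t + t * t, by ring⟩
      rcases mem_four ha hcp h1 with h | ⟨v, hv, h2⟩
      · exact h
      · apply hz
        apply hcent k hk
        have h3 : a = k ^ 2 * v⁻¹ := by rw [h2]; group
        rw [h3]
        have hvk : Commute k v := hcz v hv k
        exact ((Commute.refl k).pow_right 2).mul_right hvk.inv_right
    have hw1' : w ≠ 1 := fun h => hw1 (h ▸ K.one_mem)
    obtain ⟨n, hn'⟩ := C.conj b hbK w
    obtain ⟨t, ht⟩ := r_mod C.hp hw1' hn'
    set d := b⁻¹ * (w⁻¹ * b * w) with hd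
    have hdw : d = (w ^ 2) ^ (-t) := by
      have h1 : d = (b⁻¹ * w * b)⁻¹ * w := by rw [hd]; group
      rw [h1, hn', show n = 1 + (2 : ℕ) * t by linarith, zpow_add, zpow_mul, zpow_natCast]
      simp
    have hdc : d ∉ Subgroup.zpowers c := by
      intro h
      exact hw1 (hNK w ⟨d, h, by rw [hd]; group⟩)
    have hw4 := hsq _ hw2
    -- t odd
    have hdw2 : w ^ 2 * d⁻¹ ∈ Subgroup.zpowers c := by
      rw [hdw, zpow_neg, inv_inv]
      rcases Int.even_or_odd' t with ⟨e, he | he⟩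
      · exfalso; apply hdc
        rw [hdw, he, show -(2 * e) = ((2 : ℕ) : ℤ) * (-e) by push_cast; ring, zpow_mul, zpow_natCast]
        exact Subgroup.zpow_mem _ hw4 _
      · rw [he, ← zpow_one_add, show 1 + (2 * e + 1) = ((2 : ℕ) : ℤ) * (e + 1) by push_cast; ring,
          zpow_mul, zpow_natCast]
        exact Subgroup.zpow_mem _ hw4 _
    have hbd : b * d = w⁻¹ * b * w := by rw [hd]; group
    have hbd2 : (b * d) * (b * d) = c := by
      rw [hbd]
      calc w⁻¹ * b * w * (w⁻¹ * b * w) = w⁻¹ * (b ^ 2) * w := by rw [pow_two]; group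
        _ = c := by rw [hb]; exact conj_of_comm (C.cc w)
    have ht2 : (w * b) ^ 2 ∈ Subgroup.zpowers c := by
      have : (w * b) ^ 2 = w ^ 2 * d⁻¹ * c := by
        calc (w * b) ^ 2 = w ^ 2 * (w⁻¹ * b * w) * b := by simp only [pow_two]; group
          _ = w ^ 2 * ((b * d) * (b * d) * d⁻¹) := by rw [← hbd]; group
          _ = _ := by rw [hbd2, ← C.cc, mul_assoc]
      rw [this]
      exact Subgroup.mul_mem _ hdw2 (Subgroup.mem_zpowers c)
    have htK : w * b ∉ K := fun h => hw1 ((K.mul_mem_cancel_right hbK).mp h)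
    have ht1 : w * b ≠ 1 := fun h => htK (h ▸ K.one_mem)
    obtain ⟨n2, hn2⟩ := C.conj b hbK (w * b)
    obtain ⟨t2, ht2'⟩ := r_mod C.hp ht1 hn2
    set T := w * b
    have hT : b⁻¹ * T * b = T * (T ^ 2) ^ t2 := by
      rw [hn2, show n2 = 1 + (2 : ℕ) * t2 by linarith, zpow_add, zpow_mul, zpow_natCast, zpow_one]
    have hv := Subgroup.zpow_mem _ ht2 t2
    set v := (T ^ 2) ^ t2
    apply htK
    apply hNK
    refine ⟨v⁻¹, Subgroup.inv_mem _ hv, ?_⟩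
    have h1 : T = b * (T * v) * b⁻¹ := by rw [← hT]; group
    have h2 : T * b * v⁻¹ = b * T := by
      nth_rewrite 1 [h1]
      rw [hcz v hv T]
      calc b * (v * T) * b⁻¹ * b * v⁻¹ = b * (v * T) * v⁻¹ := by group
        _ = b * (T * v) * v⁻¹ := by rw [hcz v hv T]
        _ = b * T := by group
    rw [mul_assoc, ← h2]; group
  exact C.FIN hb hall ⟨a, hba⟩ (fun h hh => comm_of_mem (hHb hh))

lemma Ctx2.Q8 {c : P} (C : Ctx2 2 H K c) (huniq : ∀ x : P, x ^ 2 = 1 → x ∈ Subgroup.zpowers c)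
    {M : Subgroup P} (hn : M.Normal) (hi : M.index = 2) (hHM : H ≤ M) {a b : P} (haM : a ∉ M)
    (hbK : b ∈ K) (ha : a ^ 2 = c) (hb : b ^ 2 = c) (hab : b⁻¹ * a * b = a⁻¹) : False := by
  have : Fact (Nat.Prime 2) := ⟨Nat.prime_two⟩
  have hcp := C.cp
  have hcz : ∀ w ∈ Subgroup.zpowers c, ∀ x, x * w = w * x := by
    rintro w ⟨j, rfl⟩ x
    exact (show Commute x c from C.cc x).zpow_right j
  have ha4 : a ^ 4 = 1 := by rw [show 4 = 2 * 2 by rfl, pow_mul, ha, hcp]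
  have ha1 : a ≠ 1 := fun h => haM (h ▸ M.one_mem)
  have hba : a * b ≠ b * a := by
    intro h
    rw [mul_assoc, h] at hab
    simp at hab
    rw [eq_inv_iff_mul_eq_one, ← pow_two, ha] at hab
    exact C.c1 hab
  have hcent : ∀ k ∈ K, k * a = a * k → k ∈ Subgroup.zpowers a := by
    intro k hk hka
    by_contra hk'
    obtain ⟨n, h1, h2⟩ := min_pow C.hp _ hk'
    refine C.F6 huniq hn hi hHM haM h1 h2 (r := 1) ?_ (by simp)
    rw [zpow_one]
    exact conj_of_comm ((show Commute k a from hka).pow_left n)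
  have hcov : ∀ b ∈ K, b⁻¹ * a * b = a⁻¹ → 
      ∀ k ∈ K, k ∈ Subgroup.zpowers a ∨ k * b ∈ Subgroup.zpowers a := by
    intro b hbK hab k hk
    obtain ⟨n, hn⟩ := C.conj k hk a
    have ht := r_mod C.hp ha1 hn
    push_cast at ht
    by_cases h4 : (4 : ℤ) ∣ n - 1
    · left
      apply hcent k hk
      apply comm_of_conj
      rw [hn]
      nth_rewrite 2 [← zpow_one a]
      exact zpow_eq_of_dvd ha4 h4
    · right
      apply hcent _ (K.mul_mem hk hbK)
      apply comm_of_conj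
      have h1 : a ^ n = a ^ (-1 : ℤ) := zpow_eq_of_dvd ha4 (by push_cast; omega)
      have h2 : (k * b)⁻¹ * a * (k * b) = b⁻¹ * (k⁻¹ * a * k) * b := by group
      rw [h2, hn, h1, conj_zpow', hab]; simp
  have hcM : Subgroup.zpowers c ≤ M := by
    rw [Subgroup.zpowers_le, ← ha]; exact pow_mem_M hn hi a
  by_cases haK : a ∈ K
  · by_cases hbM : b ∈ M
    · exact C.Q8K huniq hn hi hHM haM hbK ha hb hab haK hbM hcent (hcov b hbK hab)
    · have hab' : (a * b)⁻¹ * a * (a * b) = a⁻¹ := by rw [← hab]; group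
      have habM : a * b ∈ M := by
        rw [Subgroup.mul_mem_iff_of_index_two hi]; simp [haM, hbM]
      refine C.Q8K huniq hn hi hHM haM (K.mul_mem haK hbK) ha ?_ hab' haK habM hcent
        (hcov _ (K.mul_mem haK hbK) hab')
      calc (a * b) ^ 2 = a * b ^ 2 * (b⁻¹ * a * b) := by simp only [pow_two]; group
        _ = c := by rw [hab, hb, C.cc a]; group
  · have hcK : Subgroup.zpowers c ≤ K := by
      rw [Subgroup.zpowers_le, ← hb]; exact K.pow_mem hbK 2
    have hKa : ∀ x ∈ K, x ∈ Subgroup.zpowers a → x ∈ Subgroup.zpowers c := by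
      intro x hxM hx
      rcases mem_four ha hcp hx with h | ⟨w, hw, rfl⟩
      · exact h
      · exact absurd ((K.mul_mem_cancel_right (hcK hw)).mp hxM) haK
    have hKb : ∀ k ∈ K, k ∈ Subgroup.zpowers c ∨ k * b ∈ Subgroup.zpowers c := by
      intro k hk
      rcases hcov b hbK hab k hk with h | h
      · exact Or.inl (hKa k hk h)
      · exact Or.inr (hKa _ (K.mul_mem hk hbK) h)
    refine C.FIN hb (fun x => ?_) ⟨a, hba⟩ (fun h hh => ?_)
    · rcases hKb _ (C.Kn b hbK x) with h | h
      · exfalso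
        have h1 := mem_c_pow hcp h
        have h2 : (x⁻¹ * b * x) ^ 2 = x⁻¹ * b ^ 2 * x := by simp only [pow_two]; group
        rw [h2, hb, conj_of_comm (C.cc x)] at h1
        exact C.c1 h1
      · refine ⟨(x⁻¹ * b * x * b) * c⁻¹, Subgroup.mul_mem _ h (Subgroup.inv_mem _ (Subgroup.mem_zpowers c)), ?_⟩
        rw [← mul_assoc, hcz _ h b, ← hb]; simp only [pow_two]; group
    · rcases hKb h (C.HK hh) with h1 | h1
      · exact (hcz _ h1 b).symm
      · have h2 := hcz _ h1 b
        rw [← mul_assoc] at h2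
        exact (mul_right_cancel h2).symm

end two

section main
variable {p : ℕ} [Fact p.Prime] {P : Type*} [Group P] [Finite P] {H K : Subgroup P}

lemma Ctx.cyclic (C : Ctx p H K) (hH : H ≠ ⊤) : IsCyclic P := by
  by_contra hcyc
  obtain ⟨c, C⟩ := C.toCtx2 hH hcyc
  have huniq : ∀ x : P, x ^ p = 1 → x ∈ Subgroup.zpowers c := by
    by_cases h2 : p = 2
    · subst h2; exact C.F4two hH
    · exact C.F4odd hH h2
  obtain ⟨M, hn, hi, hHM⟩ := exists_M C.hp hH
  obtain ⟨y, hy, k, hkK, hk, hkp⟩ : ∃ y, y ∉ M ∧ ∃ k ∈ K, k ∉ Subgroup.zpowers y ∧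
      k ^ p ∈ Subgroup.zpowers y := by
    by_contra! hcon
    have hle : ∀ y, y ∉ M → ∀ k ∈ K, k ∈ Subgroup.zpowers y := by
      intro y hy k hk
      by_contra hk'
      obtain ⟨n, h1, h2⟩ := min_pow C.hp _ hk'
      exact hcon y hy (k ^ n) (K.pow_mem hk n) h1 h2
    obtain ⟨y, hy⟩ := index_out hi
    have hKc : ∀ k ∈ K, ∀ x, x * k = k * x := by
      intro k hk x
      have := out_gen hy (Subgroup.centralizer {k}) (fun y hy => by
        rw [Subgroup.mem_centralizer_singleton_iff]; exact (comm_of_mem (hle y hy k hk)).symm) x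
      rwa [Subgroup.mem_centralizer_singleton_iff] at this
    have hKt : ∀ x, x ∈ K := fun x => C.cent (fun h hh => (hKc h (C.HK hh) x).symm)
    exact hcyc ⟨y, fun x => hle y hy x (hKt x)⟩
  have hy1 : y ≠ 1 := fun h => hy (h ▸ M.one_mem)
  obtain ⟨r, hr⟩ := C.conj k hkK y
  have hrp := r_mod C.hp hy1 hr
  by_cases h4 : p = 2 → (4 : ℤ) ∣ r - 1
  · exact C.F6 huniq hn hi hHM hy hk hkp hr h4
  push Not at h4
  obtain ⟨h2, h4⟩ := h4
  subst h2
  push_cast at hrp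
  obtain ⟨hy2, hy8, hy4⟩ := C.toCtx.D1 hkK hr hrp h4
  have hcp := C.cp
  have hcy := C.cM M hn hi hHM y hy
  have hcy' : Subgroup.zpowers c ≤ Subgroup.zpowers y := Subgroup.zpowers_le.mpr hcy
  -- k ^ 2 = c
  have hk2 : k ^ 2 = c := by
    obtain ⟨i, hii⟩ := hkp
    change y ^ i = k ^ 2 at hii
    have h1 : k⁻¹ * k ^ 2 * k = k ^ 2 := by group
    have h2 : k ^ 4 = 1 := by
      rw [← hii, conj_zpow', hr, ← zpow_mul] at h1
      have hie : (2 : ℤ) ∣ i := by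
        by_contra hpi
        obtain ⟨s, hs⟩ := exists_inv C.hp y (w := i) (by exact_mod_cast hpi)
        apply hy
        rw [← hs, zpow_mul, hii]
        exact M.zpow_mem (pow_mem_M hn hi k) s
      obtain ⟨t, ht⟩ := hrp
      have e : y ^ ((i * 2) * t) = 1 := by
        rw [show (i * 2) * t = r * i - i by rw [show r = 1 + 2 * t by linarith]; ring, zpow_sub, h1]
        simp
      have h3 := zpow_cancel C.hp (by push_cast; omega) e
      rw [show 4 = 2 * 2 by rfl, pow_mul, ← hii, ← zpow_natCast, ← zpow_mul]
      exact_mod_cast h3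
    have h3 := huniq (k ^ 2) (by rw [← pow_mul]; exact h2)
    rcases zp_two hcp h3 with h | h
    · exact absurd (hcy' (huniq k h)) hk
    · exact h
  by_cases hy4' : y ^ 4 = 1
  · have hyc : y ^ 2 = c := by
      have h3 := huniq (y ^ 2) (by rw [← pow_mul]; exact hy4')
      rcases zp_two hcp h3 with h | h
      · exact absurd (C.oM M hn hi hHM y h) hy
      · exact h
    refine C.Q8 huniq hn hi hHM hy hkK hyc hk2 ?_
    rw [hr, ← zpow_neg_one]
    exact zpow_eq_of_dvd hy4' (by push_cast; omega)
  · have hyc : y ^ 4 = c := by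
      have h3 := huniq (y ^ 4) (by rw [← pow_mul]; exact hy8)
      rcases zp_two hcp h3 with h | h
      · exact absurd h hy4'
      · exact h
    by_cases hkM : k ∈ M
    · have hkyM : k * y ∉ M := fun h => hy ((M.mul_mem_cancel_left hkM).mp h)
      have hky1 : k * y ≠ 1 := fun h => hkyM (h ▸ M.one_mem)
      have h1 := mulpow_zpow (s := 1) hr 2
      simp only [zpow_one, one_mul, Finset.sum_range_succ, Finset.sum_range_zero, pow_zero, pow_one,
        zero_add] at h1
      obtain ⟨e, he⟩ : (4 : ℤ) ∣ 1 + r := by omega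
      have h2 : (k * y) ^ 2 = c * c ^ e := by
        rw [h1, he, zpow_mul, hk2, ← hyc]; norm_cast
      obtain ⟨n, hn'⟩ := C.conj k hkK (k * y)
      obtain ⟨t, ht⟩ := r_mod C.hp hky1 hn'
      rw [show n = 1 + (2 : ℕ) * t by linarith, zpow_add, zpow_mul, zpow_natCast, h2, zpow_one] at hn'
      have h5 : k⁻¹ * (k * y) * k = k * (k⁻¹ * y * k) := by group
      rw [h5, hr, mul_assoc] at hn'
      have h6 := mul_left_cancel hn'
      have h7 : y ^ (r - 1) = (c * c ^ e) ^ t := by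
        rw [sub_eq_neg_add, zpow_add, h6]; group
      have h8 : (y ^ (r - 1)) ^ 2 = 1 := by
        rw [h7]
        apply mem_c_pow hcp
        exact Subgroup.zpow_mem _ (Subgroup.mul_mem _ (Subgroup.mem_zpowers c)
          (Subgroup.zpow_mem _ (Subgroup.mem_zpowers c) e)) t
      obtain ⟨q, hq⟩ := hrp
      rw [← zpow_natCast, ← zpow_mul, hq, show 2 * q * ((2 : ℕ) : ℤ) = 4 * q by push_cast; ring] at h8
      have h9 := zpow_cancel C.hp (by push_cast; omega) h8
      exact hy4' (by exact_mod_cast h9)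
    · refine C.Q8 huniq hn hi hHM hkM hy2 hk2 (by rw [← pow_mul]; exact hyc) ?_
      have h1 : (y ^ 2)⁻¹ * k * y ^ 2 = k * ((k⁻¹ * y ^ (2:ℤ) * k)⁻¹ * y ^ (2:ℤ)) := by
        norm_cast; group
      rw [h1, conj_zpow', hr, ← zpow_mul, ← zpow_neg, ← zpow_add,
        zpow_eq_of_dvd (j := 4) hy8 (by push_cast; omega)]
      norm_cast
      rw [hyc, eq_inv_iff_mul_eq_one, mul_assoc, ← C.cc k, ← mul_assoc, ← pow_two, hk2, ← pow_two, hcp]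

end main
end RegOrb
namespace RegOrb

def Good (G : Type*) [Group G] (H : Subgroup G) : Prop :=
  ∀ α : MulAut G, (∀ h ∈ H, α h ∈ H) → ∀ x, α x ∈ Subgroup.zpowers x

section nrm
variable {G : Type*} [Group G] [Finite G]

def NrmS (G : Type*) [Group G] : Submonoid G where
  carrier := {k | ∀ x : G, ∃ n : ℤ, k⁻¹ * x * k = x ^ n}
  one_mem' := fun x => ⟨1, by simp⟩
  mul_mem' := by
    intro k l hk hl x
    obtain ⟨n, hn⟩ := hk x
    obtain ⟨m, hm⟩ := hl x
    refine ⟨m * n, ?_⟩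
    have : (k * l)⁻¹ * x * (k * l) = l⁻¹ * (k⁻¹ * x * k) * l := by group
    rw [this, hn, conj_zpow', hm, zpow_mul]

def Nrm (G : Type*) [Group G] [Finite G] : Subgroup G where
  toSubmonoid := NrmS G
  inv_mem' := by
    intro k hk
    have : k⁻¹ = k ^ (orderOf k - 1) := by
      rw [inv_eq_iff_mul_eq_one, ← pow_succ', Nat.sub_add_cancel (orderOf_pos k), pow_orderOf_eq_one]
    change k⁻¹ ∈ NrmS G
    rw [this]
    exact pow_mem hk _

lemma mem_Nrm {k : G} : k ∈ Nrm G ↔ ∀ x : G, ∃ n : ℤ, k⁻¹ * x * k = x ^ n := Iff.rfl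

lemma Nrm_conj {k : G} (hk : k ∈ Nrm G) (g : G) : g⁻¹ * k * g ∈ Nrm G := by
  rw [mem_Nrm] at hk ⊢
  intro x
  obtain ⟨n, hn⟩ := hk (g * x * g⁻¹)
  refine ⟨n, ?_⟩
  have : (g⁻¹ * k * g)⁻¹ * x * (g⁻¹ * k * g) = g⁻¹ * (k⁻¹ * (g * x * g⁻¹) * k) * g := by group
  rw [this, hn, conj_zpow']
  congr 1; group

lemma Good.norm {H : Subgroup G} (hG : Good G H) (g : G) (hg : ∀ h ∈ H, g⁻¹ * h * g ∈ H) :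
    g ∈ Nrm G := by
  intro x
  have := hG (MulAut.conj g⁻¹) (by intro h hh; simpa using hg h hh) x
  obtain ⟨n, hn⟩ := this
  exact ⟨n, by simpa using hn.symm⟩

lemma Good.le {H : Subgroup G} (hG : Good G H) : H ≤ Nrm G := fun g hg =>
  hG.norm g (fun h hh => mul_mem (mul_mem (inv_mem hg) hh) hg)

end nrm

section aut
variable {p : ℕ} [Fact p.Prime] {P : Type*} [Group P] [Finite P]

lemma zpow_mem_iff {M : Subgroup P} (hMn : M.Normal) (hM : M.index = p) {y : P} (hy : y ∉ M)
    (i : ℤ) : y ^ i ∈ M ↔ (p : ℤ) ∣ i := by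
  constructor
  · intro h
    by_contra hd
    have hc : IsCoprime (p : ℤ) i :=
      (Prime.coprime_iff_not_dvd (Nat.prime_iff_prime_int.mp Fact.out)).mpr hd
    obtain ⟨u, v, huv⟩ := hc
    apply hy
    have : y = (y ^ p) ^ u * (y ^ i) ^ v := by
      rw [← zpow_natCast, ← zpow_mul, ← zpow_mul, ← zpow_add]
      rw [mul_comm (p : ℤ), mul_comm i, huv, zpow_one]
    rw [this]
    exact mul_mem (zpow_mem (pow_mem_M hMn hM y) _) (zpow_mem h _)
  · rintro ⟨c, rfl⟩
    rw [zpow_mul, zpow_natCast]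
    exact zpow_mem (pow_mem_M hMn hM y) _

lemma exists_zpow {M : Subgroup P} (hMn : M.Normal) (hM : M.index = p) {y : P} (hy : y ∉ M)
    (x : P) : ∃ i : ℤ, y ^ (-i) * x ∈ M := by
  have hc : Nat.card (P ⧸ M) = p := hM
  have hy' : (y : P ⧸ M) ≠ 1 := by rwa [Ne, QuotientGroup.eq_one_iff]
  have := mem_zpowers_of_prime_card (p := p) hc hy' (g' := (x : P ⧸ M))
  obtain ⟨i, hi⟩ := this
  refine ⟨i, ?_⟩
  simp only at hi
  rw [← QuotientGroup.eq_one_iff, QuotientGroup.mk_mul, ← hi]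
  push_cast
  simp

lemma Good.aut {H : Subgroup P} (hG : Good P H) (M : Subgroup P) (hMn : M.Normal)
    (hM : M.index = p) (hHM : H ≤ M) (y : P) (hy : y ∉ M) (z : P) (hz : z ∈ M)
    (hzc : ∀ m ∈ M, m * z = z * m) (hyz : (y * z) ^ p = y ^ p) : z ∈ Subgroup.zpowers y := by
  choose e he using exists_zpow hMn hM hy
  have hpp : ∀ i j : ℤ, (p : ℤ) ∣ i - j → (y * z) ^ i * y ^ (-i) = (y * z) ^ j * y ^ (-j) := by
    rintro i j ⟨c, hc⟩
    have : i = j + p * c := by linarith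
    subst this
    rw [zpow_add, zpow_mul, zpow_natCast, hyz, neg_add, add_comm (-j), zpow_add, ← mul_neg,
      zpow_mul y, zpow_natCast, mul_assoc, ← mul_assoc ((y ^ p) ^ c), ← zpow_add]
    simp
  let f : P → P := fun x => (y * z) ^ (e x) * y ^ (-(e x)) * x
  have hf : ∀ (x : P) (i : ℤ), y ^ (-i) * x ∈ M → f x = (y * z) ^ i * y ^ (-i) * x := by
    intro x i hi
    have h1 : y ^ (i - e x) ∈ M := by
      have := mul_mem (he x) (inv_mem hi)
      have h2 := hMn.conj_mem _ this (y ^ i)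
      have h3 : y ^ i * (y ^ (-e x) * x * (y ^ (-i) * x)⁻¹) * (y ^ i)⁻¹ = y ^ (i - e x) := by
        rw [zpow_sub]; simp; group
      rwa [h3] at h2
    have h2 := (zpow_mem_iff hMn hM hy _).mp h1
    simp only [f]
    rw [hpp i (e x) h2]
  have hcj : ∀ m ∈ M, ∀ j : ℤ, (y * z) ^ (-j) * m * (y * z) ^ j = y ^ (-j) * m * y ^ j := by
    have h0 : ∀ m ∈ M, (y * z)⁻¹ * m * (y * z) = y⁻¹ * m * y := by
      intro m hm
      have hm' : y⁻¹ * m * y ∈ M := by simpa using hMn.conj_mem m hm y⁻¹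
      have := hzc _ hm'
      calc (y * z)⁻¹ * m * (y * z) = z⁻¹ * (y⁻¹ * m * y * z) := by group
        _ = _ := by rw [this]; group
    have h0' : ∀ m ∈ M, (y * z) * m * (y * z)⁻¹ = y * m * y⁻¹ := by
      intro m hm
      have := hzc _ hm
      calc (y * z) * m * (y * z)⁻¹ = y * (z * m) * z⁻¹ * y⁻¹ := by group
        _ = _ := by rw [← this]; group
    intro m hm j
    induction j using Int.induction_on generalizing m with
    | zero => simp
    | succ j ih =>
      have a1 : (y * z) ^ (-((j : ℤ) + 1)) * m * (y * z) ^ ((j : ℤ) + 1) =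
        (y * z) ^ (-(j : ℤ)) * ((y * z)⁻¹ * m * (y * z)) * (y * z) ^ (j : ℤ) := by generalize y * z = w; group
      have a2 : y ^ (-((j : ℤ) + 1)) * m * y ^ ((j : ℤ) + 1) =
        y ^ (-(j : ℤ)) * (y⁻¹ * m * y) * y ^ (j : ℤ) := by group
      rw [a1, a2, h0 m hm]
      exact ih _ (by simpa using hMn.conj_mem m hm y⁻¹)
    | pred j ih =>
      have a1 : (y * z) ^ (-(-(j : ℤ) - 1)) * m * (y * z) ^ (-(j : ℤ) - 1) =
        (y * z) ^ (-(-(j : ℤ))) * ((y * z) * m * (y * z)⁻¹) * (y * z) ^ (-(j : ℤ)) := by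
        generalize y * z = w; group
      have a2 : y ^ (-(-(j : ℤ) - 1)) * m * y ^ (-(j : ℤ) - 1) =
        y ^ (-(-(j : ℤ))) * (y * m * y⁻¹) * y ^ (-(j : ℤ)) := by group
      rw [a1, a2, h0' m hm]
      exact ih _ (hMn.conj_mem m hm y)
  have hmul : ∀ a b, f (a * b) = f a * f b := by
    intro a b
    have ha := he a
    have hb := he b
    set i := e a
    set j := e b
    set m := y ^ (-i) * a with hm
    set n := y ^ (-j) * b with hn
    have hmj : y ^ (-j) * m * y ^ j ∈ M := by
      simpa using hMn.conj_mem m ha (y ^ (-j))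
    have key : y ^ (-(i + j)) * (a * b) = (y ^ (-j) * m * y ^ j) * n := by
      rw [hm, hn, neg_add_rev, zpow_add]; group
    have hab := hf (a * b) (i + j) (by rw [key]; exact mul_mem hmj hb)
    rw [hab, mul_assoc, key, hf a i ha, hf b j hb, mul_assoc _ _ a, mul_assoc _ _ b, ← hm, ← hn,
      ← hcj m ha j, zpow_add]
    group
  have hfm : ∀ m ∈ M, f m = m := by
    intro m hm
    rw [hf m 0 (by simpa using hm)]; simp
  let F : P →* P := MonoidHom.mk' f hmul
  have hinj : Function.Injective F := by
    rw [injective_iff_map_eq_one]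
    intro a ha
    change f a = 1 at ha
    have ha' : a ∈ M := by
      have h1 : f a = (y * z) ^ (e a) * (y ^ (-(e a)) * a) := by simp [f, mul_assoc]
      rw [h1] at ha
      have h2 : (y * z) ^ (e a) ∈ M := by
        rw [eq_inv_of_mul_eq_one_left ha]; exact inv_mem (he a)
      have hyz' : y * z ∉ M := fun h => hy ((Subgroup.mul_mem_cancel_right M hz).mp h)
      have h3 := (zpow_mem_iff hMn hM hy (-(e a))).mpr
        ((dvd_neg).mpr ((zpow_mem_iff hMn hM hyz' _).mp h2))
      exact (Subgroup.mul_mem_cancel_left M h3).mp (he a)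
    rw [← hfm a ha', ha]
  have hbij : Function.Bijective F := Finite.injective_iff_bijective.mp hinj
  let α : MulAut P := MulEquiv.ofBijective F hbij
  have hα : ∀ x, α x = f x := fun x => rfl
  have := hG α (by intro h hh; rw [hα, hfm h (hHM hh)]; exact hh) y
  rw [hα, hf y 1 (by simp)] at this
  have h2 : (y * z) ^ (1 : ℤ) * y ^ (-1 : ℤ) * y = y * z := by group
  rw [h2] at this
  exact (Subgroup.mul_mem_cancel_left _ (Subgroup.mem_zpowers y)).mp this

lemma Good.cyclic_p {H : Subgroup P} (hp : IsPGroup p P) (hG : Good P H) : IsCyclic P := by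
  have main : ∀ H : Subgroup P, Good P H → H ≠ ⊤ → IsCyclic P := by
    intro H hG hH
    have C : Ctx p H (Nrm P) :=
      { hp := hp
        conj := fun k hk => hk
        norm := hG.norm
        HK := hG.le
        Kn := fun k hk g => Nrm_conj hk g
        aut := hG.aut }
    exact C.cyclic hH
  by_cases hH : H = ⊤
  · subst hH
    by_cases hb : (⊥ : Subgroup P) = ⊤
    · have : Subsingleton P := by
        rw [← Subgroup.subsingleton_iff]; exact subsingleton_of_bot_eq_top hb
      infer_instance
    · exact main ⊥ (fun α _ x => hG α (fun _ _ => Subgroup.mem_top _) x) hb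
  · exact main H hG hH

end aut

end RegOrb
namespace RegOrb
section transfer
variable {G A : Type*} [Group G] [Group A]

lemma Good.transfer {H : Subgroup G} (hG : Good G H) (π : G →* A) (ι : A →* G)
    (h1 : ∀ a, π (ι a) = a) (h2 : ∀ g a, π g = 1 → ι a * g = g * ι a)
    (h3 : ∀ g, ι (π g) ∈ Subgroup.zpowers g) : Good A (H.comap ι) := by
  intro α hα x
  let E : MulAut A → G →* G := fun α =>
    MonoidHom.mk' (fun g => ι (α (π g)) * ((ι (π g))⁻¹ * g)) (by
      intro g h
      have hr := h2 ((ι (π g))⁻¹ * g) (α (π h)) (by simp [h1])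
      have hr2 := h2 ((ι (π g))⁻¹ * g) (π h)⁻¹ (by simp [h1])
      simp only [map_mul, mul_inv_rev]
      rw [map_inv] at hr2
      calc ι (α (π g)) * ι (α (π h)) * ((ι (π h))⁻¹ * (ι (π g))⁻¹ * (g * h))
          = ι (α (π g)) * ι (α (π h)) * ((ι (π h))⁻¹ * ((ι (π g))⁻¹ * g)) * h := by group
        _ = ι (α (π g)) * (ι (α (π h)) * ((ι (π g))⁻¹ * g)) * (ι (π h))⁻¹ * h := by
          rw [hr2]; group
        _ = _ := by rw [hr]; group)
  have hE : ∀ α g, E α g = ι (α (π g)) * ((ι (π g))⁻¹ * g) := fun _ _ => rfl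
  have hEE : ∀ α β : MulAut A, (∀ a, β (α a) = a) → ∀ g, E β (E α g) = g := by
    intro α β hab g
    rw [hE β, hE α]
    simp only [map_mul, map_inv, h1, hab]
    simp
  let F : MulAut G :=
    { E α with
      invFun := E α⁻¹
      left_inv := hEE α α⁻¹ (by simp)
      right_inv := hEE α⁻¹ α (by simp) }
  have hF : ∀ g, F g = ι (α (π g)) * ((ι (π g))⁻¹ * g) := fun _ => rfl
  have hFx := hG F (by
    intro h hh
    have hm : ι (π h) ∈ H := (Subgroup.zpowers_le.mpr hh) (h3 h)
    have := hα (π h) hm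
    rw [hF]
    exact mul_mem this (mul_mem (inv_mem hm) hh)) (ι x)
  rw [hF] at hFx
  obtain ⟨n, hn⟩ := hFx
  refine ⟨n, ?_⟩
  have := congrArg π hn
  simpa [h1] using this

end transfer

section pi
variable {I : Type*} [Fintype I] [DecidableEq I] {A : I → Type*} [∀ i, Group (A i)]
  [∀ i, Finite (A i)]

lemma single_mem (hc : ∀ i j, i ≠ j → Nat.Coprime (Nat.card (A i)) (Nat.card (A j)))
    (x : ∀ i, A i) (i : I) : Pi.mulSingle i (x i) ∈ Subgroup.zpowers x := by
  have hN : Nat.Coprime (Nat.card (A i)) (∏ j ∈ Finset.univ.erase i, Nat.card (A j)) := by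
    apply Nat.Coprime.prod_right
    intro j hj
    exact hc i j (Finset.ne_of_mem_erase hj).symm
  obtain ⟨u, v, huv⟩ := Nat.isCoprime_iff_coprime.mpr hN
  refine ⟨v * ((∏ j ∈ Finset.univ.erase i, Nat.card (A j) : ℕ) : ℤ), ?_⟩
  funext j
  simp only [Pi.pow_apply]
  by_cases hj : j = i
  · subst hj
    rw [Pi.mulSingle_eq_same]
    have : v * ((∏ k ∈ Finset.univ.erase j, Nat.card (A k) : ℕ) : ℤ) =
      1 - (Nat.card (A j) : ℤ) * u := by linarith
    rw [this, zpow_sub, zpow_mul, zpow_natCast, pow_card_eq_one']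
    simp
  · rw [Pi.mulSingle_eq_of_ne hj]
    have hd : Nat.card (A j) ∣ ∏ k ∈ Finset.univ.erase i, Nat.card (A k) :=
      Finset.dvd_prod_of_mem _ (Finset.mem_erase.mpr ⟨hj, Finset.mem_univ _⟩)
    obtain ⟨c, hcc⟩ := hd
    rw [hcc]; push_cast
    rw [mul_left_comm, zpow_mul, zpow_natCast, pow_card_eq_one']
    simp

lemma Good.pi {G : Type*} [Group G] {H : Subgroup G} (hG : Good G H)
    (hc : ∀ i j, i ≠ j → Nat.Coprime (Nat.card (A i)) (Nat.card (A j)))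
    (φ : (∀ i, A i) ≃* G) (i : I) : ∃ H' : Subgroup (A i), Good (A i) H' := by
  refine ⟨_, hG.transfer ((Pi.evalMonoidHom A i).comp φ.symm.toMonoidHom)
    (φ.toMonoidHom.comp (MonoidHom.mulSingle A i)) ?_ ?_ ?_⟩
  · intro a; simp
  · intro g a hg
    obtain ⟨x, rfl⟩ := φ.surjective g
    simp at hg ⊢
    rw [← map_mul, ← map_mul]
    congr 1
    funext j
    by_cases hj : j = i
    · subst hj; simp [hg]
    · simp [Pi.mulSingle_eq_of_ne hj]
  · intro g
    obtain ⟨x, rfl⟩ := φ.surjective g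
    obtain ⟨n, hn⟩ := single_mem hc x i
    refine ⟨n, ?_⟩
    simp at hn ⊢
    rw [← map_zpow, hn]

end pi

lemma isPGroup_pi {p : ℕ} [Fact p.Prime] {ι : Type*} [Finite ι] {A : ι → Type*} [∀ i, Group (A i)]
    [∀ i, Finite (A i)] (h : ∀ i, IsPGroup p (A i)) : IsPGroup p (∀ i, A i) := by
  classical
  have := Fintype.ofFinite ι
  choose n hn using fun i => IsPGroup.iff_card.mp (h i)
  refine IsPGroup.of_card (n := ∑ i, n i) ?_
  rw [Nat.card_pi, ← Finset.prod_pow_eq_pow_sum]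
  exact Finset.prod_congr rfl (fun i _ => hn i)

theorem Good.cyclic_nilp {R : Type*} [Group R] [Finite R] {H : Subgroup R} (hG : Good R H)
    (hN : Group.IsNilpotent R) : IsCyclic R := by
  classical
  obtain ⟨φ⟩ := ((Group.isNilpotent_of_finite_tfae (G := R)).out 0 4).mp hN
  have hfact : ∀ p : (Nat.card R).primeFactors, Fact p.1.Prime :=
    fun p => ⟨Nat.prime_of_mem_primeFactors p.2⟩
  have hpg : ∀ p : (Nat.card R).primeFactors, IsPGroup p.1 (∀ P : Sylow p.1 R, (P : Subgroup R)) :=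
    fun p => isPGroup_pi (fun P => P.isPGroup')
  have hz : IsZGroup R := by
    constructor
    intro p hp P
    by_cases hpd : p ∣ Nat.card R
    · let p' : (Nat.card R).primeFactors := ⟨p, Nat.mem_primeFactors.mpr ⟨hp, hpd, Nat.card_pos.ne'⟩⟩
      have hfp : Fact p.Prime := ⟨hp⟩
      obtain ⟨H', hH'⟩ := hG.pi (A := fun p : (Nat.card R).primeFactors =>
        ∀ P : Sylow p.1 R, (P : Subgroup R)) (by
          intro i j hij
          obtain ⟨n₁, e₁⟩ := IsPGroup.iff_card.mp (hpg i)
          obtain ⟨n₂, e₂⟩ := IsPGroup.iff_card.mp (hpg j)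
          rw [e₁, e₂]
          exact Nat.coprime_pow_primes _ _ (hfact i).out (hfact j).out
            (fun h => hij (Subtype.ext h))) φ p'
      have hcyc : IsCyclic (∀ P : Sylow p R, (P : Subgroup R)) := hH'.cyclic_p (p := p) (hpg p')
      exact isCyclic_of_surjective (Pi.evalMonoidHom (fun P : Sylow p R => (P : Subgroup R)) P)
        (Function.surjective_eval P)
    · have hfp : Fact p.Prime := ⟨hp⟩
      have : (P : Subgroup R) = ⊥ := by
        obtain ⟨n, hn⟩ := IsPGroup.iff_card.mp P.isPGroup'
        rw [← Subgroup.card_eq_one]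
        have hd : Nat.card (P : Subgroup R) ∣ Nat.card R := Subgroup.card_subgroup_dvd_card _
        rcases n with _ | n
        · simpa using hn
        · exact absurd ((dvd_pow_self p (Nat.succ_ne_zero n)).trans (hn ▸ hd)) hpd
      rw [this]; infer_instance
  infer_instance

end RegOrb
namespace RegOrb
section nilp
variable {R : Type*} [Group R] [Finite R]

lemma Nrm_conj' {k : R} (hk : k ∈ Nrm R) (g : R) : g * k * g⁻¹ ∈ Nrm R := by
  simpa using Nrm_conj hk g⁻¹

lemma Nrm_le_normalizer {k : R} (hk : k ∈ Nrm R) (M : Subgroup R) :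
    k ∈ Subgroup.normalizer (M : Set R) := by
  have h1 : ∀ k ∈ Nrm R, ∀ h ∈ M, k⁻¹ * h * k ∈ M := by
    intro k hk h hh
    obtain ⟨n, hn⟩ := hk h
    rw [hn]; exact zpow_mem hh n
  rw [Subgroup.mem_normalizer_iff'']
  intro h
  refine ⟨h1 k hk h, fun hh => ?_⟩
  have := h1 k⁻¹ (inv_mem hk) _ hh
  have e : k⁻¹⁻¹ * (k⁻¹ * h * k) * k⁻¹ = h := by group
  rwa [e] at this

lemma eq_one_of_coprime {a b : ℕ} (hab : Nat.Coprime a b) {x : R} (ha : x ^ a = 1)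
    (hb : x ^ b = 1) : x = 1 := by
  rw [← orderOf_eq_one_iff]
  exact Nat.eq_one_of_dvd_coprimes hab (orderOf_dvd_of_pow_eq_one ha) (orderOf_dvd_of_pow_eq_one hb)

lemma isPGroup_zpowers {p n : ℕ} {k : R} (hk : k ^ (p ^ n) = 1) :
    IsPGroup p (Subgroup.zpowers k) := by
  rintro ⟨x, i, rfl⟩
  refine ⟨n, ?_⟩
  ext
  simp only [SubmonoidClass.coe_pow, Subgroup.coe_one]
  rw [← zpow_natCast, ← zpow_mul, mul_comm, zpow_mul, zpow_natCast, hk, one_zpow]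

lemma comm_pp {p n m : ℕ} (hm : Nat.Coprime p m) {k x : R} (hk : k ∈ Nrm R)
    (hkp : k ^ (p ^ n) = 1) (hx : x ^ m = 1) : k * x = x * k := by
  have hk2 := Nrm_conj' hk x
  have hkp2 : (x * k * x⁻¹) ^ (p ^ n) = 1 := by rw [conj_pow, hkp]; simp
  have hP := IsPGroup.to_sup_of_normal_right' (isPGroup_zpowers hkp) (isPGroup_zpowers hkp2)
    (by rw [Subgroup.zpowers_le]; exact Nrm_le_normalizer hk _)
  have hc : k⁻¹ * (x * k * x⁻¹) ∈ Subgroup.zpowers k ⊔ Subgroup.zpowers (x * k * x⁻¹) :=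
    mul_mem (Subgroup.mem_sup_left (inv_mem (Subgroup.mem_zpowers k)))
      (Subgroup.mem_sup_right (Subgroup.mem_zpowers _))
  obtain ⟨N, hN⟩ := hP ⟨_, hc⟩
  have hN' : (k⁻¹ * (x * k * x⁻¹)) ^ (p ^ N) = 1 := by
    simpa using congrArg Subtype.val hN
  obtain ⟨r, hr⟩ := hk x
  have e : k⁻¹ * (x * k * x⁻¹) = x ^ (r - 1) := by
    rw [zpow_sub_one, ← hr]; group
  have hM' : (k⁻¹ * (x * k * x⁻¹)) ^ m = 1 := by
    rw [e, ← zpow_natCast, ← zpow_mul, mul_comm, zpow_mul, zpow_natCast, hx, one_zpow]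
  have h1 := eq_one_of_coprime (hm.pow_left N) hN' hM'
  have h2 : x * k = k * (k⁻¹ * (x * k * x⁻¹)) * x := by group
  rw [h2, h1, mul_one]

def Cp (R : Type*) [Group R] [Finite R] (p : ℕ) : Subgroup R :=
  Subgroup.centralizer {k | k ∈ Nrm R ∧ ∃ n : ℕ, k ^ (p ^ n) = 1}

lemma mem_Cp {p : ℕ} {g : R} : g ∈ Cp R p ↔ ∀ k ∈ Nrm R, (∃ n : ℕ, k ^ (p ^ n) = 1) → k * g = g * k := by
  rw [Cp, Subgroup.mem_centralizer_iff]
  simp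

instance Cp_normal (p : ℕ) : (Cp R p).Normal := by
  constructor
  intro c hc g
  rw [mem_Cp] at hc ⊢
  rintro k hk ⟨n, hn⟩
  have := hc (g⁻¹ * k * g) (Nrm_conj hk g) ⟨n, by
    have := conj_pow (a := g⁻¹) (b := k) (i := p ^ n)
    rw [inv_inv] at this
    rw [this, hn]; simp⟩
  calc k * (g * c * g⁻¹) = g * (g⁻¹ * k * g * c) * g⁻¹ := by group
    _ = _ := by rw [this]; group

lemma Cp_quot (p : ℕ) [Fact p.Prime] : IsPGroup p (R ⧸ Cp R p) := by
  intro x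
  obtain ⟨x, rfl⟩ := QuotientGroup.mk_surjective x
  obtain ⟨a, m, hm, ha⟩ := Nat.exists_eq_pow_mul_and_not_dvd (n := Nat.card R) Nat.card_pos.ne' p
    (Fact.out : p.Prime).ne_one
  refine ⟨a, ?_⟩
  rw [← QuotientGroup.mk_pow, QuotientGroup.eq_one_iff, mem_Cp]
  rintro k hk ⟨n, hn⟩
  refine comm_pp (m := m) (((Fact.out : p.Prime).coprime_iff_not_dvd).mpr hm) hk hn ?_
  rw [← pow_mul, ← ha, pow_card_eq_one']

lemma comm_of_Cp {g : R} (hg : ∀ p ∈ (Nat.card R).primeFactors, g ∈ Cp R p) :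
    ∀ n : ℕ, 0 < n → ∀ k ∈ Nrm R, k ^ n = 1 → k * g = g * k := by
  intro n
  induction n using Nat.recOnPosPrimePosCoprime with
  | prime_pow p n hp hn =>
    intro _ k hk h
    by_cases hd : p ∣ Nat.card R
    · exact mem_Cp.mp (hg p (Nat.mem_primeFactors.mpr ⟨hp, hd, Nat.card_pos.ne'⟩)) k hk ⟨n, h⟩
    · have := eq_one_of_coprime (((hp.coprime_iff_not_dvd).mpr hd).pow_left n) h pow_card_eq_one'
      simp [this]
  | zero => intro h; exact absurd h (lt_irrefl _)
  | one => intro _ k _ h; rw [pow_one] at h; simp [h]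
  | coprime a b ha hb hab iha ihb =>
    intro _ k hk h
    have h1 := ihb (by omega) (k ^ a) (pow_mem hk a) (by rw [← pow_mul, h])
    have h2 := iha (by omega) (k ^ b) (pow_mem hk b) (by rw [← pow_mul, mul_comm, h])
    obtain ⟨u, v, huv⟩ := Nat.isCoprime_iff_coprime.mpr hab
    have e : k = (k ^ a) ^ u * (k ^ b) ^ v := by
      rw [← zpow_natCast, ← zpow_natCast, ← zpow_mul, ← zpow_mul, ← zpow_add,
        mul_comm (a : ℤ), mul_comm (b : ℤ), huv, zpow_one]
    have c1 : Commute (k ^ a) g := h1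
    have c2 : Commute (k ^ b) g := h2
    rw [e]
    exact (c1.zpow_left u).mul_left (c2.zpow_left v)

theorem Good.nilpotent {H : Subgroup R} (hG : Good R H) : Group.IsNilpotent R := by
  refine ((Group.isNilpotent_of_finite_tfae (G := R)).out 0 2).mpr ?_
  intro M hM
  by_cases hKM : Nrm R ≤ M
  · have hfact : ∀ p : (Nat.card R).primeFactors, Fact p.1.Prime :=
      fun p => ⟨Nat.prime_of_mem_primeFactors p.2⟩
    let f : R →* ∀ p : (Nat.card R).primeFactors, R ⧸ Cp R p.1 :=
      Pi.monoidHom (fun p => QuotientGroup.mk' (Cp R p.1))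
    have hker : f.ker ≤ M := by
      intro g hg
      apply hKM
      have hg' : ∀ p ∈ (Nat.card R).primeFactors, g ∈ Cp R p := by
        intro p hp
        have := congrFun (MonoidHom.mem_ker.mp hg) ⟨p, hp⟩
        exact (QuotientGroup.eq_one_iff _).mp this
      apply hG.norm
      intro h hh
      have := comm_of_Cp hg' (Nat.card R) Nat.card_pos h (hG.le hh) pow_card_eq_one'
      rw [mul_assoc, this]
      simpa using hh
    have hn : ∀ p : (Nat.card R).primeFactors, Group.IsNilpotent (R ⧸ Cp R p.1) :=
      fun p => (Cp_quot p.1).isNilpotent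
    have hnr : Group.IsNilpotent f.range := inferInstance
    have hs := f.rangeRestrict_surjective
    have hcm : (M.map f.rangeRestrict).comap f.rangeRestrict = M := by
      rw [Subgroup.comap_map_eq, MonoidHom.ker_rangeRestrict]
      exact sup_eq_left.mpr hker
    have hco : IsCoatom (M.map f.rangeRestrict) := by
      constructor
      · intro h
        rw [h, Subgroup.comap_top] at hcm
        exact hM.1 hcm.symm
      · intro N hN
        have : N.comap f.rangeRestrict = ⊤ := by
          apply hM.2
          rw [← hcm]
          exact (Subgroup.comap_lt_comap_of_surjective hs).mpr hN
        rw [← Subgroup.map_comap_eq_self_of_surjective hs N, this]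
        exact Subgroup.map_top_of_surjective _ hs
    have hall : ∀ N : Subgroup f.range, IsCoatom N → N.Normal :=
      ((Group.isNilpotent_of_finite_tfae (G := f.range)).out 0 2).mp hnr
    have := hall _ hco
    rw [← hcm]
    infer_instance
  · rw [← Subgroup.normalizer_eq_top_iff]
    apply hM.2
    refine lt_of_le_of_ne Subgroup.le_normalizer ?_
    intro h
    apply hKM
    intro k hk
    rw [h]
    exact Nrm_le_normalizer hk M

end nilp
end RegOrb

/-- For a finite group `R`, the natural action of `Aut(R)` on the set of subgroups
of `R` has a point (a subgroup `H`) whose stabilizer equals the kernel of the action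
(the power automorphisms, i.e. the automorphisms fixing every subgroup setwise) --
equivalently, the induced permutation group has a regular orbit -- if and only if
`R` is cyclic. -/
theorem stmt1 (R : Type*) [Group R] [Finite R] :
    (∃ H : Subgroup R, ∀ α : MulAut R,
      Subgroup.map α.toMonoidHom H = H ↔ ∀ K : Subgroup R, Subgroup.map α.toMonoidHom K = K) ↔
    IsCyclic R := by
  have hmap : ∀ (α : MulAut R) (K : Subgroup R), (∀ h ∈ K, α h ∈ K) →
      Subgroup.map α.toMonoidHom K = K := by
    intro α K h
    apply Subgroup.eq_of_le_of_card_ge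
    · rintro _ ⟨x, hx, rfl⟩
      exact h x hx
    · exact (Subgroup.card_map_of_injective α.injective).ge
  constructor
  · rintro ⟨H, hH⟩
    have hG : RegOrb.Good R H := by
      intro α hα x
      have := (hH α).mp (hmap α H hα) (Subgroup.zpowers x)
      have hx : α x ∈ Subgroup.map α.toMonoidHom (Subgroup.zpowers x) :=
        ⟨x, Subgroup.mem_zpowers x, rfl⟩
      rwa [this] at hx
    exact hG.cyclic_nilp hG.nilpotent
  · intro hc
    refine ⟨⊥, fun α => ⟨fun _ K => ?_, fun h => h ⊥⟩⟩
    apply hmap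
    intro h hh
    obtain ⟨m, hm⟩ := MonoidHom.map_cyclic α.toMonoidHom
    have := hm h
    change α h = h ^ m at this
    rw [this]
    exact zpow_mem hh m
end

section
/- Let R be a finite group. Every automorphism of R is a power automorphism (that is, Aut(R) = PAut(R)) if and only if R is cyclic. -/
def HP (R : Type*) [Group R] : Prop := ∀ α : MulAut R, ∀ x : R, α x ∈ Subgroup.zpowers x

theorem HP.congr {R S : Type*} [Group R] [Group S] (e : R ≃* S) (h : HP R) : HP S := by
  intro α x
  obtain ⟨k, hk⟩ := h ((e.trans α).trans e.symm) (e.symm x)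
  refine ⟨k, ?_⟩
  have := congrArg e hk
  simpa using this

theorem HP.sq {R : Type*} [CommGroup R] (h : HP R) (f : R →* R) (hf : ∀ x, f (f x) = 1) (x : R) :
    f x ∈ Subgroup.zpowers x := by
  let α : MulAut R := 
    { toFun := fun x => x * f x
      invFun := fun x => x * (f x)⁻¹
      left_inv := by intro x; simp [hf]
      right_inv := by intro x; simp [hf]
      map_mul' := by intro x y; simp [mul_mul_mul_comm] }
  have h1 : x * f x ∈ Subgroup.zpowers x := h α x
  have := (Subgroup.zpowers x).mul_mem ((Subgroup.zpowers x).inv_mem (Subgroup.mem_zpowers x)) h1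
  simpa using this

theorem exists_hom (m n : ℕ) (hn : 1 < n) (h : ¬ Nat.Coprime m n) :
    ∃ g : ZMod m →+ ZMod n, g 1 ≠ 0 := by
  obtain ⟨p, hp, ⟨a, ha⟩, ⟨b, hb⟩⟩ := Nat.Prime.not_coprime_iff_dvd.1 h
  refine ⟨ZMod.lift m ⟨(zmultiplesHom (ZMod n)) (b : ZMod n), ?_⟩, ?_⟩
  · simp only [zmultiplesHom_apply]
    rw [ha, zsmul_eq_mul]
    have : ((n : ℕ) : ZMod n) = 0 := ZMod.natCast_self n
    rw [hb] at this
    push_cast at this ⊢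
    subst hb
    linear_combination (a : ZMod (p * b)) * this
  · have : (1 : ZMod m) = ((1 : ℤ) : ZMod m) := by simp
    rw [this, ZMod.lift_coe]
    simp only [zmultiplesHom_apply, one_zsmul]
    intro h0
    rw [ZMod.natCast_eq_zero_iff] at h0
    have hb0 : 0 < b := by
      rcases Nat.eq_zero_or_pos b with h | h
      · subst h; omega
      · exact h
    have := Nat.le_of_dvd hb0 h0
    have := hp.two_le
    nlinarith

theorem pi_cyc {ι : Type} [Fintype ι] (n : ι → ℕ) (hn : ∀ i, 1 < n i)
    (h : HP ((i : ι) → Multiplicative (ZMod (n i)))) :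
    IsCyclic ((i : ι) → Multiplicative (ZMod (n i))) := by
  classical
  by_cases hc : Pairwise (Function.onFun Nat.Coprime n)
  · have e := (ZMod.prodEquivPi n hc).toAddEquiv
    have e2 : Multiplicative (ZMod (∏ i, n i)) ≃* ((i : ι) → Multiplicative (ZMod (n i))) :=
      { toFun := fun x i => Multiplicative.ofAdd (e x.toAdd i)
        invFun := fun x => Multiplicative.ofAdd (e.symm (fun i => (x i).toAdd))
        left_inv := by intro x; simp
        right_inv := by intro x; simp
        map_mul' := by intro x y; ext i; simp }
    exact isCyclic_of_surjective e2 e2.surjective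
  · exfalso
    simp only [Pairwise, Function.onFun, not_forall] at hc
    obtain ⟨j, i, hij, hc⟩ := hc
    obtain ⟨g, hg⟩ := exists_hom (n j) (n i) (hn i) hc
    let f : ((i : ι) → Multiplicative (ZMod (n i))) →* ((i : ι) → Multiplicative (ZMod (n i))) :=
      (MonoidHom.mulSingle (fun i => Multiplicative (ZMod (n i))) i).comp
        ((AddMonoidHom.toMultiplicative g).comp (Pi.evalMonoidHom _ j))
    have hf : ∀ x, f x = Pi.mulSingle i (AddMonoidHom.toMultiplicative g (x j)) := fun x => rfl
    obtain ⟨k, hk⟩ := h.sq f (by intro x; simp [hf, Pi.mulSingle_eq_of_ne hij])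
      (Pi.mulSingle j (Multiplicative.ofAdd 1))
    have := congrFun hk i
    simp [hf, Pi.mulSingle_eq_of_ne hij.symm] at this
    exact hg (congrArg Multiplicative.toAdd this.symm)

theorem comm_case {R : Type*} [CommGroup R] [Finite R] (h : HP R) : IsCyclic R := by
  obtain ⟨ι, _, n, hn, ⟨e⟩⟩ := CommGroup.equiv_prod_multiplicative_zmod_of_finite R
  have := pi_cyc n hn (h.congr e)
  exact isCyclic_of_surjective e.symm e.symm.surjective

open QuaternionGroup in
def qs : QuaternionGroup 2 → QuaternionGroup 2
  | a i => if i = 1 then xa 0 else if i = 3 then xa 2 else a i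
  | xa i => if i = 0 then a 1 else if i = 2 then a 3 else if i = 1 then xa 3 else xa 1

theorem qs_qs : ∀ x, qs (qs x) = x := by decide
set_option maxRecDepth 10000 in
theorem qs_mul : ∀ x y, qs (x * y) = qs x * qs y := by decide

def qe : QuaternionGroup 2 ≃* QuaternionGroup 2 where
  toFun := qs
  invFun := qs
  left_inv := qs_qs
  right_inv := qs_qs
  map_mul' := qs_mul

open QuaternionGroup in
theorem qe_fix : ∀ q : QuaternionGroup 2, qe q = q ∨ q * a 1 = a 2 * (a 1 * q) ∨ q * xa 0 = a 2 * (xa 0 * q) := by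
  decide

open QuaternionGroup in
theorem exists_qhom {R : Type*} [Group R] (x y : R) (h4 : x ^ 4 = 1) (h2 : y * y = x * x)
    (hyx : x * y = y * x⁻¹) : ∃ φ : QuaternionGroup 2 →* R, φ (a 1) = x ∧ φ (xa 0) = y := by
  let X : ZMod (2 * 2) →+ Additive R := ZMod.lift 4 ⟨zmultiplesHom (Additive R) (Additive.ofMul x), by
    simp only [zmultiplesHom_apply, ← ofMul_zpow]
    rw [ofMul_eq_zero]; exact_mod_cast h4⟩
  have hX : ∀ k : ℤ, (X (k : ZMod 4)).toMul = x ^ k := by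
    intro k
    have : X (k : ZMod 4) = zmultiplesHom (Additive R) (Additive.ofMul x) k := ZMod.lift_coe 4 _ k
    rw [this]
    simp
  have hk : ∀ k : ℤ, x ^ k * y = y * x ^ (-k) := by
    intro k
    have h1 : SemiconjBy y x⁻¹ x := hyx.symm
    have := h1.zpow_right k
    rw [inv_zpow, ← zpow_neg] at this
    exact this.symm
  have sj : ∀ i : ZMod (2 * 2), ∃ k : ℤ, (k : ZMod 4) = i := ZMod.intCast_surjective
  let φ : QuaternionGroup 2 → R := fun q => match q with
    | a i => (X i).toMul
    | xa i => y * (X i).toMul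
  have ha : ∀ i, φ (a i) = (X i).toMul := fun _ => rfl
  have hxa : ∀ i, φ (xa i) = y * (X i).toMul := fun _ => rfl
  have hm : ∀ p q, φ (p * q) = φ p * φ q := by
    rintro (i | i) (j | j)
    · simp only [a_mul_a, ha, map_add, toMul_add]
    · simp only [a_mul_xa, ha, hxa, map_sub, toMul_sub]
      obtain ⟨i, rfl⟩ := sj i
      obtain ⟨j, rfl⟩ := sj j
      rw [hX, hX, ← mul_assoc, hk, mul_assoc, ← zpow_add, div_eq_mul_inv, ← zpow_neg, ← zpow_add, add_comm]
    · simp only [xa_mul_a, ha, hxa, map_add, toMul_add, mul_assoc]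
    · simp only [xa_mul_xa, ha, hxa, map_sub, map_add, toMul_add, toMul_sub]
      obtain ⟨i, rfl⟩ := sj i
      obtain ⟨j, rfl⟩ := sj j
      have : (X ((2 : ℕ) : ZMod 4)).toMul = x ^ 2 := by
        simpa using hX 2
      rw [this, hX, hX]
      have e : y * x ^ i * (y * x ^ j) = y * (x ^ i * y) * x ^ j := by simp only [mul_assoc]
      rw [e, hk, ← mul_assoc, h2, ← sq, div_eq_mul_inv, ← zpow_neg, mul_assoc, mul_assoc, ← zpow_add, ← zpow_add,
        add_comm]
  refine ⟨MonoidHom.mk' φ hm, ?_, ?_⟩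
  · change (X 1).toMul = x
    simpa using hX 1
  · change y * (X 0).toMul = y
    simp

theorem inv_or {R : Type*} [Group R] (x : R) (h4 : x ^ 4 = 1) (hx : x ≠ x⁻¹) (e : MulAut R) (h : e x ∈ Subgroup.zpowers x) :
    e x = x ∨ e x = x⁻¹ := by
  obtain ⟨k, hk⟩ := h
  simp only at hk
  have hodd : k % 4 = 1 ∨ k % 4 = 3 ∨ k % 2 = 0 := by omega
  have hz : x ^ (4 : ℤ) = 1 := by exact_mod_cast h4
  rcases hodd with h | h | h
  · left
    rw [← hk, show k = 4 * (k / 4) + 1 by omega, zpow_add, zpow_mul, hz]; simp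
  · right
    rw [← hk, show k = 4 * (k / 4 + 1) + (-1) by omega, zpow_add, zpow_mul, hz]; simp
  · exfalso
    apply hx
    have h1 : (e x) ^ (2 : ℤ) = 1 := by
      rw [← hk, ← zpow_mul, show k * 2 = 4 * (k / 2) by omega, zpow_mul, hz, one_zpow]
    rw [← map_zpow] at h1
    have h2 : x ^ (2 : ℤ) = 1 := (MulEquiv.map_eq_one_iff e).1 h1
    rw [zpow_two] at h2
    exact eq_inv_of_mul_eq_one_left h2

open QuaternionGroup in
theorem quat_false {R : Type*} [Group R] (h : HP R) (x y : R) (h4 : x ^ 4 = 1) (h2 : y * y = x * x)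
    (hyx : x * y = y * x⁻¹) (hne : x * y ≠ y * x) : False := by
  obtain ⟨φ, hφx, hφy⟩ := exists_qhom x y h4 h2 hyx
  have hxx : x ≠ x⁻¹ := fun hh => hne (by rw [hyx, ← hh])
  have hx2 : x * x ≠ 1 := fun hh => hxx (eq_inv_of_mul_eq_one_left hh)
  have hyy : y ≠ y⁻¹ := by
    intro hh
    apply hx2
    rw [← h2]; nth_rw 2 [hh]; simp
  have hy4 : y ^ 4 = 1 := by
    rw [show y ^ 4 = (y * y) * (y * y) by simp only [pow_succ, pow_zero, one_mul, mul_assoc], h2, ← h4]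
    simp only [pow_succ, pow_zero, one_mul, mul_assoc]
  have hφ2 : φ (a 2) = x * x := by
    rw [← hφx, ← map_mul]; congr 1
  let C := Subgroup.centralizer ({x, y} : Set R)
  have hC : ∀ g, g ∈ C ↔ g * x = x * g ∧ g * y = y * g := by
    intro g
    simp only [C, Subgroup.mem_centralizer_iff, Set.mem_insert_iff, Set.mem_singleton_iff,
      forall_eq_or_imp, forall_eq]
    exact and_congr eq_comm eq_comm
  have hq : ∀ q : QuaternionGroup 2, φ q ∈ C → qe q = q := by
    intro q hqC
    rw [hC] at hqC
    rcases qe_fix q with h | h | h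
    · exact h
    · exfalso
      have := congrArg φ h
      simp only [map_mul, hφ2, hφx] at this
      rw [← hqC.1] at this
      exact hx2 (by simpa using this)
    · exfalso
      have := congrArg φ h
      simp only [map_mul, hφ2, hφy] at this
      rw [← hqC.2] at this
      exact hx2 (by simpa using this)
  have hgen : ∀ q : QuaternionGroup 2, ∃ m n : ℕ, q = a 1 ^ m * xa 0 ^ n := by
    have : ∀ q : QuaternionGroup 2, ∃ m n : Fin 4, q = a 1 ^ (m : ℕ) * xa 0 ^ (n : ℕ) := by decide
    intro q
    obtain ⟨m, n, h⟩ := this q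
    exact ⟨m, n, h⟩
  have hcomm : ∀ (q : QuaternionGroup 2) (g : C), Commute (φ q) (C.subtype g) := by
    intro q g
    obtain ⟨m, n, rfl⟩ := hgen q
    have := (hC g).1 g.2
    simp only [map_mul, map_pow, hφx, hφy]
    have h1 : Commute x (g : R) := this.1.symm
    have h2 : Commute y (g : R) := this.2.symm
    exact (h1.pow_left m).mul_left (h2.pow_left n)
  let Φ := MonoidHom.noncommCoprod φ C.subtype hcomm
  have hΦ : ∀ q g, Φ (q, g) = φ q * (g : R) := fun _ _ => rfl
  have hsurj : Function.Surjective Φ := by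
    intro g
    suffices ∃ q, (φ q)⁻¹ * g ∈ C by
      obtain ⟨q, hq⟩ := this
      exact ⟨(q, ⟨_, hq⟩), by simp [hΦ]⟩
    have key : ∀ q, MulAut.conj g x = φ q * x * (φ q)⁻¹ → MulAut.conj g y = φ q * y * (φ q)⁻¹ →
        (φ q)⁻¹ * g ∈ C := by
      intro q h1 h2
      simp only [MulAut.conj_apply] at h1 h2
      rw [hC]
      constructor
      · have : g * x = φ q * x * (φ q)⁻¹ * g := by rw [← h1]; group
        rw [mul_assoc, this]; group
      · have : g * y = φ q * y * (φ q)⁻¹ * g := by rw [← h2]; group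
        rw [mul_assoc, this]; group
    have e1 : y * x * y⁻¹ = x⁻¹ := by
      rw [mul_inv_eq_iff_eq_mul, eq_inv_mul_iff_mul_eq, ← mul_assoc, hyx]; group
    have e2 : x * y * x⁻¹ = y⁻¹ := by
      rw [hyx, eq_inv_iff_mul_eq_one]
      have : y * x⁻¹ * x⁻¹ * y = y * (x * x)⁻¹ * y := by group
      rw [this, ← h2]; group
    rcases inv_or x h4 hxx (MulAut.conj g) (h _ _) with h1 | h1 <;>
    rcases inv_or y hy4 hyy (MulAut.conj g) (h _ _) with h3 | h3
    · exact ⟨1, key _ (by rw [h1]; simp) (by rw [h3]; simp)⟩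
    · exact ⟨a 1, key _ (by rw [h1, hφx]; group) (by rw [h3, hφx, e2])⟩
    · exact ⟨xa 0, key _ (by rw [h1, hφy, e1]) (by rw [h3, hφy]; group)⟩
    · refine ⟨a 1 * xa 0, key _ ?_ ?_⟩
      · rw [h1, map_mul, hφx, hφy, ← e1]
        have : x * y * x * (x * y)⁻¹ = x * (y * x * y⁻¹) * x⁻¹ := by group
        rw [this, e1]; group
      · rw [h3, map_mul, hφx, hφy, ← e2]; group
  let E : (QuaternionGroup 2 × C) ≃* (QuaternionGroup 2 × C) := qe.prodCongr (MulEquiv.refl C)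
  have hE : ∀ q g, E (q, g) = (qe q, g) := fun _ _ => rfl
  have hker : ∀ t, Φ t = 1 → E t = t := by
    rintro ⟨q, g⟩ ht
    rw [hΦ] at ht
    rw [hE, hq q]
    rw [eq_inv_of_mul_eq_one_left ht]
    exact C.inv_mem g.2
  have hmap : Subgroup.map (E : (QuaternionGroup 2 × C) →* (QuaternionGroup 2 × C)) Φ.ker = Φ.ker := by
    ext t
    simp only [Subgroup.mem_map, MonoidHom.mem_ker]
    constructor
    · rintro ⟨s, hs, rfl⟩
      have := hker s hs
      simp only [MonoidHom.coe_coe, this, hs]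
    · intro ht
      exact ⟨t, ht, hker t ht⟩
  let e0 := QuotientGroup.quotientKerEquivOfSurjective Φ hsurj
  have he0 : ∀ t, e0 (QuotientGroup.mk t) = Φ t := fun _ => rfl
  let α : MulAut R := (e0.symm.trans (QuotientGroup.congr _ _ E hmap)).trans e0
  have hα : ∀ t, α (Φ t) = Φ (E t) := by
    intro t
    have : e0.symm (Φ t) = QuotientGroup.mk t := by rw [← he0]; simp
    change e0 (QuotientGroup.congr _ _ E hmap (e0.symm (Φ t))) = _
    rw [this]; rfl
  have h5 := hα (a 1, 1)
  rw [hE, hΦ, hΦ, show qe (a 1) = xa 0 from rfl, hφx, hφy] at h5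
  simp only [OneMemClass.coe_one, mul_one] at h5
  have h6 := h α x
  rw [h5] at h6
  obtain ⟨k, hk⟩ := h6
  apply hne
  simp only at hk
  rw [← hk]
  exact (Commute.refl x).zpow_right k


theorem pow_comm1 {R : Type*} [Group R] (z y d : R) (hy : Commute d y) (hz : Commute d z)
    (h : z * y = d * (y * z)) (N : ℕ) : z ^ N * y = d ^ N * (y * z ^ N) := by
  induction N with
  | zero => simp
  | succ n ih =>
    have e : z * d ^ n = d ^ n * z := (hz.pow_left n).symm
    calc z ^ (n+1) * y = z * (z ^ n * y) := by rw [pow_succ']; group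
      _ = (z * d ^ n) * y * z ^ n := by rw [ih]; simp only [mul_assoc]
      _ = d ^ n * (z * y) * z ^ n := by rw [e]; simp only [mul_assoc]
      _ = _ := by rw [h, pow_succ, pow_succ']; simp only [mul_assoc]

theorem pow_comm2 {R : Type*} [Group R] (z y d : R) (hy : Commute d y) (hz : Commute d z)
    (h : z * y = d * (y * z)) (N : ℕ) : z * y ^ N = d ^ N * (y ^ N * z) := by
  induction N with
  | zero => simp
  | succ n ih =>
    have e : y ^ n * d = d * y ^ n := (hy.pow_right n).symm
    calc z * y ^ (n+1) = (z * y ^ n) * y := by rw [pow_succ]; group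
      _ = d ^ n * y ^ n * (z * y) := by rw [ih]; simp only [mul_assoc]
      _ = d ^ n * (y ^ n * d) * (y * z) := by rw [h]; simp only [mul_assoc]
      _ = _ := by rw [e, pow_succ, pow_succ]; simp only [mul_assoc]

theorem mul_pow2 {R : Type*} [Group R] (z y d : R) (hy : Commute d y) (hz : Commute d z)
    (h : z * y = d * (y * z)) (N : ℕ) : (y * z) ^ N = d ^ (N.choose 2) * (y ^ N * z ^ N) := by
  induction N with
  | zero => simp
  | succ n ih =>
    have e : y ^ n * d ^ n = d ^ n * y ^ n := ((hy.pow_right n).pow_left n).symm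
    have hc : (n+1).choose 2 = n.choose 2 + n := by
      rw [Nat.choose_succ_succ' n 1, Nat.choose_one_right, add_comm]
    calc (y * z) ^ (n+1) = d ^ (n.choose 2) * y ^ n * (z ^ n * y) * z := by
          rw [pow_succ, ih]; simp only [mul_assoc]
      _ = d ^ (n.choose 2) * (y ^ n * d ^ n) * (y * z ^ n) * z := by
          rw [pow_comm1 z y d hy hz h]; simp only [mul_assoc]
      _ = _ := by rw [e, hc, pow_add, pow_succ y, pow_succ z]; simp only [mul_assoc]

/-- an element `c` of order `p` in a cyclic `p`-group. -/
theorem cyc_p {R : Type*} [Group R] (y c : R) (p n : ℕ) (hp : p.Prime)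
    (hy : orderOf y = p ^ (n + 1)) (hc : c ∈ Subgroup.zpowers y) (hcp : c ^ p = 1) :
    c ∈ Subgroup.zpowers (y ^ (p ^ n)) := by
  obtain ⟨b, rfl⟩ := hc
  simp only at hcp ⊢
  have h1 : y ^ (b * p) = 1 := by rw [zpow_mul]; exact_mod_cast hcp
  rw [← orderOf_dvd_iff_zpow_eq_one, hy] at h1
  push_cast at h1
  rw [pow_succ] at h1
  obtain ⟨k, rfl⟩ := Int.dvd_of_mul_dvd_mul_right (by exact_mod_cast hp.ne_zero) h1
  refine ⟨k, ?_⟩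
  simp only
  rw [zpow_mul]
  norm_cast

theorem choose_dvd (p n : ℕ) (hp : p.Prime) (hn : 1 ≤ n) (h : ¬ (p = 2 ∧ n = 1)) :
    p ∣ (p ^ n).choose 2 := by
  by_cases h2 : p = 2
  · subst h2
    obtain ⟨m, rfl⟩ : ∃ m, n = m + 2 := ⟨n - 2, by omega⟩
    rw [Nat.choose_two_right, show 2 ^ (m + 2) * (2 ^ (m+2) - 1) = 2 * (2 * (2 ^ m * (2 ^ (m+2) - 1))) by ring]
    simp
  · have : p ∣ 2 * (p ^ n).choose 2 := by
      rw [Nat.choose_two_right, Nat.mul_div_cancel' (Nat.even_mul_pred_self _).two_dvd]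
      exact (dvd_pow_self p (by omega)).mul_right _
    refine (Nat.Coprime.dvd_of_dvd_mul_left ?_ this)
    exact (Nat.coprime_primes hp Nat.prime_two).2 h2

theorem exists_quat {R : Type*} [Group R] [Finite R] (h : HP R) (hnc : ∃ x y : R, x * y ≠ y * x) :
    ∃ x y : R, x ^ 4 = 1 ∧ y * y = x * x ∧ x * y = y * x⁻¹ ∧ x * y ≠ y * x := by
  classical
  -- minimal noncentral `y`
  obtain ⟨y, hyn, hymin⟩ : ∃ y : R, (∃ x, x * y ≠ y * x) ∧
      ∀ y' : R, (∃ x, x * y' ≠ y' * x) → orderOf y ≤ orderOf y' := by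
    obtain ⟨x, y, hxy⟩ := hnc
    obtain ⟨y, hy, hm⟩ := Set.exists_min_image {y : R | ∃ x, x * y ≠ y * x} orderOf
      (Set.toFinite _) ⟨y, x, hxy⟩
    exact ⟨y, hy, hm⟩
  obtain ⟨x, hxy, hxmin⟩ : ∃ x : R, x * y ≠ y * x ∧
      ∀ x' : R, x' * y ≠ y * x' → orderOf x ≤ orderOf x' := by
    obtain ⟨x, hx, hm⟩ := Set.exists_min_image {x : R | x * y ≠ y * x} orderOf
      (Set.toFinite _) hyn
    exact ⟨x, hx, hm⟩
  have hle : orderOf y ≤ orderOf x := hymin x ⟨y, hxy.symm⟩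
  obtain ⟨c, hcdef⟩ : ∃ c, c = x * y * x⁻¹ * y⁻¹ := ⟨_, rfl⟩
  have hcx : c ∈ Subgroup.zpowers x := by
    have h1 : y * x⁻¹ * y⁻¹ ∈ Subgroup.zpowers x := by
      have := h (MulAut.conj y) x
      have := (Subgroup.zpowers x).inv_mem this
      simpa [MulAut.conj_apply, mul_assoc] using this
    rw [hcdef, show x * y * x⁻¹ * y⁻¹ = x * (y * x⁻¹ * y⁻¹) by group]
    exact mul_mem (Subgroup.mem_zpowers x) h1
  have hcy : c ∈ Subgroup.zpowers y := by
    have h1 : x * y * x⁻¹ ∈ Subgroup.zpowers y := h (MulAut.conj x) y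
    rw [hcdef]
    exact mul_mem h1 (inv_mem (Subgroup.mem_zpowers y))
  have com : ∀ {u v : R}, u ∈ Subgroup.zpowers v → Commute u v := by
    rintro u v ⟨k, rfl⟩
    exact (Commute.refl v).zpow_left k
  have ccx := com hcx
  have ccy := com hcy
  have hrel : x * y = c * (y * x) := by rw [hcdef]; group
  have hc1 : c ≠ 1 := by rintro hh; rw [hh, one_mul] at hrel; exact hxy hrel
  have small : ∀ (z : R) (q : ℕ), q.Prime → q ∣ orderOf z → orderOf (z ^ q) < orderOf z := by
    intro z q hq hd
    rw [orderOf_pow_of_dvd hq.ne_zero hd]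
    exact Nat.div_lt_self (orderOf_pos z) hq.one_lt
  have hyq : ∀ q : ℕ, q.Prime → q ∣ orderOf y → c ^ q = 1 := by
    intro q hq hd
    by_contra hcq
    have : x * y ^ q ≠ y ^ q * x := by
      rw [pow_comm2 x y c ccy ccx hrel]
      intro hh
      exact hcq (by simpa using hh)
    exact absurd (hymin _ ⟨x, this⟩) (not_le.2 (small y q hq hd))
  have hxq : ∀ q : ℕ, q.Prime → q ∣ orderOf x → c ^ q = 1 := by
    intro q hq hd
    by_contra hcq
    have : x ^ q * y ≠ y * x ^ q := by
      rw [pow_comm1 x y c ccy ccx hrel]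
      intro hh
      exact hcq (by simpa using hh)
    exact absurd (hxmin _ this) (not_le.2 (small x q hq hd))
  have hy1 : orderOf y ≠ 1 := by
    intro hh; rw [orderOf_eq_one_iff] at hh; subst hh; simp at hxy
  have hx1 : orderOf x ≠ 1 := by
    intro hh; rw [orderOf_eq_one_iff] at hh; subst hh; simp at hxy
  obtain ⟨p, hp, hpy⟩ := Nat.exists_prime_and_dvd hy1
  have hcp := hyq p hp hpy
  haveI := Fact.mk hp
  have hoc : orderOf c = p := orderOf_eq_prime hcp hc1
  have uniq : ∀ q : ℕ, q.Prime → c ^ q = 1 → q = p := by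
    intro q hq hh
    have := orderOf_dvd_of_pow_eq_one hh
    rw [hoc] at this
    exact ((Nat.prime_dvd_prime_iff_eq hp hq).1 this).symm
  have hoy := Nat.eq_prime_pow_of_unique_prime_dvd (orderOf_pos y).ne'
    (fun {d} hd hdv => uniq d hd (hyq d hd hdv))
  have hox := Nat.eq_prime_pow_of_unique_prime_dvd (orderOf_pos x).ne'
    (fun {d} hd hdv => uniq d hd (hxq d hd hdv))
  generalize (orderOf y).primeFactorsList.length = n' at hoy
  generalize (orderOf x).primeFactorsList.length = m' at hox
  obtain ⟨n, rfl⟩ : ∃ n, n' = n + 1 := ⟨n' - 1, by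
    rcases n' with _ | n'
    · simp at hoy; simp [hoy] at hy1
    · simp⟩
  obtain ⟨m, rfl⟩ : ∃ n, m' = n + 1 := ⟨m' - 1, by
    rcases m' with _ | n'
    · simp at hox; simp [hox] at hx1
    · simp⟩
  have hnm : n ≤ m := by
    rw [hoy, hox] at hle
    have := (Nat.pow_le_pow_iff_right hp.one_lt).1 hle
    omega
  have hc_y := cyc_p y c p n hp hoy hcy hcp
  have hc_x := cyc_p x c p m hp hox hcx hcp
  have hyN : y ^ (p ^ n) ∈ Subgroup.zpowers c := by
    have ho : orderOf (y ^ (p ^ n)) = p := by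
      rw [orderOf_pow_of_dvd (pow_ne_zero _ hp.ne_zero) (by rw [hoy]; exact pow_dvd_pow _ (by omega)), hoy,
        pow_succ, Nat.mul_div_cancel_left _ (pow_pos hp.pos n)]
    have : Subgroup.zpowers c = Subgroup.zpowers (y ^ (p ^ n)) := by
      apply Subgroup.eq_of_le_of_card_ge
      · rwa [Subgroup.zpowers_le]
      · rw [Nat.card_zpowers, Nat.card_zpowers, ho, hoc]
    rw [this]; exact Subgroup.mem_zpowers _
  have hn1 : 1 ≤ n := by
    by_contra hn
    have : n = 0 := by omega
    subst this
    simp only [pow_zero, pow_one] at hyN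
    obtain ⟨k, hk⟩ := hyN
    apply hxy
    rw [← hk]
    exact (ccx.symm.zpow_right k)
  obtain ⟨k, hk⟩ : ∃ k : ℕ, x ^ (p ^ n * k) = (y ^ (p ^ n))⁻¹ := by
    have h1 : (y ^ (p ^ n))⁻¹ ∈ Subgroup.zpowers (x ^ (p ^ m)) := by
      apply inv_mem
      exact (Subgroup.zpowers_le.2 hc_x) hyN
    rw [← mem_powers_iff_mem_zpowers] at h1
    obtain ⟨j, hj⟩ := h1
    simp only at hj
    refine ⟨p ^ (m - n) * j, ?_⟩
    rw [← hj, ← pow_mul, ← mul_assoc, ← pow_add, show n + (m - n) = m by omega]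
  have hd : x ^ k * y = c ^ k * (y * x ^ k) := pow_comm1 x y c ccy ccx hrel k
  have hpow := mul_pow2 (x ^ k) y (c ^ k) (ccy.pow_left k) ((ccx.pow_left k).pow_right k) hd (p ^ n)
  have hxk : y ^ (p ^ n) * (x ^ k) ^ (p ^ n) = 1 := by
    rw [← pow_mul, mul_comm k, hk]; simp
  rw [hxk, mul_one] at hpow
  have hne1 : (y * x ^ k) ^ (p ^ n) ≠ 1 := by
    intro hh
    have h1 : orderOf y ≤ orderOf (y * x ^ k) := by
      apply hymin
      refine ⟨x, fun hh => hxy ?_⟩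
      have e : x ^ k * x = x * x ^ k := by rw [← pow_succ, pow_succ']
      rw [mul_assoc, e, ← mul_assoc, ← mul_assoc] at hh
      exact mul_right_cancel hh
    have h2 := Nat.le_of_dvd (pow_pos hp.pos n) (orderOf_dvd_of_pow_eq_one hh)
    rw [hoy] at h1
    have := Nat.pow_lt_pow_right hp.one_lt (Nat.lt_succ_self n)
    simp only [Nat.succ_eq_add_one] at this
    omega
  rw [hpow] at hne1
  have h21 : p = 2 ∧ n = 1 := by
    by_contra hcon
    obtain ⟨t, ht⟩ := choose_dvd p n hp hn1 hcon
    apply hne1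
    rw [ht, ← pow_mul, show k * (p * t) = p * (k * t) by ring, pow_mul, hcp, one_pow]
  obtain ⟨rfl, rfl⟩ := h21
  simp only [pow_one, Nat.choose_self] at hne1 hk hyN
  have hkodd : k % 2 = 1 := by
    by_contra hcon
    apply hne1
    rw [show k = 2 * (k / 2) by omega, pow_mul, hcp, one_pow]
  have hy4 : y ^ 4 = 1 := by rw [← pow_orderOf_eq_one y, hoy]; norm_num
  have hy2 : y ^ 2 ≠ 1 := by
    intro hh
    have := orderOf_dvd_of_pow_eq_one hh
    rw [hoy] at this
    norm_num at this
  have hyc : y ^ 2 = c := by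
    obtain ⟨j, hj⟩ := hyN
    simp only at hj
    have hc2 : c ^ (2 : ℤ) = 1 := by exact_mod_cast hcp
    rcases Int.emod_two_eq_zero_or_one j with h0 | h0
    · exfalso; apply hy2
      rw [← hj, show j = 2 * (j / 2) by omega, zpow_mul, hc2, one_zpow]
    · rw [← hj, show j = 2 * (j / 2) + 1 by omega, zpow_add, zpow_mul, hc2, one_zpow]; simp
  have hx4 : x ^ 4 = 1 := by
    have h1 : x ^ (4 * k) = 1 := by
      rw [show 4 * k = (2 * k) * 2 by ring, pow_mul, hk, inv_pow, ← pow_mul, hy4, inv_one]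
    have h2 := orderOf_dvd_of_pow_eq_one h1
    rw [← orderOf_dvd_iff_pow_eq_one]
    refine Nat.Coprime.dvd_of_dvd_mul_right ?_ h2
    rw [hox]
    apply Nat.Coprime.pow_left
    rw [Nat.coprime_two_left, Nat.odd_iff]; exact hkodd
  have hx2 : x ^ 2 = y ^ 2 := by
    have h1 : x ^ (2 * k) = x ^ 2 := by
      rw [show 2 * k = 4 * (k / 2) + 2 by omega, pow_add, pow_mul, hx4]; simp
    rw [← h1, hk, inv_eq_iff_mul_eq_one, ← pow_add, hy4]
  refine ⟨x, y, hx4, by rw [← sq, ← sq, hx2], ?_, hxy⟩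
  rw [eq_mul_inv_iff_mul_eq, hrel, ← hyc]
  have : y ^ 2 * (y * x) * x = y ^ 3 * x ^ 2 := by simp only [pow_succ, pow_zero, one_mul, mul_assoc]
  rw [this, hx2, ← pow_add, show 3 + 2 = 4 + 1 by rfl, pow_add, hy4]; simp

/-- For a finite group `R`, every automorphism of `R` is a power automorphism
(`Aut(R) = PAut(R)`) if and only if `R` is cyclic. -/
theorem stmt4 (R : Type*) [Group R] [Finite R] :
    (∀ α : MulAut R, ∀ x : R, α x ∈ Subgroup.zpowers x) ↔ IsCyclic R := by
  constructor
  · intro h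
    have hp : HP R := h
    by_cases hnc : ∃ x y : R, x * y ≠ y * x
    · obtain ⟨x, y, h4, h2, hyx, hne⟩ := exists_quat hp hnc
      exact (quat_false hp x y h4 h2 hyx hne).elim
    · push Not at hnc
      letI : CommGroup R := { ‹Group R› with mul_comm := hnc }
      exact comm_case hp
  · intro hc α x
    obtain ⟨m, hm⟩ := MonoidHom.map_cyclic (α : R →* R)
    exact ⟨m, (hm x).symm⟩
end
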